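/- arXiv:1202.1786 — 4 statements merged into one kernel-verified Lean document; each statement's English description precedes it below -/
import Mathlib

section
/- Let K be a field and H a valuative subgroup of K^×. Then there exists a unique valuation subring O_H of K with O_H^× ⊆ H that is largest with this property: every valuation subring O of K with O^× ⊆ H satisfies O ⊆ O_H (i.e. the corresponding valuation v_H is the unique coarsest valuation of K whose unit group is contained in H, and every valuation v with O_v^× ⊆ H is a refinement of v_H). -/
/-- Products of elements of two valuation rings form a valuation ring. -/
def prodRing {K : Type*} [Field K] (A B : ValuationSubring K) : ValuationSubring K where
  carrier := {x | ∃ a ∈ A, ∃ b ∈ B, x = a * b}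
  mul_mem' := by
    rintro _ _ ⟨a, ha, b, hb, rfl⟩ ⟨a', ha', b', hb', rfl⟩
    exact ⟨a * a', mul_mem ha ha', b * b', mul_mem hb hb', by ring⟩
  one_mem' := ⟨1, one_mem _, 1, one_mem _, by simp⟩
  zero_mem' := ⟨0, zero_mem _, 0, zero_mem _, by simp⟩
  neg_mem' := by
    rintro _ ⟨a, ha, b, hb, rfl⟩
    exact ⟨-a, neg_mem ha, b, hb, by ring⟩
  add_mem' := by
    have key : ∀ a ∈ A, ∀ b ∈ B, ∀ a' ∈ A, ∀ b' ∈ B, b' ≠ 0 → b / b' ∈ B →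
        ∃ p ∈ A, ∃ q ∈ B, a * b + a' * b' = p * q := by
      intro a ha b hb a' ha' b' hb' h0 hc
      by_cases hb0 : b = 0
      · exact ⟨a', ha', b', hb', by simp [hb0]⟩
      rcases A.mem_or_inv_mem (b / b') with h | h
      · exact ⟨a * (b / b') + a', add_mem (mul_mem ha h) ha', b', hb', by field_simp⟩
      · refine ⟨a + a' * (b / b')⁻¹, add_mem ha (mul_mem ha' h), b, hb, by field_simp⟩
    rintro _ _ ⟨a, ha, b, hb, rfl⟩ ⟨a', ha', b', hb', rfl⟩
    by_cases h0 : b' = 0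
    · exact ⟨a, ha, b, hb, by simp [h0]⟩
    by_cases h1 : b = 0
    · exact ⟨a', ha', b', hb', by simp [h1]⟩
    rcases B.mem_or_inv_mem (b / b') with h | h
    · exact key a ha b hb a' ha' b' hb' h0 h
    · rw [inv_div] at h
      obtain ⟨p, hp, q, hq, e⟩ := key a' ha' b' hb' a ha b hb h1 h
      exact ⟨p, hp, q, hq, by rw [← e, add_comm]⟩
  mem_or_inv_mem' := by
    intro x
    rcases A.mem_or_inv_mem x with h | h
    · exact Or.inl ⟨x, h, 1, one_mem _, by simp⟩
    · exact Or.inr ⟨x⁻¹, h, 1, one_mem _, by simp⟩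

theorem mem_prodRing {K : Type*} [Field K] {A B : ValuationSubring K} {x : K} :
    x ∈ prodRing A B ↔ ∃ a ∈ A, ∃ b ∈ B, x = a * b := Iff.rfl

theorem mem_unitGroup_iff_mem {K : Type*} [Field K] (A : ValuationSubring K) (x : Kˣ) :
    x ∈ A.unitGroup ↔ (x : K) ∈ A ∧ (x : K)⁻¹ ∈ A := by
  rw [ValuationSubring.mem_unitGroup_iff, ← A.valuation_le_one_iff, ← A.valuation_le_one_iff,
    map_inv₀, inv_le_one₀ (by simp [zero_lt_iff]), le_antisymm_iff]

theorem one_lt_val {K : Type*} [Field K] (A : ValuationSubring K) (x : K) (h : x ∉ A) :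
    1 < A.valuation x := by
  rw [← A.valuation_le_one_iff] at h
  exact not_le.mp h

/-- Elements of a suitable shape are products of units. -/
theorem approx {K : Type*} [Field K] {A B : ValuationSubring K} {H : Subgroup Kˣ}
    (hA : A.unitGroup ≤ H) (hB : B.unitGroup ≤ H) (x : Kˣ) (c : K)
    (h1 : A.valuation c < 1) (h2 : A.valuation (c * x) < 1)
    (h3 : 1 < B.valuation c) (h4 : 1 < B.valuation (c * x)) : x ∈ H := by
  have e1 : A.valuation (1 + c) = 1 := Valuation.map_one_add_of_lt _ h1
  have e2 : A.valuation (1 + c * x) = 1 := Valuation.map_one_add_of_lt _ h2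
  have e3 : B.valuation (1 + c) = B.valuation c :=
    Valuation.map_add_eq_of_lt_right B.valuation (by rw [map_one]; exact h3)
  have e4 : B.valuation (1 + c * x) = B.valuation (c * x) :=
    Valuation.map_add_eq_of_lt_right B.valuation (by rw [map_one]; exact h4)
  have n1 : 1 + c ≠ 0 := by
    intro h
    rw [h, map_zero] at e1
    exact zero_ne_one e1
  have n2 : 1 + c * x ≠ 0 := by
    intro h
    rw [h, map_zero] at e2
    exact zero_ne_one e2
  have hc : B.valuation c ≠ 0 := (zero_lt_one.trans h3).ne'
  have hx : B.valuation (x : K) ≠ 0 := by simp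
  let y : Kˣ := Units.mk0 ((1 + c * x) / (1 + c)) (div_ne_zero n2 n1)
  have hy : y ∈ H := hA (by
    rw [ValuationSubring.mem_unitGroup_iff]
    simp [y, e1, e2])
  have hxy : x * y⁻¹ ∈ H := hB (by
    rw [ValuationSubring.mem_unitGroup_iff]
    simp only [y, Units.val_mul, Units.val_inv_eq_inv_val, Units.val_mk0, map_mul, map_inv₀,
      map_div₀, e3, e4]
    field_simp)
  simpa using mul_mem hxy hy

theorem prodRing_units {K : Type*} [Field K] {A B : ValuationSubring K} {H : Subgroup Kˣ}
    (hA : A.unitGroup ≤ H) (hB : B.unitGroup ≤ H) (hAB : ¬ A ≤ B) (hBA : ¬ B ≤ A) :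
    (prodRing A B).unitGroup ≤ H := by
  intro x hx
  rw [mem_unitGroup_iff_mem] at hx
  obtain ⟨⟨a, ha, b, hb, e⟩, ⟨a', ha', b', hb', e'⟩⟩ := hx
  obtain ⟨p, hpA, hpB⟩ := SetLike.not_le_iff_exists.mp hAB
  obtain ⟨q, hqB, hqA⟩ := SetLike.not_le_iff_exists.mp hBA
  have x0 : (x : K) ≠ 0 := x.ne_zero
  have hb0 : b ≠ 0 := by rintro rfl; simp at e
  have ha0' : a' ≠ 0 := by rintro rfl; simp at e'
  have hb0' : b' ≠ 0 := by rintro rfl; simp at e'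
  obtain ⟨d, hd1, hd2⟩ : ∃ d, A.valuation d < 1 ∧ 1 < B.valuation d := by
    have hp := one_lt_val B p hpB
    have hq := one_lt_val A q hqA
    rw [← A.valuation_le_one_iff] at hpA
    rw [← B.valuation_le_one_iff] at hqB
    have q0 : q ≠ 0 := by rintro rfl; exact hqA (zero_mem _)
    refine ⟨p / q, ?_, ?_⟩
    · rw [map_div₀, div_lt_one₀ (zero_lt_one.trans hq)]
      exact hpA.trans_lt hq
    · rw [map_div₀, one_lt_div₀ (by simpa [zero_lt_iff] using q0)]
      exact hqB.trans_lt hp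
  rw [← A.valuation_le_one_iff] at ha ha'
  rw [← B.valuation_le_one_iff] at hb hb'
  have ib : 1 ≤ B.valuation b⁻¹ := by
    rw [map_inv₀]
    exact (one_le_inv₀ (by simpa [zero_lt_iff] using hb0)).2 hb
  have ib' : 1 ≤ B.valuation b'⁻¹ := by
    rw [map_inv₀]
    exact (one_le_inv₀ (by simpa [zero_lt_iff] using hb0')).2 hb'
  have ixA : 1 ≤ A.valuation (x : K) → A.valuation (x : K)⁻¹ ≤ 1 := fun h => by
    rw [map_inv₀]; exact inv_le_one_of_one_le₀ h
  have ixB : B.valuation (x : K) ≤ 1 → 1 ≤ B.valuation (x : K)⁻¹ := fun h => by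
    rw [map_inv₀]; exact (one_le_inv₀ (by simp [zero_lt_iff])).2 h
  have mA : ∀ s t, A.valuation s < 1 → A.valuation t ≤ 1 → A.valuation (s * t) < 1 :=
    fun s t hs ht => by rw [map_mul]; exact mul_lt_one_of_lt_of_le hs ht
  have mB : ∀ s t, 1 < B.valuation s → 1 ≤ B.valuation t → 1 < B.valuation (s * t) :=
    fun s t hs ht => by rw [map_mul]; exact one_lt_mul_of_lt_of_le hs ht
  rcases le_total (A.valuation (x : K)) 1 with h1 | h1 <;>
    rcases le_total (B.valuation (x : K)) 1 with h2 | h2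
  · have r : d * a' * x = d * b'⁻¹ := by
      have : a' * b' * x = 1 := by rw [← e']; exact inv_mul_cancel₀ x0
      field_simp
      linear_combination d * this
    have k : 1 < B.valuation (d * a' * x) := r ▸ mB _ _ hd2 ib'
    refine approx hA hB x (d * a') (mA _ _ hd1 ha') (mA _ _ (mA _ _ hd1 ha') h1) ?_ k
    have := mB _ _ k (ixB h2)
    rwa [mul_inv_cancel_right₀ x0] at this
  · have r : d * (x : K)⁻¹ * x = d := inv_mul_cancel_right₀ x0 d
    exact approx hA hB x d hd1 (mA _ _ hd1 h1) hd2 (mB _ _ hd2 h2)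
  · have r : d * (x : K)⁻¹ * x = d := inv_mul_cancel_right₀ x0 d
    exact approx hA hB x (d * (x : K)⁻¹) (mA _ _ hd1 (ixA h1)) (r.symm ▸ hd1)
      (mB _ _ hd2 (ixB h2)) (r.symm ▸ hd2)
  · have r : d * b⁻¹ * x = d * a := by rw [e]; field_simp
    have k : A.valuation (d * b⁻¹ * x) < 1 := r ▸ mA _ _ hd1 ha
    refine approx hA hB x (d * b⁻¹) ?_ k (mB _ _ hd2 ib) (mB _ _ (mB _ _ hd2 ib) h2)
    have := mA _ _ k (ixA h1)
    rwa [mul_inv_cancel_right₀ x0] at this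

theorem units_directed {K : Type*} [Field K] {A B : ValuationSubring K} {H : Subgroup Kˣ}
    (hA : A.unitGroup ≤ H) (hB : B.unitGroup ≤ H) :
    ∃ C : ValuationSubring K, C.unitGroup ≤ H ∧ A ≤ C ∧ B ≤ C := by
  by_cases hAB : A ≤ B
  · exact ⟨B, hB, hAB, le_rfl⟩
  by_cases hBA : B ≤ A
  · exact ⟨A, hA, le_rfl, hBA⟩
  exact ⟨prodRing A B, prodRing_units hA hB hAB hBA,
    fun x h => ⟨x, h, 1, one_mem _, by simp⟩, fun x h => ⟨1, one_mem _, x, h, by simp⟩⟩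

/-- For a valuative subgroup `H ≤ K^×` there is a unique largest valuation
subring of `K` whose unit group is contained in `H` (the valuation `v_H`). -/
theorem stmt_1 {K : Type*} [Field K] (H : Subgroup Kˣ)
    (hval : ∃ O : ValuationSubring K, O.unitGroup ≤ H) :
    ∃! OH : ValuationSubring K, OH.unitGroup ≤ H ∧
      ∀ O : ValuationSubring K, O.unitGroup ≤ H → O ≤ OH := by
  obtain ⟨O, hO⟩ := hval
  let U : ValuationSubring K :=
    { carrier := {x | ∃ A : ValuationSubring K, A.unitGroup ≤ H ∧ x ∈ A}
      mul_mem' := by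
        rintro x y ⟨A, hA, hx⟩ ⟨B, hB, hy⟩
        obtain ⟨C, hC, h1, h2⟩ := units_directed hA hB
        exact ⟨C, hC, mul_mem (h1 hx) (h2 hy)⟩
      one_mem' := ⟨O, hO, one_mem _⟩
      zero_mem' := ⟨O, hO, zero_mem _⟩
      neg_mem' := by
        rintro x ⟨A, hA, hx⟩
        exact ⟨A, hA, neg_mem hx⟩
      add_mem' := by
        rintro x y ⟨A, hA, hx⟩ ⟨B, hB, hy⟩
        obtain ⟨C, hC, h1, h2⟩ := units_directed hA hB
        exact ⟨C, hC, add_mem (h1 hx) (h2 hy)⟩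
      mem_or_inv_mem' := fun x =>
        (O.mem_or_inv_mem x).imp (fun h => ⟨O, hO, h⟩) (fun h => ⟨O, hO, h⟩) }
  have hU : ∀ A : ValuationSubring K, A.unitGroup ≤ H → A ≤ U := fun A hA x hx => ⟨A, hA, hx⟩
  have hUH : U.unitGroup ≤ H := by
    intro x hx
    rw [mem_unitGroup_iff_mem] at hx
    obtain ⟨⟨A, hA, h⟩, ⟨B, hB, h'⟩⟩ := hx
    obtain ⟨C, hC, h1, h2⟩ := units_directed hA hB
    exact hC ((mem_unitGroup_iff_mem C x).2 ⟨h1 h, h2 h'⟩)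
  exact ⟨U, ⟨hUH, hU⟩, fun V hV => le_antisymm (hU V hV.1) (hV.2 U hUH)⟩
end

section
/- Let K be an arbitrary field, ℓ a prime, and T a subgroup of K^× with K^{×ℓ} ⊆ T and −1 ∈ T. The following are equivalent: (1) there exists a subgroup H with T ⊆ H ⊆ K^× such that the quotient H/T is cyclic (possibly trivial), H is valuative, and 1 + m_{v_H} ⊆ T, where v_H is the coarsest valuation of K with O_{v_H}^× ⊆ H; (2) T is rigid. -/
/-- A subgroup `T ≤ K^×` is rigid if for every `x ∈ K^× \ T` the
subgroup of `K^×/T` generated by the images of `x` and `1 - x` is cyclic. -/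
def IsRigid {K : Type*} [Field K] (T : Subgroup Kˣ) : Prop :=
  ∀ x : Kˣ, x ∉ T → ∀ h : (1 : K) - (x : K) ≠ 0,
    IsCyclic ↥(Subgroup.closure {(QuotientGroup.mk x : Kˣ ⧸ T),
      QuotientGroup.mk (Units.mk0 ((1 : K) - (x : K)) h)})



section Geometry
variable {K V : Type*} [Field K] {ℓ : ℕ} [Fact ℓ.Prime] [AddCommGroup V] [Module (ZMod ℓ) V]

/-- linear independence of two vectors, spelled out -/
def Indep2 (ℓ : ℕ) {V : Type*} [AddCommGroup V] [Module (ZMod ℓ) V] (p q : V) : Prop :=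
  ∀ s t : ZMod ℓ, s • p + t • q = 0 → s = 0 ∧ t = 0

/-- weight relation -/
def HasWt (c : K → V) (x : K) (w : ZMod ℓ) : Prop :=
  w ≠ 0 ∧ 1 + w ≠ 0 ∧ (1 + w) • c (1 + x) = w • c x

theorem Indep2.eq {p q : V} (h : Indep2 ℓ p q) {a b a' b' : ZMod ℓ}
    (e : a • p + b • q = a' • p + b' • q) : a = a' ∧ b = b' := by
  have := h (a - a') (b - b') (by
    rw [sub_smul, sub_smul]
    have : a • p - a' • p + (b • q - b' • q) = (a • p + b • q) - (a' • p + b' • q) := by abel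
    rw [this, e, sub_self])
  exact ⟨sub_eq_zero.1 this.1, sub_eq_zero.1 this.2⟩

theorem c_div {c : K → V} (hmul : ∀ x y, x ≠ 0 → y ≠ 0 → c (x * y) = c x + c y)
    {x y : K} (hx : x ≠ 0) (hy : y ≠ 0) : c (x / y) = c x - c y := by
  have := hmul (x / y) y (div_ne_zero hx hy) hy
  rw [div_mul_cancel₀ _ hy] at this
  rw [this]; abel

theorem HasWt.coe {c : K → V} {x : K} {w : ZMod ℓ} (h : HasWt c x w) :
    c (1 + x) = (w / (1 + w)) • c x := by
  have h1 := h.2.1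
  have := congrArg (fun z => (1 + w)⁻¹ • z) h.2.2
  simp only [smul_smul, inv_mul_cancel₀ h1, one_smul] at this
  rw [this, div_eq_inv_mul]

/-- core computation -/
theorem wt_div {c : K → V} (c0 : c 0 = 0)
    (hmul : ∀ x y, x ≠ 0 → y ≠ 0 → c (x * y) = c x + c y)
    (c1 : c (-1) = 0)
    (hr : ∀ x, c x ≠ 0 → ∃ i : ZMod ℓ, c (1 + x) = i • c x)
    {x y : K} {w u : ZMod ℓ} (hi : Indep2 ℓ (c x) (c y)) (hx : HasWt c x w) (hy : HasWt c y u) :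
    HasWt c (y / x) (u / w) ∧ HasWt c (y / (1 + x)) (u / (1 + w)) := by
  have cx : c x ≠ 0 := fun h => one_ne_zero (hi 1 0 (by simp [h])).1
  have cy : c y ≠ 0 := fun h => one_ne_zero (hi 0 1 (by simp [h])).2
  have x0 : x ≠ 0 := fun h => cx (h ▸ c0)
  have y0 : y ≠ 0 := fun h => cy (h ▸ c0)
  have x1 : 1 + x ≠ 0 := fun h => cx (by rw [show x = -1 by linear_combination h]; exact c1)
  have y1 : 1 + y ≠ 0 := fun h => cy (by rw [show y = -1 by linear_combination h]; exact c1)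
  obtain ⟨w0, w1, -⟩ := id hx
  obtain ⟨u0, u1, -⟩ := id hy
  have ex := hx.coe
  have ey := hy.coe
  have d1 : c (y / (1 + x)) = c y - (w / (1 + w)) • c x := by rw [c_div hmul y0 x1, ex]
  have d2 : c (x / (1 + y)) = c x - (u / (1 + u)) • c y := by rw [c_div hmul x0 y1, ey]
  have d3 : c (y / x) = c y - c x := c_div hmul y0 x0
  have n1 : c (y / (1 + x)) ≠ 0 := fun h => by
    rw [d1] at h
    exact one_ne_zero (hi (-(w / (1 + w))) 1 (by rw [← h]; module)).2
  have n2 : c (x / (1 + y)) ≠ 0 := fun h => by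
    rw [d2] at h
    exact one_ne_zero (hi 1 (-(u / (1 + u))) (by rw [← h]; module)).1
  have n3 : c (y / x) ≠ 0 := fun h => by
    rw [d3] at h
    exact one_ne_zero (hi (-1) 1 (by rw [← h]; module)).2
  have ne1 : ∀ z : K, c z ≠ 0 → 1 + z ≠ 0 := fun z hz h =>
    hz (by rw [show z = -1 by linear_combination h]; exact c1)
  obtain ⟨e, he⟩ := hr _ n1
  obtain ⟨e', he'⟩ := hr _ n2
  obtain ⟨f, hf⟩ := hr _ n3
  have s1 : c (1 + x + y) = (w / (1 + w)) • c x + e • (c y - (w / (1 + w)) • c x) := by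
    rw [show 1 + x + y = (1 + x) * (1 + y / (1 + x)) by field_simp,
      hmul _ _ x1 (ne1 _ n1), he, d1, ex]
  have s2 : c (1 + x + y) = (u / (1 + u)) • c y + e' • (c x - (u / (1 + u)) • c y) := by
    rw [show 1 + x + y = (1 + y) * (1 + x / (1 + y)) by field_simp; ring,
      hmul _ _ y1 (ne1 _ n2), he', d2, ey]
  have s3 : c (x + y) = c x + f • (c y - c x) := by
    rw [show x + y = x * (1 + y / x) by field_simp, hmul _ _ x0 (ne1 _ n3), hf, d3]
  have n4 : c (x + y) ≠ 0 := fun h => by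
    rw [s3] at h
    have := hi (1 - f) f (by rw [← h]; module)
    exact one_ne_zero (α := ZMod ℓ) (by linear_combination this.1 + this.2)
  obtain ⟨g, hg⟩ := hr _ n4
  have s4 : c (1 + x + y) = g • (c x + f • (c y - c x)) := by
    rw [add_assoc, hg, s3]
  obtain ⟨q1, q2⟩ := hi.eq (a := (w / (1 + w)) * (1 - e)) (b := e) (a' := e')
    (b' := (u / (1 + u)) * (1 - e')) (by
      trans c (1 + x + y)
      · rw [s1]; module
      · rw [s2]; module)
  obtain ⟨q3, q4⟩ := hi.eq (a := (w / (1 + w)) * (1 - e)) (b := e) (a' := g * (1 - f))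
    (b' := g * f) (by
      trans c (1 + x + y)
      · rw [s1]; module
      · rw [s4]; module)
  -- e (1 + w + u) = u
  have k1 : e * (1 + w + u) = u := by
    rw [← q1] at q2
    field_simp at q2
    linear_combination q2
  have k2 : 1 + w + u ≠ 0 := fun h => u0 (by rw [← k1, h, mul_zero])
  have k3 : e = u / (1 + w + u) := by rw [eq_div_iff k2, k1]
  have e0 : e ≠ 0 := by rw [k3]; exact div_ne_zero u0 k2
  have g0 : g ≠ 0 := fun h => e0 (by rw [q4, h, zero_mul])
  have k4 : f * (w + u) = u := by
    have : e * (1 - f) = f * ((w / (1 + w)) * (1 - e)) := by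
      rw [q3]; nth_rewrite 1 [q4]; ring
    rw [k3] at this
    field_simp at this
    have h2 : u * (1 - f) = f * w := by
      apply mul_right_cancel₀ w1
      linear_combination this
    linear_combination -h2
  have k5 : w + u ≠ 0 := fun h => u0 (by rw [← k4, h, mul_zero])
  have k6 : f = u / (w + u) := by rw [eq_div_iff k5, k4]
  refine ⟨⟨div_ne_zero u0 w0, ?_, ?_⟩, ⟨div_ne_zero u0 w1, ?_, ?_⟩⟩
  · rw [show 1 + u / w = (w + u) / w by field_simp]; exact div_ne_zero k5 w0
  · rw [hf, smul_smul, k6]; congr 1; field_simp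
  · rw [show 1 + u / (1 + w) = (1 + w + u) / (1 + w) by field_simp]; exact div_ne_zero k2 w1
  · rw [he, smul_smul, k3]; congr 1; field_simp

theorem no_indep_wt {c : K → V} (c0 : c 0 = 0)
    (hmul : ∀ x y, x ≠ 0 → y ≠ 0 → c (x * y) = c x + c y)
    (c1 : c (-1) = 0)
    (hr : ∀ x, c x ≠ 0 → ∃ i : ZMod ℓ, c (1 + x) = i • c x)
    {x y : K} {w u : ZMod ℓ} (hi : Indep2 ℓ (c x) (c y)) (hx : HasWt c x w)
    (hy : HasWt c y u) : False := by
  have key : ∀ n : ℕ, Indep2 ℓ (c (x + (n : K))) (c y) ∧ HasWt c (x + (n : K)) (w + (n : ZMod ℓ)) := by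
    intro n
    induction n with
    | zero => simpa using ⟨hi, hx⟩
    | succ n ih =>
      obtain ⟨hi, hx⟩ := ih
      rw [show x + ((n + 1 : ℕ) : K) = 1 + (x + (n : K)) by push_cast; ring,
        show w + ((n + 1 : ℕ) : ZMod ℓ) = 1 + (w + (n : ZMod ℓ)) by push_cast; ring]
      generalize x + (n : K) = x' at *
      generalize w + (n : ZMod ℓ) = w' at *
      obtain ⟨w0, w1, -⟩ := id hx
      obtain ⟨u0, u1, -⟩ := id hy
      have cx : c x' ≠ 0 := fun h => one_ne_zero (hi 1 0 (by simp [h])).1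
      have cy : c y ≠ 0 := fun h => one_ne_zero (hi 0 1 (by simp [h])).2
      have y0 : y ≠ 0 := fun h => cy (h ▸ c0)
      have x1 : 1 + x' ≠ 0 := fun h =>
        cx (by rw [show x' = -1 by linear_combination h]; exact c1)
      have k0 : w' / (1 + w') ≠ 0 := div_ne_zero w0 w1
      have h1 := (wt_div c0 hmul c1 hr hi hx hy).2
      have d : c (y / (1 + x')) = c y - (w' / (1 + w')) • c x' := by
        rw [c_div hmul y0 x1, hx.coe]
      have hi2 : Indep2 ℓ (c (y / (1 + x'))) (c y) := by
        intro s t h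
        rw [d] at h
        have := hi (-(s * (w' / (1 + w')))) (s + t) (by rw [← h]; module)
        have hs : s = 0 := (mul_eq_zero.1 (neg_eq_zero.1 this.1)).resolve_right k0
        exact ⟨hs, by simpa [hs] using this.2⟩
      have h2 := (wt_div c0 hmul c1 hr hi2 h1 hy).1
      rw [show y / (y / (1 + x')) = 1 + x' by field_simp,
        show u / (u / (1 + w')) = 1 + w' by field_simp] at h2
      refine ⟨?_, h2⟩
      intro s t h
      rw [hx.coe] at h
      have := hi (s * (w' / (1 + w'))) t (by rw [← h]; module)
      exact ⟨(mul_eq_zero.1 this.1).resolve_right k0, this.2⟩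
  obtain ⟨n, hn⟩ := ZMod.natCast_zmod_surjective (n := ℓ) (-1 - w)
  exact (key n).2.2.1 (by rw [hn]; ring)


theorem c_neg {c : K → V} (c0 : c 0 = 0)
    (hmul : ∀ x y, x ≠ 0 → y ≠ 0 → c (x * y) = c x + c y)
    (c1 : c (-1) = 0) (x : K) : c (-x) = c x := by
  by_cases hx : x = 0
  · simp [hx]
  · rw [show -x = -1 * x by ring, hmul _ _ (by simp) hx, c1, zero_add]

theorem c_one {c : K → V} 
    (hmul : ∀ x y, x ≠ 0 → y ≠ 0 → c (x * y) = c x + c y) : c 1 = 0 := by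
  simpa using hmul 1 1 one_ne_zero one_ne_zero

theorem key_AB {c : K → V} (c0 : c 0 = 0)
    (hmul : ∀ x y, x ≠ 0 → y ≠ 0 → c (x * y) = c x + c y)
    (c1 : c (-1) = 0) (W : AddSubgroup V)
    (R : ∀ x, c x ∉ W → c (1 - x) = 0 ∨ c (1 - x) = c x) (x y : K)
    (hx : c x ∉ W) (hy : c y ∉ W) (sx : c (1 - x) = 0) (sy : c (1 - y) = 0) :
    c (1 - x * y) = 0 ∨ c (1 - x * y) = c x := by
  have one := c_one hmul
  have h1 : ∀ z, c z ∉ W → z ≠ 0 ∧ 1 - z ≠ 0 := fun z hz =>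
    ⟨fun h => hz (by rw [h, c0]; exact W.zero_mem),
      fun h => hz (by rw [← sub_eq_zero.1 h, one]; exact W.zero_mem)⟩
  obtain ⟨x0, x1⟩ := h1 x hx
  obtain ⟨y0, y1⟩ := h1 y hy
  have e : c (-(x * (1 - y) / (1 - x))) = c x := by
    rw [c_neg c0 hmul c1, c_div hmul (mul_ne_zero x0 y1) x1, hmul _ _ x0 y1, sx, sy]; abel
  have e2 : c (1 - x * y) = c (1 - -(x * (1 - y) / (1 - x))) := by
    rw [show 1 - x * y = (1 - x) * (1 - -(x * (1 - y) / (1 - x))) by field_simp; ring,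
      hmul _ _ x1 (h1 _ (by rw [e]; exact hx)).2, sx, zero_add]
  have := R _ (by rw [e]; exact hx)
  rwa [e2, ← e]

theorem exists_line {c : K → V} (c0 : c 0 = 0)
    (hmul : ∀ x y, x ≠ 0 → y ≠ 0 → c (x * y) = c x + c y)
    (c1 : c (-1) = 0)
    (hr : ∀ x, c x ≠ 0 → ∃ i : ZMod ℓ, c (1 - x) = i • c x) :
    ∃ v : V, ∀ W : AddSubgroup V, W = (Submodule.span (ZMod ℓ) {v}).toAddSubgroup →
      (∀ x, c x ∉ W → c (1 - x) = 0 ∨ c (1 - x) = c x) ∧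
      (∀ x y, c x ∉ W → c y ∉ W → c (1 - x) = 0 → c (1 - y) = 0 → c (1 - x * y) = 0) := by
  have neg := c_neg c0 hmul c1
  have one := c_one hmul
  have hr' : ∀ x, c x ≠ 0 → ∃ i : ZMod ℓ, c (1 + x) = i • c x := fun x hx => by
    obtain ⟨i, hi⟩ := hr (-x) (by rwa [neg])
    exact ⟨i, by rw [neg] at hi; rw [← hi, sub_neg_eq_add]⟩
  have h1 : ∀ z, c z ≠ 0 → z ≠ 0 ∧ 1 - z ≠ 0 := fun z hz =>
    ⟨fun h => hz (by rw [h, c0]), fun h => hz (by rw [← sub_eq_zero.1 h, one])⟩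
  -- step 1
  have step1 : ∃ v : V, ∀ x, c x ∉ Submodule.span (ZMod ℓ) {v} →
      c (1 - x) = 0 ∨ c (1 - x) = c x := by
    by_contra hcon
    push Not at hcon
    have wt : ∀ x, c x ≠ 0 → c (1 - x) ≠ 0 → c (1 - x) ≠ c x →
        ∃ w : ZMod ℓ, HasWt c (-x) w := by
      intro x hx h0 h1
      obtain ⟨i, hi⟩ := hr x hx
      have i0 : i ≠ 0 := fun h => h0 (by rw [hi, h, zero_smul])
      have i1 : 1 - i ≠ 0 := fun h => h1 (by rw [hi, ← sub_eq_zero.1 h, one_smul])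
      refine ⟨i / (1 - i), div_ne_zero i0 i1, ?_, ?_⟩
      · rw [show 1 + i / (1 - i) = (1 - i)⁻¹ by field_simp; ring]; exact inv_ne_zero i1
      · rw [neg, ← sub_eq_add_neg, hi, smul_smul]; congr 1; field_simp; ring
    obtain ⟨x, hx, hx0, hx1⟩ := hcon 0
    have cx : c x ≠ 0 := fun h => hx (by rw [h]; exact zero_mem _)
    obtain ⟨w, hw⟩ := wt x cx hx0 hx1
    obtain ⟨y, hy, hy0, hy1⟩ := hcon (c x)
    have cy : c y ≠ 0 := fun h => hy (by rw [h]; exact zero_mem _)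
    obtain ⟨u, hu⟩ := wt y cy hy0 hy1
    refine no_indep_wt c0 hmul c1 hr' ?_ hw hu
    rw [neg, neg]
    intro s t h
    have t0 : t = 0 := by
      by_contra ht
      apply hy
      rw [Submodule.mem_span_singleton]
      refine ⟨-(t⁻¹ * s), ?_⟩
      have : c y = t⁻¹ • (s • c x + t • c y) - (t⁻¹ * s) • c x := by
        rw [smul_add, smul_smul, smul_smul, inv_mul_cancel₀ ht, one_smul]; abel
      rw [this, h]; module
    refine ⟨?_, t0⟩
    rw [t0, zero_smul, add_zero] at h
    exact (smul_eq_zero.1 h).resolve_right cx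
  by_cases h2 : (2 : ZMod ℓ) = 0
  · -- ℓ = 2
    have tor : ∀ p : V, p + p = 0 := fun p => by
      rw [← two_smul (ZMod ℓ) p, h2, zero_smul]
    have bits : ∀ i : ZMod ℓ, i = 0 ∨ i = 1 := by
      have : ℓ = 2 := by
        have h3 : ((2 : ℕ) : ZMod ℓ) = 0 := by exact_mod_cast h2
        rw [ZMod.natCast_eq_zero_iff] at h3
        exact (Nat.prime_dvd_prime_iff_eq Fact.out Nat.prime_two).1 h3
      subst this
      intro i
      fin_cases i
      · left; rfl
      · right; rfl
    have R0 : ∀ x, c x ≠ 0 → c (1 - x) = 0 ∨ c (1 - x) = c x := by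
      intro x hx
      obtain ⟨i, hi⟩ := hr x hx
      rcases bits i with h | h <;> simp [hi, h]
    have AB : ∀ x y, c x ≠ 0 → c y ≠ 0 → c (1 - x) = 0 → c (1 - y) = 0 →
        c (1 - x * y) = 0 ∨ c (1 - x * y) = c x := fun x y hx hy => 
      key_AB c0 hmul c1 ⊥ (fun x hx => R0 x (by simpa using hx)) x y (by simpa using hx)
        (by simpa using hy)
    have AB' : ∀ x y, c x ≠ 0 → c y ≠ 0 → c (1 - x) = 0 → c (1 - y) = 0 →
        c (1 - x * y) = 0 ∨ (c (1 - x * y) = c x ∧ c x = c y) := by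
      intro x y hx hy sx sy
      rcases AB x y hx hy sx sy with h | h
      · exact Or.inl h
      rcases AB y x hy hx sy sx with h' | h'
      · left; rwa [mul_comm]
      · right; exact ⟨h, by rw [← h, ← h', mul_comm]⟩
    have prod : ∀ x y, c x ≠ 0 → c y ≠ 0 → c (1 - x) = 0 → c (1 - y) = 0 → c x ≠ c y →
        c (x * y) = c x + c y ∧ c (x * y) ≠ 0 ∧ c (1 - x * y) = 0 := by
      intro x y hx hy sx sy hne
      have e := hmul x y (h1 x hx).1 (h1 y hy).1
      refine ⟨e, fun h => hne ?_, ?_⟩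
      · rw [e] at h
        calc c x = c x + c y + c y := by rw [add_assoc, tor, add_zero]
          _ = c y := by rw [h, zero_add]
      · rcases AB' x y hx hy sx sy with h | h
        · exact h
        · exact absurd h.2 hne
    by_cases A0 : ∀ x y, c x ≠ 0 → c y ≠ 0 → c (1 - x) = 0 → c (1 - y) = 0 →
        c (1 - x * y) = 0
    · refine ⟨0, fun W hW => ?_⟩
      subst hW
      simpa using ⟨R0, A0⟩
    · push Not at A0
      obtain ⟨a, b, ha, hb, sa, sb, hab⟩ := A0
      obtain ⟨eab, hba⟩ := (AB' a b ha hb sa sb).resolve_left hab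
      refine ⟨c a, fun W hW => ?_⟩
      have hWz : ∀ x, c x ∉ W → c x ≠ 0 := fun x hx h => hx (by rw [h]; exact W.zero_mem)
      have hWa : c a ∈ W := by rw [hW]; exact Submodule.mem_span_singleton_self _
      refine ⟨fun x hx => R0 x (hWz x hx), ?_⟩
      intro x y hx hy sx sy
      have hx0 := hWz x hx
      have hy0 := hWz y hy
      have hxa : c x ≠ c a := fun h => hx (by rw [h]; exact hWa)
      rcases AB' x y hx0 hy0 sx sy with h | ⟨exy, hxy⟩
      · exact h
      exfalso
      obtain ⟨p1, p2, p3⟩ := prod a x ha hx0 sa sx hxa.symm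
      obtain ⟨q1, q2, q3⟩ := prod (a * x) b p2 hb p3 sb (by
        rw [p1, ← hba]; intro h; exact hx0 (by simpa using h))
      obtain ⟨r1, r2, r3⟩ := prod (a * x) y p2 hy0 p3 sy (by
        rw [p1, ← hxy]; intro h; exact ha (by simpa using h))
      have e1 : c (a * x * b) = c x := by
        rw [q1, p1, ← hba, add_right_comm, tor, zero_add]
      have e2 : c (a * x * y) = c a := by
        rw [r1, p1, ← hxy, add_assoc, tor, add_zero]
      have z1 := AB _ y q2 hy0 q3 sy
      have z2 := AB _ b r2 hb r3 sb
      rw [e1] at z1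
      rw [e2, show a * x * y * b = a * x * b * y by ring] at z2
      have z : c (1 - a * x * b * y) = 0 := by
        rcases z1 with h | h
        · exact h
        rcases z2 with h' | h'
        · exact h'
        · exact absurd (h.symm.trans h') hxa
      have nab : 1 - a * b ≠ 0 := fun h => hab (by rw [h, c0])
      have nxy : 1 - x * y ≠ 0 := fun h => hx0 (by rw [← exy, h, c0])
      have a0 := (h1 a ha).1
      have b0 := (h1 b hb).1
      have er : c (-(a * b * (1 - x * y) / (1 - a * b))) = c x - c a := by
        rw [neg, c_div hmul (mul_ne_zero (mul_ne_zero a0 b0) nxy) nab,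
          hmul _ _ (mul_ne_zero a0 b0) nxy, hmul _ _ a0 b0, ← hba, tor, exy, eab, zero_add]
      have er0 : c (-(a * b * (1 - x * y) / (1 - a * b))) ≠ 0 := by
        rw [er]; exact sub_ne_zero.2 hxa
      have fin : c (1 - a * x * b * y)
          = c a + c (1 - -(a * b * (1 - x * y) / (1 - a * b))) := by
        rw [← eab, ← hmul _ _ nab (h1 _ er0).2]
        congr 1; field_simp; ring
      rw [z] at fin
      rcases R0 _ er0 with h | h
      · rw [h, add_zero] at fin; exact ha fin.symm
      · rw [h, er] at fin; exact hx0 (by rw [fin]; abel)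
  · obtain ⟨v, R⟩ := step1
    refine ⟨v, fun W hW => ?_⟩
    have R' : ∀ x, c x ∉ W → c (1 - x) = 0 ∨ c (1 - x) = c x := fun x hx =>
      R x (by rw [hW] at hx; exact hx)
    refine ⟨R', ?_⟩
    intro x y hx hy sx sy
    have x0 := (h1 x (fun h => hx (by rw [h]; exact W.zero_mem))).1
    have y0 := (h1 y (fun h => hy (by rw [h]; exact W.zero_mem))).1
    rcases key_AB c0 hmul c1 W R' x y hx hy sx sy with h | h
    · exact h
    rcases key_AB c0 hmul c1 W R' y x hy hx sy sx with h' | h'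
    · rwa [mul_comm]
    have hxy : c x = c y := by rw [← h, ← h', mul_comm]
    have e : c (x * y) = (2 : ZMod ℓ) • c x := by rw [hmul _ _ x0 y0, ← hxy, two_smul]
    have hn : c (x * y) ∉ W := by
      rw [e]
      intro hm
      apply hx
      rw [hW] at hm ⊢
      have := Submodule.smul_mem (Submodule.span (ZMod ℓ) {v}) (2 : ZMod ℓ)⁻¹ hm
      rwa [smul_smul, inv_mul_cancel₀ h2, one_smul] at this
    rcases R' _ hn with h3 | h3
    · exact h3
    · exfalso
      rw [h, e, two_smul] at h3
      exact hx (by rw [show c x = 0 by simpa using h3]; exact W.zero_mem)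

end Geometry

/-- The valuation ring attached to a pair satisfying (R) and (A). -/
theorem exists_valring {K V : Type*} [Field K] [AddCommGroup V] {c : K → V} (c0 : c 0 = 0)
    (hmul : ∀ x y, x ≠ 0 → y ≠ 0 → c (x * y) = c x + c y)
    (c1 : c (-1) = 0) (W : AddSubgroup V)
    (R : ∀ x, c x ∉ W → c (1 - x) = 0 ∨ c (1 - x) = c x)
    (A : ∀ x y, c x ∉ W → c y ∉ W → c (1 - x) = 0 → c (1 - y) = 0 → c (1 - x * y) = 0) :
    ∃ O : ValuationSubring K, (∀ x, x ≠ 0 → x ∈ O → x⁻¹ ∈ O → c x ∈ W) ∧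
      (∀ x, x ∈ O → (x = 0 ∨ x⁻¹ ∉ O) → 1 + x ≠ 0 ∧ c (1 + x) = 0) ∧
      (∀ O' : ValuationSubring K, (∀ x, x ≠ 0 → x ∈ O' → x⁻¹ ∈ O' → c x ∈ W) → O' ≤ O) := by
  have neg := c_neg c0 hmul c1
  have one := c_one hmul
  have cdiv : ∀ x y, x ≠ 0 → y ≠ 0 → c (x / y) = c x - c y := fun x y hx hy => c_div hmul hx hy
  have hz : ∀ z, c z ∉ W → z ≠ 0 ∧ 1 - z ≠ 0 := fun z hz =>
    ⟨fun h => hz (by rw [h, c0]; exact W.zero_mem),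
      fun h => hz (by rw [← sub_eq_zero.1 h, one]; exact W.zero_mem)⟩
  have cinv : ∀ x, x ≠ 0 → c x⁻¹ = - c x := fun x hx => by
    rw [← one_div, cdiv 1 x one_ne_zero hx, one, zero_sub]
  obtain ⟨M, hM⟩ : ∃ M : K → Prop, ∀ x, M x ↔ c x ∉ W ∧ c (1 - x) = 0 := ⟨_, fun _ => Iff.rfl⟩
  have Mne : ∀ x, M x → x ≠ 0 := fun x hx => (hz x ((hM x).1 hx).1).1
  have M1 : ∀ x, M x → 1 - x ≠ 0 := fun x hx => (hz x ((hM x).1 hx).1).2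
  have Mninv : ∀ x, M x → ¬ M x⁻¹ := by
    intro x hx hi
    have x0 := Mne x hx
    have x1 := M1 x hx
    rw [hM] at hx hi
    have e : c (1 - x⁻¹) = - c x := by
      rw [show 1 - x⁻¹ = -((1 - x) / x) by field_simp; ring, neg, cdiv _ _ x1 x0, hx.2, zero_sub]
    rw [hi.2] at e
    exact hx.1 (by rw [← neg_neg (c x), ← e, neg_zero]; exact W.zero_mem)
  have Mdich : ∀ x, c x ∉ W → ¬ M x → M x⁻¹ := by
    intro x hx hn
    obtain ⟨x0, x1⟩ := hz x hx
    have h := (R x hx).resolve_left (fun h => hn ((hM x).2 ⟨hx, h⟩))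
    rw [hM]
    refine ⟨by rw [cinv x x0]; simpa using hx, ?_⟩
    rw [show 1 - x⁻¹ = -((1 - x) / x) by field_simp; ring, neg, cdiv _ _ x1 x0, h, sub_self]
  have MA : ∀ x y, M x → M y → c (1 - x * y) = 0 := fun x y hx hy => by
    rw [hM] at hx hy
    exact A x y hx.1 hy.1 hx.2 hy.2
  -- M = -M
  have Mneg : ∀ x, M x → M (-x) := by
    intro x hx
    by_contra hn
    have x0 := Mne x hx
    have x1 := M1 x hx
    have hx' := (hM x).1 hx
    have nW : c (-x) ∉ W := by rw [neg]; exact hx'.1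
    have h := (R _ nW).resolve_left (fun h => hn ((hM _).2 ⟨nW, h⟩))
    have h2 := MA x x hx hx
    have x2 := (hz _ nW).2
    rw [show 1 - x * x = (1 - x) * (1 - -x) by ring, hmul _ _ x1 x2, hx'.2, h, neg, zero_add] at h2
    exact hx'.1 (by rw [h2]; exact W.zero_mem)
  have Mp : ∀ x, M x → 1 + x ≠ 0 ∧ c (1 + x) = 0 := by
    intro x hx
    have h := Mneg x hx
    have h2 := M1 _ h
    have h3 := ((hM _).1 h).2
    rw [sub_neg_eq_add] at h2 h3
    exact ⟨h2, h3⟩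
  have Mof : ∀ x, c x ∉ W → c (1 + x) = 0 → M x := by
    intro x hx h
    have : M (-x) := by rw [hM, neg, sub_neg_eq_add]; exact ⟨hx, h⟩
    simpa using Mneg _ this
  -- x / (1 + x)
  have Mq : ∀ x, M x → M (x / (1 + x)) := by
    intro x hx
    obtain ⟨x1, hx1⟩ := Mp x hx
    rw [hM, cdiv _ _ (Mne x hx) x1, hx1, sub_zero]
    refine ⟨((hM x).1 hx).1, ?_⟩
    rw [show 1 - x / (1 + x) = 1 / (1 + x) by field_simp; ring, cdiv _ _ one_ne_zero x1, one, hx1,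
      sub_self]
  -- x (1 - y)
  have Mm : ∀ x y, M x → M y → M (x * (1 - y)) := by
    intro x y hx hy
    obtain ⟨x1, hx1⟩ := Mp x hx
    have h := MA _ y (Mq x hx) hy
    have y1 := M1 y hy
    have hy1 := ((hM y).1 hy).2
    have x0 := Mne x hx
    have e : c (x * (1 - y)) = c x := by rw [hmul _ _ x0 y1, hy1, add_zero]
    have nW : c (x * (1 - y)) ∉ W := by rw [e]; exact ((hM x).1 hx).1
    apply Mof _ nW
    have n1 : 1 + x * (1 - y) ≠ 0 := fun h => nW (by
      rw [show x * (1 - y) = -1 by linear_combination h, c1]; exact W.zero_mem)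
    rw [show 1 - x / (1 + x) * y = (1 + x * (1 - y)) / (1 + x) by field_simp; ring,
      cdiv _ _ n1 x1, hx1, sub_zero] at h
    exact h
  have Md : ∀ x y, M x → M y → M (x / (1 - y)) := by
    intro x y hx hy
    have x0 := Mne x hx
    have y1 := M1 y hy
    have hy1 := ((hM y).1 hy).2
    by_contra hn
    have hi := Mdich (x / (1 - y)) (by
      rw [cdiv _ _ x0 y1, hy1, sub_zero]; exact ((hM x).1 hx).1) hn
    have := MA _ _ hx hi
    rw [show 1 - x * (x / (1 - y))⁻¹ = y by field_simp; ring] at this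
    exact ((hM y).1 hy).1 (by rw [this]; exact W.zero_mem)
  -- products
  have MM : ∀ x y, M x → M y → c (x * y) ∈ W → ∀ a, M a → M (x * y * a) := by
    intro x y hx hy hW a ha
    have x0 := Mne x hx
    have y0 := Mne y hy
    have a0 := Mne a ha
    have x1 := M1 x hx
    have hp := MA x y hx hy
    have hN : M (x * (1 - y) / (1 - x)) := Md _ _ (Mm _ _ hx hy) hx
    have p1 : 1 - x * y ≠ 0 := by
      rw [show 1 - x * y = (1 - x) * (1 + x * (1 - y) / (1 - x)) by field_simp; ring]
      exact mul_ne_zero x1 (Mp _ hN).1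
    have h := MA _ y (Mm x a hx ha) hy
    have e : c (x * y * a / (1 - x * y)) = c (x * y) + c a := by
      rw [cdiv _ _ (mul_ne_zero (mul_ne_zero x0 y0) a0) p1, hmul _ _ (mul_ne_zero x0 y0) a0, hp,
        sub_zero]
    have nW : c (x * y * a / (1 - x * y)) ∉ W := by
      rw [e, W.add_mem_cancel_left hW]
      exact ((hM a).1 ha).1
    have n1 : 1 + x * y * a / (1 - x * y) ≠ 0 := fun h => nW (by
      rw [show x * y * a / (1 - x * y) = -1 by linear_combination h, c1]; exact W.zero_mem)
    rw [show 1 - x * (1 - a) * y = (1 - x * y) * (1 + x * y * a / (1 - x * y)) by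
      field_simp; ring, hmul _ _ p1 n1, hp, zero_add] at h
    have hb := Mof _ nW h
    have hc := Mm _ _ (Mm _ _ hb hx) hN
    have hd := Mm _ _ (Mm _ _ hb hx) (Mneg _ hN)
    rw [show x * y * a / (1 - x * y) * (1 - x) * (1 - -(x * (1 - y) / (1 - x)))
      = x * y * a by field_simp; ring] at hd
    exact hd
  -- the ring
  obtain ⟨P, hP⟩ : ∃ P : K → Prop, ∀ x, P x ↔ x ≠ 0 ∧ c x ∈ W ∧ ∀ a, M a → M (x * a) :=
    ⟨_, fun _ => Iff.rfl⟩
  have MMP : ∀ x y, M x → M y → M (x * y) ∨ P (x * y) := by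
    intro x y hx hy
    by_cases h : c (x * y) ∈ W
    · right
      rw [hP]
      exact ⟨mul_ne_zero (Mne x hx) (Mne y hy), h, MM x y hx hy h⟩
    · left; rw [hM]; exact ⟨h, MA x y hx hy⟩
  have PM : ∀ x y, P x → M y → M (x * y) := fun x y hx hy => ((hP x).1 hx).2.2 y hy
  have PP : ∀ x y, P x → P y → P (x * y) := by
    intro x y hx hy
    rw [hP] at hx hy ⊢
    refine ⟨mul_ne_zero hx.1 hy.1, ?_, fun a ha => ?_⟩
    · rw [hmul _ _ hx.1 hy.1]; exact W.add_mem hx.2.1 hy.2.1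
    · rw [mul_assoc]; exact hx.2.2 _ (hy.2.2 _ ha)
  obtain ⟨Q, hQ⟩ : ∃ Q : K → Prop, ∀ x, Q x ↔ x = 0 ∨ M x ∨ P x := ⟨_, fun _ => Iff.rfl⟩
  have Qmul : ∀ x y, Q x → Q y → Q (x * y) := by
    intro x y hx hy
    rw [hQ] at hx hy ⊢
    rcases hx with rfl | hx | hx
    · simp
    · rcases hy with rfl | hy | hy
      · simp
      · right; exact MMP x y hx hy
      · right; left; rw [mul_comm]; exact PM _ _ hy hx
    · rcases hy with rfl | hy | hy
      · simp
      · right; left; exact PM _ _ hx hy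
      · right; right; exact PP _ _ hx hy
  have P1 : P 1 := by
    rw [hP, one]; exact ⟨one_ne_zero, W.zero_mem, fun a ha => by rwa [one_mul]⟩
  have Pneg : P (-1) := by
    rw [hP, c1]
    exact ⟨by simp, W.zero_mem, fun a ha => by rw [neg_one_mul]; exact Mneg a ha⟩
  have Qneg : ∀ x, Q x → Q (-x) := fun x hx => by
    rw [← neg_one_mul]; exact Qmul _ _ ((hQ _).2 (Or.inr (Or.inr Pneg))) hx
  have Qdich : ∀ x, x ≠ 0 → Q x ∨ Q x⁻¹ := by
    intro x x0
    by_cases hW : c x ∈ W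
    · by_contra hcon
      push Not at hcon
      simp only [hQ, hP, not_or] at hcon
      have hWi : c x⁻¹ ∈ W := by rw [cinv x x0]; exact W.neg_mem hW
      obtain ⟨⟨-, -, h1⟩, ⟨-, -, h2⟩⟩ := hcon
      have h1' : ¬ ∀ a, M a → M (x * a) := fun h => h1 ⟨x0, hW, h⟩
      have h2' : ¬ ∀ a, M a → M (x⁻¹ * a) := fun h => h2 ⟨inv_ne_zero x0, hWi, h⟩
      push Not at h1' h2'
      obtain ⟨a, ha, ha'⟩ := h1'
      obtain ⟨b, hb, hb'⟩ := h2'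
      have a0 := Mne a ha
      have b0 := Mne b hb
      have k1 := Mdich (x * a) (by
        rw [hmul _ _ x0 a0, W.add_mem_cancel_left hW]; exact ((hM a).1 ha).1) ha'
      have k2 := Mdich (x⁻¹ * b) (by
        rw [hmul _ _ (inv_ne_zero x0) b0, W.add_mem_cancel_left hWi]
        exact ((hM b).1 hb).1) hb'
      have k3 := MMP _ _ k1 k2
      rw [show (x * a)⁻¹ * (x⁻¹ * b)⁻¹ = (a * b)⁻¹ by field_simp] at k3
      rcases k3 with k3 | k3
      · rcases MMP a b ha hb with k4 | k4
        · exact Mninv _ k4 k3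
        · have := PM _ _ k4 k3
          rw [mul_inv_cancel₀ (mul_ne_zero a0 b0)] at this
          exact M1 _ this (sub_self 1)
      · have := PM _ _ k3 ha
        rw [show (a * b)⁻¹ * a = b⁻¹ by field_simp] at this
        exact Mninv _ hb this
    · by_cases h : M x
      · left; rw [hQ]; exact Or.inr (Or.inl h)
      · right; rw [hQ]; exact Or.inr (Or.inl (Mdich x hW h))
  have Pmul_sub : ∀ x a, P x → M a → x + 1 ≠ 0 → c (x + 1) ∈ W → M ((x + 1) * a) := by
    intro x a hx ha h0 hW
    have hxa := PM x a hx ha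
    have a1 := M1 a ha
    have ha' := (hM a).1 ha
    have hk := Md _ _ hxa ha
    rw [hM]
    refine ⟨?_, ?_⟩
    · rw [hmul _ _ h0 (Mne a ha), W.add_mem_cancel_left hW]; exact ha'.1
    · rw [show 1 - (x + 1) * a = (1 - a) * (1 - x * a / (1 - a)) by field_simp; ring,
        hmul _ _ a1 (M1 _ hk), ha'.2, ((hM _).1 hk).2, add_zero]
  have Qadd1 : ∀ x, Q x → Q (x + 1) := by
    intro x hx
    rw [hQ] at hx ⊢
    rcases hx with rfl | hx | hx
    · right; right; rw [zero_add]; exact P1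
    · right; right
      obtain ⟨h1, h2⟩ := Mp x hx
      rw [add_comm, hP, h2]
      refine ⟨h1, W.zero_mem, fun a ha => ?_⟩
      have := Mm a _ ha (Mneg x hx)
      rw [show (1 + x) * a = a * (1 - -x) by ring]; exact this
    · by_cases h0 : x + 1 = 0
      · exact Or.inl h0
      right
      by_cases hW : c (x + 1) ∈ W
      · right; rw [hP]; exact ⟨h0, hW, fun a ha => Pmul_sub x a hx ha h0 hW⟩
      · left
        by_contra hn
        have hi := Mdich _ hW hn
        have h2 := PM x _ hx hi
        have h3 := ((hM _).1 hi).2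
        rw [show 1 - (x + 1)⁻¹ = x * (x + 1)⁻¹ by field_simp; ring] at h3
        exact ((hM _).1 h2).1 (by rw [h3]; exact W.zero_mem)
  have Qadd : ∀ x y, Q x → Q y → Q (x + y) := by
    intro x y hx hy
    by_cases x0 : x = 0
    · rwa [x0, zero_add]
    by_cases y0 : y = 0
    · rwa [y0, add_zero]
    rcases Qdich (x / y) (div_ne_zero x0 y0) with h | h
    · rw [show x + y = (x / y + 1) * y by field_simp]
      exact Qmul _ _ (Qadd1 _ h) hy
    · rw [show x + y = ((x / y)⁻¹ + 1) * x by field_simp; ring]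
      exact Qmul _ _ (Qadd1 _ h) hx
  have QM : ∀ x, Q x → c x ∉ W → M x := by
    intro x hx hW
    rw [hQ] at hx
    rcases hx with rfl | hx | hx
    · exact absurd (by rw [c0]; exact W.zero_mem) hW
    · exact hx
    · exact absurd ((hP x).1 hx).2.1 hW
  let O : ValuationSubring K :=
    { carrier := {x | Q x}
      mul_mem' := fun {x y} hx hy => Qmul x y hx hy
      one_mem' := (hQ 1).2 (Or.inr (Or.inr P1))
      add_mem' := fun {x y} hx hy => Qadd x y hx hy
      zero_mem' := (hQ 0).2 (Or.inl rfl)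
      neg_mem' := fun {x} hx => Qneg x hx
      mem_or_inv_mem' := fun x => by
        by_cases x0 : x = 0
        · left; exact (hQ x).2 (Or.inl x0)
        · exact Qdich x x0 }
  have hO : ∀ x, x ∈ O ↔ Q x := fun x => Iff.rfl
  refine ⟨O, ?_, ?_, ?_⟩
  · intro x x0 hx hi
    rw [hO] at hx hi
    by_contra hW
    exact Mninv x (QM x hx hW) (QM _ hi (by rw [cinv x x0]; simpa using hW))
  · intro x hx hi
    rw [hO] at hx hi
    by_cases x0 : x = 0
    · rw [x0, add_zero]; exact ⟨one_ne_zero, one⟩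
    have hi := hi.resolve_left x0
    rcases (hQ x).1 hx with h | h | h
    · exact absurd h x0
    · exact Mp x h
    · have hW := ((hP x).1 h).2.1
      have hWi : c x⁻¹ ∈ W := by rw [cinv x x0]; exact W.neg_mem hW
      have : ¬ ∀ a, M a → M (x⁻¹ * a) := fun h' =>
        hi ((hQ _).2 (Or.inr (Or.inr ((hP _).2 ⟨inv_ne_zero x0, hWi, h'⟩))))
      push Not at this
      obtain ⟨a, ha, hn⟩ := this
      have a0 := Mne a ha
      have k := Mdich (x⁻¹ * a) (by
        rw [hmul _ _ (inv_ne_zero x0) a0, W.add_mem_cancel_left hWi]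
        exact ((hM a).1 ha).1) hn
      have k2 := MA _ _ (Mneg a ha) k
      rw [show 1 - -a * (x⁻¹ * a)⁻¹ = 1 + x by field_simp; ring] at k2
      refine ⟨fun h0 => ?_, k2⟩
      apply hi
      rw [show x = -1 by linear_combination h0, show (-1 : K)⁻¹ = -1 by norm_num]
      exact (hQ _).2 (Or.inr (Or.inr Pneg))
  · intro O' hO'
    have s1 : ∀ x, x ∈ O' → c x ∉ W → M x := by
      intro x hx hW
      by_contra hn
      obtain ⟨x0, -⟩ := hz x hW
      have hi := Mdich x hW hn
      obtain ⟨j1, j2⟩ := Mp _ hi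
      have e : c (1 + x) = c x := by
        rw [show 1 + x = x * (1 + x⁻¹) by field_simp; ring, hmul _ _ x0 j1, j2, add_zero]
      have x1 : 1 + x ≠ 0 := fun h => hW (by rw [← e, h, c0]; exact W.zero_mem)
      have hin : x⁻¹ ∉ O' := fun h => hW (hO' x x0 hx h)
      have h1 : 1 + x ∈ O' := O'.add_mem _ _ O'.one_mem hx
      apply hW
      rw [← e]
      refine hO' _ x1 h1 ?_
      by_contra hni
      -- (1+x) in the maximal ideal and x in the maximal ideal, so 1 is
      have v1 : O'.valuation (1 + x) < 1 := by
        rw [← not_le]; intro h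
        apply hni
        rw [← O'.valuation_le_one_iff, map_inv₀]
        exact inv_le_one_of_one_le₀ h
      have v2 : O'.valuation x < 1 := by
        rw [← not_le]; intro h
        apply hin
        rw [← O'.valuation_le_one_iff, map_inv₀]
        exact inv_le_one_of_one_le₀ h
      have v3 := (O'.valuation.map_sub (1 + x) x).trans_lt (max_lt v1 v2)
      rw [add_sub_cancel_right, map_one] at v3
      exact lt_irrefl _ v3
    have s2 : ∀ x, M x → x ∈ O' := by
      intro x hx
      by_contra hn
      have hi := (O'.mem_or_inv_mem x).resolve_left hn
      exact Mninv x hx (s1 _ hi (by rw [cinv x (Mne x hx)]; simpa using ((hM x).1 hx).1))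
    intro x hx
    rw [hO, hQ]
    by_cases x0 : x = 0
    · exact Or.inl x0
    right
    by_cases hW : c x ∈ W
    · right
      rw [hP]
      refine ⟨x0, hW, fun a ha => s1 _ (O'.mul_mem _ _ hx (s2 a ha)) ?_⟩
      rw [hmul _ _ x0 (Mne a ha), W.add_mem_cancel_left hW]; exact ((hM a).1 ha).1
    · left; exact s1 x hx hW

section Assembly
variable {K : Type*} [Field K]

/-- class map, extended by zero -/
noncomputable def clsMap {V : Type*} [AddCommGroup V] (φ : Kˣ → V) (x : K) : V :=
  open Classical in
  if h : x = 0 then 0 else φ (Units.mk0 x h)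

theorem clsMap_unit {V : Type*} [AddCommGroup V] (φ : Kˣ → V) (u : Kˣ) :
    clsMap φ (u : K) = φ u := by
  simp [clsMap]

theorem rigid_of_val (T H : Subgroup Kˣ) (hneg : (-1 : Kˣ) ∈ T) (hTH : T ≤ H)
    (hcyc : IsCyclic (↥H ⧸ T.subgroupOf H)) (O : ValuationSubring K) (hO : O.unitGroup ≤ H)
    (hm : ∀ a : K, O.valuation a < 1 → ∃ t ∈ T, ((t : Kˣ) : K) = 1 + a) : IsRigid T := by
  intro x hxT h
  have key : ∀ g : Kˣ ⧸ T, QuotientGroup.mk x ∈ Subgroup.zpowers g →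
      QuotientGroup.mk (Units.mk0 ((1 : K) - (x : K)) h) ∈ Subgroup.zpowers g →
      IsCyclic ↥(Subgroup.closure {(QuotientGroup.mk x : Kˣ ⧸ T),
      QuotientGroup.mk (Units.mk0 ((1 : K) - (x : K)) h)}) := by
    intro g h1 h2
    refine Subgroup.isCyclic_of_le (H' := Subgroup.zpowers g) ?_
    rw [Subgroup.closure_le]
    rintro z (rfl | rfl)
    · exact h1
    · exact h2
  have x0 : (x : K) ≠ 0 := x.ne_zero
  have vx0 : O.valuation (x : K) ≠ 0 := (Valuation.ne_zero_iff _).2 x0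
  rcases lt_trichotomy (O.valuation (x : K)) 1 with hv | hv | hv
  · obtain ⟨t, ht, e⟩ := hm (-(x : K)) (by rwa [Valuation.map_neg])
    refine key (QuotientGroup.mk x) (Subgroup.mem_zpowers _) ?_
    have : Units.mk0 ((1 : K) - (x : K)) h = t := by ext; simp [e, sub_eq_add_neg]
    rw [this, (QuotientGroup.eq_one_iff t).2 ht]
    exact one_mem _
  · have hxH : x ∈ H := hO (by rw [ValuationSubring.mem_unitGroup_iff]; exact hv)
    have hle : O.valuation ((1 : K) - x) ≤ 1 :=
      (O.valuation.map_sub _ _).trans (by simp [hv])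
    have hv1 : O.valuation ((1 : K) - x) = 1 := by
      refine le_antisymm hle (not_lt.1 fun hlt => hxT ?_)
      obtain ⟨t, ht, e⟩ := hm (-((1 : K) - x)) (by rwa [Valuation.map_neg])
      have : x = t := by ext; rw [e]; ring
      rwa [this]
    have hyH : Units.mk0 ((1 : K) - (x : K)) h ∈ H :=
      hO (by rw [ValuationSubring.mem_unitGroup_iff]; exact hv1)
    obtain ⟨g, hg⟩ := hcyc.exists_generator
    obtain ⟨g, rfl⟩ := QuotientGroup.mk_surjective g
    have aux : ∀ y : Kˣ, y ∈ H →
        (QuotientGroup.mk y : Kˣ ⧸ T) ∈ Subgroup.zpowers (QuotientGroup.mk (g : Kˣ)) := by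
      intro y hy
      obtain ⟨n, hn⟩ := Subgroup.mem_zpowers_iff.1 (hg (QuotientGroup.mk ⟨y, hy⟩))
      rw [← QuotientGroup.mk_zpow, QuotientGroup.eq, Subgroup.mem_subgroupOf] at hn
      refine Subgroup.mem_zpowers_iff.2 ⟨n, ?_⟩
      rw [← QuotientGroup.mk_zpow, QuotientGroup.eq]
      simpa using hn
    exact key _ (aux x hxH) (aux _ hyH)
  · obtain ⟨t, ht, e⟩ := hm (-(x : K)⁻¹) (by
      rw [Valuation.map_neg, map_inv₀]; exact inv_lt_one_of_one_lt₀ hv)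
    refine key (QuotientGroup.mk x) (Subgroup.mem_zpowers _) ?_
    have : Units.mk0 ((1 : K) - (x : K)) h = x * (-1 * t) := by
      ext; simp [e]; field_simp; ring
    rw [this, QuotientGroup.mk_mul, (QuotientGroup.eq_one_iff _).2 (T.mul_mem hneg ht)]
    exact mul_mem (Subgroup.mem_zpowers _) (one_mem _)

theorem val_of_rigid_aux {V : Type*} [AddCommGroup V] (ℓ : ℕ) [Fact ℓ.Prime] [Module (ZMod ℓ) V]
    (T : Subgroup Kˣ) (φ : Kˣ → V) (φm : ∀ a b, φ (a * b) = φ a + φ b)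
    (φs : Function.Surjective φ) (φk : ∀ a, φ a = 0 ↔ a ∈ T)
    (hneg : (-1 : Kˣ) ∈ T) (hrig : IsRigid T) :
    ∃ H : Subgroup Kˣ, T ≤ H ∧ IsCyclic (↥H ⧸ T.subgroupOf H) ∧
      ∃ O : ValuationSubring K, O.unitGroup ≤ H ∧
        (∀ O' : ValuationSubring K, O'.unitGroup ≤ H → O' ≤ O) ∧
        (∀ a : K, O.valuation a < 1 → ∃ t ∈ T, ((t : Kˣ) : K) = 1 + a) := by
  have φ1 : φ 1 = 0 := (φk 1).2 T.one_mem
  have φi : ∀ a, φ a⁻¹ = - φ a := fun a => by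
    rw [eq_neg_iff_add_eq_zero, ← φm, inv_mul_cancel, φ1]
  let Φ : Kˣ →* Multiplicative V :=
    { toFun := fun a => Multiplicative.ofAdd (φ a)
      map_one' := by rw [φ1]; rfl
      map_mul' := fun a b => by rw [φm]; rfl }
  have φz : ∀ a (n : ℤ), φ (a ^ n) = n • φ a := fun a n => by
    have := map_zpow Φ a n
    exact congrArg Multiplicative.toAdd this
  have φq : ∀ a b, φ a = φ b ↔ a⁻¹ * b ∈ T := fun a b => by
    rw [← φk, φm, φi, neg_add_eq_zero]
  have c0 : clsMap φ (0 : K) = 0 := by simp [clsMap]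
  have cm : ∀ x y : K, x ≠ 0 → y ≠ 0 → clsMap φ (x * y) = clsMap φ x + clsMap φ y := by
    intro x y hx hy
    have := clsMap_unit φ (Units.mk0 x hx * Units.mk0 y hy)
    rw [φm, ← clsMap_unit φ, ← clsMap_unit φ] at this
    simpa using this
  have cu0 : ∀ u : Kˣ, clsMap φ (u : K) = 0 ↔ u ∈ T := fun u => by rw [clsMap_unit, φk]
  have c1 : clsMap φ (-1 : K) = 0 := by
    have := (cu0 (-1)).2 hneg
    simpa using this
  have hr : ∀ x, clsMap φ x ≠ 0 → ∃ i : ZMod ℓ, clsMap φ (1 - x) = i • clsMap φ x := by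
    intro x hx
    have x0 : x ≠ 0 := fun h => hx (by rw [h, c0])
    obtain ⟨u, rfl⟩ : ∃ u : Kˣ, (u : K) = x := ⟨Units.mk0 x x0, rfl⟩
    have huT : u ∉ T := fun h => hx ((cu0 u).2 h)
    have h1 : (1 : K) - (u : K) ≠ 0 := fun h => huT (by
      have : u = 1 := by ext; rw [← sub_eq_zero.1 h]; rfl
      rw [this]; exact T.one_mem)
    obtain ⟨⟨g, hgm⟩, hg⟩ := (hrig u huT h1).exists_generator
    obtain ⟨a, ha⟩ := Subgroup.mem_zpowers_iff.1
      (hg ⟨_, Subgroup.subset_closure (Set.mem_insert _ _)⟩)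
    obtain ⟨b, hb⟩ := Subgroup.mem_zpowers_iff.1
      (hg ⟨_, Subgroup.subset_closure (Set.mem_insert_of_mem _ rfl)⟩)
    have ha2 : g ^ a = QuotientGroup.mk u := congrArg Subtype.val ha
    have hb2 : g ^ b = QuotientGroup.mk (Units.mk0 _ h1) := congrArg Subtype.val hb
    obtain ⟨w, rfl⟩ := QuotientGroup.mk_surjective g
    rw [← QuotientGroup.mk_zpow, QuotientGroup.eq, ← φq, φz, ← clsMap_unit φ u] at ha2
    rw [← QuotientGroup.mk_zpow, QuotientGroup.eq, ← φq, φz, ← clsMap_unit φ (Units.mk0 _ h1),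
      Units.val_mk0] at hb2
    rw [← Int.cast_smul_eq_zsmul (ZMod ℓ)] at ha2 hb2
    have a0 : (a : ZMod ℓ) ≠ 0 := fun h => hx (by rw [← ha2, h, zero_smul])
    refine ⟨(b : ZMod ℓ) / a, ?_⟩
    rw [← ha2, ← hb2, smul_smul, div_mul_cancel₀ _ a0]
  obtain ⟨v, hv⟩ := exists_line c0 cm c1 hr
  obtain ⟨R, A⟩ := hv _ rfl
  obtain ⟨W, hW⟩ : ∃ W : AddSubgroup V,
    W = (Submodule.span (ZMod ℓ) {v}).toAddSubgroup := ⟨_, rfl⟩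
  rw [← hW] at R A
  obtain ⟨O, hO1, hO2, hO3⟩ := exists_valring c0 cm c1 W R A
  let H : Subgroup Kˣ :=
    { carrier := {u | clsMap φ (u : K) ∈ W}
      mul_mem' := fun {a b} ha hb => by
        change clsMap φ ((a * b : Kˣ) : K) ∈ W
        rw [Units.val_mul, cm _ _ a.ne_zero b.ne_zero]
        exact W.add_mem ha hb
      one_mem' := by
        change clsMap φ ((1 : Kˣ) : K) ∈ W
        rw [(cu0 1).2 T.one_mem]; exact W.zero_mem
      inv_mem' := fun {a} ha => by
        change clsMap φ ((a⁻¹ : Kˣ) : K) ∈ W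
        rw [clsMap_unit, φi, ← clsMap_unit φ]
        exact W.neg_mem ha }
  have hH : ∀ u : Kˣ, u ∈ H ↔ clsMap φ (u : K) ∈ W := fun u => Iff.rfl
  have unit_iff : ∀ O' : ValuationSubring K, O'.unitGroup ≤ H ↔
      ∀ x, x ≠ 0 → x ∈ O' → x⁻¹ ∈ O' → clsMap φ x ∈ W := by
    intro O'
    constructor
    · intro h x x0 hx hi
      have : Units.mk0 x x0 ∈ O'.unitGroup := by
        rw [ValuationSubring.mem_unitGroup_iff, Units.val_mk0]
        rw [← O'.valuation_le_one_iff] at hx hi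
        refine le_antisymm hx ?_
        rw [map_inv₀] at hi
        exact (inv_le_one₀ (zero_lt_iff.2 ((Valuation.ne_zero_iff _).2 x0))).1 hi
      exact h this
    · intro h u hu
      rw [ValuationSubring.mem_unitGroup_iff] at hu
      rw [hH]
      refine h _ u.ne_zero ?_ ?_
      · rw [← O'.valuation_le_one_iff, hu]
      · rw [← O'.valuation_le_one_iff, map_inv₀, hu, inv_one]
  refine ⟨H, ?_, ?_, O, (unit_iff O).2 hO1, fun O' h => hO3 O' ((unit_iff O').1 h), ?_⟩
  · intro t ht
    rw [hH, (cu0 t).2 ht]; exact W.zero_mem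
  · obtain ⟨g, hg⟩ := φs v
    have hgv : clsMap φ (g : K) = v := by rw [clsMap_unit, hg]
    have hgH : g ∈ H := by
      rw [hH, hgv, hW]; exact Submodule.mem_span_singleton_self v
    refine ⟨QuotientGroup.mk ⟨g, hgH⟩, fun q => ?_⟩
    obtain ⟨⟨y, hy⟩, rfl⟩ := QuotientGroup.mk_surjective q
    have hy' := hy
    rw [hH, hW] at hy'
    obtain ⟨r, hr'⟩ := Submodule.mem_span_singleton.1 hy'
    obtain ⟨n, rfl⟩ := ZMod.intCast_surjective r
    rw [Int.cast_smul_eq_zsmul, ← hgv, clsMap_unit, clsMap_unit, ← φz, φq] at hr'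
    refine Subgroup.mem_zpowers_iff.2 ⟨n, ?_⟩
    rw [← QuotientGroup.mk_zpow, QuotientGroup.eq, Subgroup.mem_subgroupOf]
    simpa using hr'
  · intro a ha
    have haO : a ∈ O := by rw [← O.valuation_le_one_iff]; exact ha.le
    have := hO2 a haO (by
      by_cases a0 : a = 0
      · exact Or.inl a0
      right
      rw [← O.valuation_le_one_iff, map_inv₀, not_le]
      exact (one_lt_inv₀ (zero_lt_iff.2 ((Valuation.ne_zero_iff _).2 a0))).2 ha)
    refine ⟨Units.mk0 _ this.1, ?_, rfl⟩
    rw [← cu0]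
    exact this.2

theorem zmod_smul_exists {V : Type*} [AddCommGroup V] (ℓ : ℕ) (h : ∀ x : V, ℓ • x = 0) :
    Nonempty (Module (ZMod ℓ) V) := ⟨AddCommGroup.zmodModule h⟩

theorem val_of_rigid (ℓ : ℕ) (hℓ : ℓ.Prime) (T : Subgroup Kˣ)
    (hpow : ∀ x : Kˣ, x ^ ℓ ∈ T) (hneg : (-1 : Kˣ) ∈ T) (hrig : IsRigid T) :
    ∃ H : Subgroup Kˣ, T ≤ H ∧ IsCyclic (↥H ⧸ T.subgroupOf H) ∧
      ∃ O : ValuationSubring K, O.unitGroup ≤ H ∧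
        (∀ O' : ValuationSubring K, O'.unitGroup ≤ H → O' ≤ O) ∧
        (∀ a : K, O.valuation a < 1 → ∃ t ∈ T, ((t : Kˣ) : K) = 1 + a) := by
  have : Fact ℓ.Prime := ⟨hℓ⟩
  obtain ⟨inst⟩ := zmod_smul_exists (V := Additive (Kˣ ⧸ T)) ℓ (by
    intro x
    obtain ⟨u, hu⟩ := QuotientGroup.mk_surjective (Additive.toMul x)
    change Additive.ofMul ((Additive.toMul x) ^ ℓ) = Additive.ofMul 1
    rw [← hu]
    exact congrArg Additive.ofMul ((QuotientGroup.eq_one_iff (u ^ ℓ)).2 (hpow u)))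
  exact val_of_rigid_aux (V := Additive (Kˣ ⧸ T)) ℓ T
    (fun u => Additive.ofMul (QuotientGroup.mk u)) (fun a b => rfl)
    (fun v => by
      obtain ⟨u, hu⟩ := QuotientGroup.mk_surjective (Additive.toMul v)
      exact ⟨u, congrArg Additive.ofMul hu⟩)
    (fun a => by
      constructor
      · intro h
        exact (QuotientGroup.eq_one_iff a).1 (Additive.ofMul.injective h)
      · intro h
        exact congrArg Additive.ofMul ((QuotientGroup.eq_one_iff a).2 h))
    hneg hrig

end Assembly

/-- for `T ≤ K^×` with `K^{×ℓ} ⊆ T` and `-1 ∈ T`, `T` is rigid iff there is a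
subgroup `T ≤ H ≤ K^×` with `H/T` cyclic, `H` valuative, and `1 + m_{v_H} ⊆ T`, where
`v_H` is the coarsest valuation whose units lie in `H` (i.e. `O_{v_H}` is the largest
valuation subring with unit group contained in `H`). -/
theorem stmt_4 {K : Type*} [Field K] (ℓ : ℕ) (hℓ : ℓ.Prime) (T : Subgroup Kˣ)
    (hpow : ∀ x : Kˣ, x ^ ℓ ∈ T) (hneg : (-1 : Kˣ) ∈ T) :
    (∃ H : Subgroup Kˣ, T ≤ H ∧ IsCyclic (↥H ⧸ T.subgroupOf H) ∧
      ∃ O : ValuationSubring K, O.unitGroup ≤ H ∧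
        (∀ O' : ValuationSubring K, O'.unitGroup ≤ H → O' ≤ O) ∧
        (∀ a : K, O.valuation a < 1 → ∃ t ∈ T, ((t : Kˣ) : K) = 1 + a)) ↔
    IsRigid T := by
  constructor
  · rintro ⟨H, hTH, hcyc, O, hO, -, hm⟩
    exact rigid_of_val T H hneg hTH hcyc O hO hm
  · exact val_of_rigid ℓ hℓ T hpow hneg
end

section
/- Let K be an arbitrary field, ℓ a prime, and T a subgroup of K^× with K^{×ℓ} ⊆ T and −1 ∈ T. Assume T = 𝐇(T). Then there exists a subgroup H with T ⊆ H ⊆ K^× such that H/T is cyclic (possibly trivial), H is valuative, and, denoting by v = v_H the coarsest valuation with O_v^× ⊆ H, one has 1 + m_v ⊆ T and O_v^× ⊆ H. -/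
/-- The subgroup `𝐇(T)`: the intersection of all subgroups `H ≤ K^×` such that (i) `T ≤ H`
and `K^×/H` is cyclic, and (ii) for every `H'` with `T ≤ H'` and `K^×/H'` cyclic, `H ⊓ H'`
is rigid. -/
def Hbold {K : Type*} [Field K] (T : Subgroup Kˣ) : Subgroup Kˣ :=
  sInf {H : Subgroup Kˣ |
    (T ≤ H ∧ IsCyclic (Kˣ ⧸ H)) ∧
    ∀ H' : Subgroup Kˣ, T ≤ H' → IsCyclic (Kˣ ⧸ H') → IsRigid (H ⊓ H')}

namespace Rig

variable {K : Type*} [Field K]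

/-- membership of a field element in a subgroup of units -/
def M (T : Subgroup Kˣ) (a : K) : Prop := ∃ t ∈ T, ((t : Kˣ) : K) = a

theorem M.ne {T : Subgroup Kˣ} {a : K} (h : M T a) : a ≠ 0 := by
  obtain ⟨t, _, rfl⟩ := h; exact t.ne_zero

theorem M.one {T : Subgroup Kˣ} : M T (1 : K) := ⟨1, T.one_mem, by simp⟩

theorem M.mul {T : Subgroup Kˣ} {a b : K} (h : M T a) (h' : M T b) : M T (a * b) := by
  obtain ⟨t, ht, rfl⟩ := h; obtain ⟨s, hs, rfl⟩ := h'
  exact ⟨t * s, T.mul_mem ht hs, by simp⟩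

theorem M.inv {T : Subgroup Kˣ} {a : K} (h : M T a) : M T a⁻¹ := by
  obtain ⟨t, ht, rfl⟩ := h
  exact ⟨t⁻¹, T.inv_mem ht, by simp⟩

theorem M.div {T : Subgroup Kˣ} {a b : K} (h : M T a) (h' : M T b) : M T (a / b) := by
  rw [div_eq_mul_inv]; exact h.mul h'.inv

theorem M.to {T : Subgroup Kˣ} {a b : K} (h : M T a) (e : a = b) : M T b := e ▸ h

theorem M_coe {T : Subgroup Kˣ} {a : Kˣ} : M T (a : K) ↔ a ∈ T := by
  constructor
  · rintro ⟨t, ht, h⟩; rwa [← Units.ext h]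
  · intro h; exact ⟨a, h, rfl⟩

theorem M.mono {T H : Subgroup Kˣ} (hTH : T ≤ H) {a : K} (h : M T a) : M H a := by
  obtain ⟨t, ht, e⟩ := h; exact ⟨t, hTH ht, e⟩

/-- the set `O⁻` of the construction -/
def A (T H : Subgroup Kˣ) (x : K) : Prop := x ≠ 0 ∧ ¬ M H x ∧ M T (1 - x)

/-- the rigidity hypothesis relative to `H` -/
structure Pair (T H : Subgroup Kˣ) : Prop where
  le : T ≤ H
  neg : M T (-1 : K)
  rig : ∀ x : K, x ≠ 0 → ¬ M H x → M T (1 - x) ∨ M T ((1 - x) / x)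

section
variable {T H : Subgroup Kˣ}

theorem M.negT (h : Pair T H) {a : K} (ha : M T a) : M T (-a) := (h.neg.mul ha).to (by ring)
theorem M.negH (h : Pair T H) {a : K} (ha : M H a) : M H (-a) :=
  ((h.neg.mono h.le).mul ha).to (by ring)

theorem A.inv_of (h : Pair T H) {x : K} (h0 : x ≠ 0) (hx : ¬ M H x) (hA : ¬ A T H x) :
    A T H x⁻¹ := by
  refine ⟨inv_ne_zero h0, fun hh => hx (hh.inv.to (by simp)), ?_⟩
  rcases h.rig x h0 hx with h1 | h1
  · exact absurd ⟨h0, hx, h1⟩ hA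
  · exact (h1.negT h).to (by field_simp; ring)

theorem A.not_inv (h : Pair T H) {x : K} (hA : A T H x) (hB : A T H x⁻¹) : False := by
  obtain ⟨h0, hx, h1⟩ := hA
  have h2 := hB.2.2
  refine hx (((h1.div h2).negT h).to ?_ |>.mono h.le)
  have h3 := h1.ne
  have h4 := h2.ne
  have : (1 - x⁻¹) = (-(1 - x)) / x := by field_simp; ring
  rw [this]
  field_simp

theorem key (h : Pair T H) {a b : K} (ha : A T H a) (hb : M T (1 - b)) :
    M T (1 - a * b) ∨ M T ((1 - a * b) / a) := by
  obtain ⟨h0, hx, h1⟩ := ha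
  have hn := h1.ne
  have hn2 := hb.ne
  have hz : ¬ M H (-(a * (1 - b) / (1 - a))) := by
    intro hh
    refine hx (((hh.negH h).mul ((h1.div hb).mono h.le)).to ?_)
    field_simp
  have h0z : (-(a * (1 - b) / (1 - a))) ≠ 0 := by
    simp [h0, hn, hn2]
  rcases h.rig _ h0z hz with h2 | h2
  · left
    refine (h2.mul h1).to ?_
    field_simp; ring
  · right
    refine ((h2.mul hb).negT h).to ?_
    field_simp; ring

theorem A.mul (h : Pair T H) {a b : K} (ha : A T H a) (hb : A T H b) (hab : ¬ M H (a * b)) :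
    A T H (a * b) := by
  have h0 : a * b ≠ 0 := mul_ne_zero ha.1 hb.1
  refine ⟨h0, hab, ?_⟩
  rcases key h ha hb.2.2 with h1 | h1
  · exact h1
  rcases key h hb ha.2.2 with h2 | h2
  · rwa [mul_comm]
  rcases h.rig _ h0 hab with h3 | h3
  · exact h3
  have := h3.ne
  have h4 : 1 - a * b ≠ 0 := by intro hh; rw [hh] at this; simp at this
  refine ((h1.mul h2).div h3).to ?_
  have := ha.1
  have := hb.1
  rw [mul_comm b a]
  field_simp

theorem A.to {a b : K} (h : A T H a) (e : a = b) : A T H b := e ▸ h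

theorem A.nH {a : K} (h : A T H a) : ¬ M H a := h.2.1

theorem M.not_mul {a b : K} (ha : ¬ M H a) (hb : M H b) : ¬ M H (a * b) := fun hh =>
  ha ((hh.div hb).to (by have := hb.ne; field_simp))

/-- goodness of `H` -/
structure Good (T H : Subgroup Kˣ) : Prop where
  sign : ∀ a : K, A T H a → A T H (-a)
  cube : ∀ x y z : K, A T H x → A T H y → A T H z → M H (x * y) → A T H (x * y * z)
  add : ∀ x a : K, A T H x → A T H a → A T H ((1 - x) * a)

/-- the exceptional element -/
structure Exc (T H : Subgroup Kˣ) (u : K) : Prop where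
  ne : u ≠ 0
  nH : ¬ M H u
  sq : M H (u * u)
  big : ∀ w, A T H w → ¬ M H (w / u) → A T H (-w) ∧ A T H (w * u) ∧ A T H (w / u)

theorem addlem (h : Pair T H) {x a : K} (hx : A T H x) (ha : A T H a)
    (hn : ¬ A T H ((1 - x) * a)) : ∃ d, A T H d ∧ M T (a * d) ∧ ¬ M H (1 - a * d) ∧
      M T ((1 - a * d) / a) ∧ M T ((1 - a * d) / d) := by
  have hx1 := hx.2.2
  have n1 := hx1.ne
  have n2 := ha.1
  have n3 := hx.1
  have hH : ¬ M H ((1 - x) * a) := by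
    rw [mul_comm]; exact M.not_mul ha.nH (hx1.mono h.le)
  have hd := A.inv_of h (mul_ne_zero n1 n2) hH hn
  have had : a * ((1 - x) * a)⁻¹ = (1 - x)⁻¹ := by field_simp
  have hnot : ¬ M H (1 - a * ((1 - x) * a)⁻¹) := by
    rw [had]
    intro hh
    refine hx.nH (((hh.mul (hx1.mono h.le)).negH h).to ?_)
    field_simp; ring
  refine ⟨_, hd, ?_, hnot, ?_, ?_⟩
  · rw [had]; exact hx1.inv
  · rcases key h ha hd.2.2 with h1 | h1
    · exact absurd (h1.mono h.le) hnot
    · exact h1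
  · rcases key h hd ha.2.2 with h1 | h1
    · rw [mul_comm] at h1
      exact absurd (h1.mono h.le) hnot
    · refine h1.to ?_
      rw [mul_comm a]

theorem dich (h : Pair T H) : Good T H ∨ ∃ u, Exc T H u := by
  by_cases hs : ∀ a : K, A T H a → A T H (-a)
  swap
  · push Not at hs
    obtain ⟨a, ha, hna⟩ := hs
    have n := ha.1
    have hai : A T H (-a)⁻¹ := A.inv_of h (neg_ne_zero.2 n)
      (fun hh => ha.nH ((hh.negH h).to (by ring))) hna
    have hsq : M H (a * a) := by
      by_contra hc
      have h1 := A.mul h ha ha hc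
      have h2 := A.mul h hai hai (fun hh => hc (hh.inv.to (by field_simp)))
      exact A.not_inv h h1 (h2.to (by field_simp))
    refine Or.inr ⟨a, n, ha.nH, hsq, fun w hw hwa => ?_⟩
    have nw := hw.1
    have hwa' : ¬ M H (w * a) := fun hh => hwa ((hh.div hsq).to (by field_simp))
    have h1 := A.mul h hw ha hwa'
    have hw' : A T H (-w) := by
      by_contra hc
      have hwi : A T H (-w)⁻¹ := A.inv_of h (neg_ne_zero.2 nw)
        (fun hh => hw.nH ((hh.negH h).to (by ring))) hc
      have h2 := A.mul h hwi hai (fun hh => hwa' (hh.inv.to (by field_simp)))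
      exact A.not_inv h h1 (h2.to (by field_simp))
    refine ⟨hw', h1, ?_⟩
    refine (A.mul h hw' hai (fun hh => hwa (hh.to (by field_simp)))).to (by field_simp)
  by_cases hc : ∀ x y z : K, A T H x → A T H y → A T H z → M H (x * y) → A T H (x * y * z)
  swap
  · push Not at hc
    obtain ⟨x, y, z, hx, hy, hz, hxy, hn⟩ := hc
    have nx := hx.1
    have ny := hy.1
    have nz := hz.1
    have hxyz : ¬ M H (x * y * z) := by rw [mul_comm]; exact M.not_mul hz.nH hxy
    have hxz : M H (x * z) := by
      by_contra hh
      have h1 := A.mul h hx hz hh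
      exact hn ((A.mul h h1 hy (fun hh => hxyz (hh.to (by ring)))).to (by ring))
    have hyz : M H (y * z) := by
      by_contra hh
      have h1 := A.mul h hy hz hh
      exact hn ((A.mul h h1 hx (fun hh => hxyz (hh.to (by ring)))).to (by ring))
    have hsq : M H (x * x) := ((hxy.mul hxz).div hyz).to (by field_simp)
    refine Or.inr ⟨x, nx, hx.nH, hsq, fun w hw hwx => ?_⟩
    have nw := hw.1
    have hwx' : ¬ M H (w * x) := fun hh => hwx ((hh.div hsq).to (by field_simp))
    refine ⟨hs w hw, A.mul h hw hx hwx', ?_⟩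
    by_contra hcc
    have h1 : A T H (x / w) := (A.inv_of h (by positivity) hwx hcc).to (by field_simp)
    have h2 := A.mul h h1 hy (fun hh => hw.nH ((hxy.div hh).to (by field_simp)))
    have h3 := A.mul h h2 hz (fun hh => hwx ((hyz.div hh).to (by field_simp)))
    exact hn ((A.mul h h3 hw (fun hh => hxyz (hh.to (by field_simp)))).to (by field_simp))
  by_cases hadd : ∀ x a : K, A T H x → A T H a → A T H ((1 - x) * a)
  · exact Or.inl ⟨hs, hc, hadd⟩
  push Not at hadd
  obtain ⟨x, a, hx, ha, hn⟩ := hadd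
  obtain ⟨d, hd, had, h1, h2, h3⟩ := addlem h hx ha hn
  have na := ha.1
  have nd := hd.1
  have n2 : 1 - a * d ≠ 0 := by intro hh; have := h2.ne; rw [hh] at this; simp at this
  have hsq : M H (a * a) := ((h3.div h2).mul had).to (by field_simp) |>.mono h.le
  refine Or.inr ⟨a, na, ha.nH, hsq, fun w hw hwa => ?_⟩
  have nw := hw.1
  have hwa' : ¬ M H (w * a) := fun hh => hwa ((hh.div hsq).to (by field_simp))
  refine ⟨hs w hw, A.mul h hw ha hwa', ?_⟩
  by_contra hcc
  have h4 : A T H (a / w) := (A.inv_of h (div_ne_zero nw na) hwa hcc).to (by field_simp)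
  have h5 := A.mul h h4 hd
    (fun hh => hw.nH (((had.mono h.le).div hh).to (by field_simp)))
  have e : w * (a / w * d) = a * d := by field_simp
  rcases key h hw h5.2.2 with h6 | h6
  · rw [e] at h6; exact h1 (h6.mono h.le)
  · rw [e] at h6
    exact hwa (((h2.div h6).mono h.le).to (by field_simp))

theorem good_of_exc (h : Pair T H) {u : K} (hu : Exc T H u) {H' : Subgroup Kˣ}
    (hH' : ∀ a : K, M H' a ↔ M H a ∨ M H (a / u)) (h' : Pair T H') : Good T H' := by
  have nu := hu.ne
  have hsq := hu.sq
  have hA : ∀ a : K, A T H' a ↔ A T H a ∧ ¬ M H (a / u) := by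
    intro a; unfold A; rw [hH']; tauto
  have sq' : ∀ w : K, ¬ M H (w / u) → ¬ M H (w * u) := fun w hw hh =>
    hw ((hh.div hsq).to (by field_simp))
  refine ⟨?_, ?_, ?_⟩
  · intro a ha
    rw [hA] at ha ⊢
    exact ⟨(hu.big a ha.1 ha.2).1, fun hh => ha.2 ((hh.negH h).to (by field_simp))⟩
  · intro x y z hx hy hz hxy
    have hxyz : ¬ M H' (x * y * z) := by rw [mul_comm]; exact M.not_mul hz.nH hxy
    rw [hH'] at hxyz
    push Not at hxyz
    rw [hA] at hx hy hz ⊢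
    refine ⟨?_, hxyz.2⟩
    have nx := hx.1.1
    have ny := hy.1.1
    have nz := hz.1.1
    by_cases hh : M H (x * y)
    · have h1 := (hu.big x hx.1 hx.2).2.2
      have h2 := A.mul h h1 hy.1 (fun h3 => hu.nH ((hh.div h3).to (by field_simp)))
      have h3 := A.mul h h2 hz.1 (fun h4 => hxyz.2 (h4.to (by field_simp)))
      have h4 := (hu.big _ h3 (fun h5 => hz.1.nH (((h5.mul hsq).div hh).to (by field_simp)))).2.1
      exact h4.to (by field_simp)
    · exact A.mul h (A.mul h hx.1 hy.1 hh) hz.1 hxyz.1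
  · intro x a hx ha
    by_contra hn
    obtain ⟨d, hd, had, h1, h2, h3⟩ := addlem h' hx ha hn
    rw [hA] at hx ha hd
    have na := ha.1.1
    have nd := hd.1.1
    have n2 : 1 - a * d ≠ 0 := by intro hh; have := h2.ne; rw [hh] at this; simp at this
    have h4 := (hu.big a ha.1 ha.2).2.2
    have h5 := (hu.big d hd.1 hd.2).2.1
    have e : (a / u) * (d * u) = a * d := by field_simp
    rcases key h h4 h5.2.2 with h6 | h6
    · rw [e] at h6; exact h1 (h6.mono h'.le)
    · rw [e] at h6
      exact hu.nH (((h6.div h2).mono h.le).to (by field_simp))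

/-- `O⁺` -/
def B (T H : Subgroup Kˣ) (x : K) : Prop := M H x ∧ ∀ a, A T H a → A T H (x * a)

def Om (T H : Subgroup Kˣ) (x : K) : Prop := x = 0 ∨ A T H x ∨ B T H x

theorem Om.mul (h : Pair T H) (g : Good T H) {x y : K} (hx : Om T H x) (hy : Om T H y) :
    Om T H (x * y) := by
  rcases hx with rfl | hx | hx
  · left; simp
  · rcases hy with rfl | hy | hy
    · left; simp
    · by_cases hh : M H (x * y)
      · exact Or.inr (Or.inr ⟨hh, fun z hz => g.cube x y z hx hy hz hh⟩)
      · exact Or.inr (Or.inl (A.mul h hx hy hh))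
    · exact Or.inr (Or.inl ((hy.2 x hx).to (by ring)))
  · rcases hy with rfl | hy | hy
    · left; simp
    · exact Or.inr (Or.inl (hx.2 y hy))
    · exact Or.inr (Or.inr ⟨hx.1.mul hy.1, fun a ha => (hx.2 _ (hy.2 a ha)).to (by ring)⟩)

theorem Om.neg (h : Pair T H) (g : Good T H) {x : K} (hx : Om T H x) : Om T H (-x) := by
  rcases hx with rfl | hx | hx
  · left; simp
  · exact Or.inr (Or.inl (g.sign x hx))
  · exact Or.inr (Or.inr ⟨hx.1.negH h, fun a ha => (g.sign _ (hx.2 a ha)).to (by ring)⟩)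

theorem split (h : Pair T H) {x : K} (hx : M H x) (hB : ¬ B T H x⁻¹) :
    ∃ a d, A T H a ∧ A T H d ∧ x = a * d := by
  have n := hx.ne
  have : ∃ a, A T H a ∧ ¬ A T H (x⁻¹ * a) := by
    by_contra hc; push Not at hc
    exact hB ⟨hx.inv, hc⟩
  obtain ⟨a, ha, hn⟩ := this
  have na := ha.1
  refine ⟨a, (x⁻¹ * a)⁻¹, ha, A.inv_of h (by simp [n, na]) ?_ hn, by field_simp⟩
  rw [mul_comm]; exact M.not_mul ha.nH hx.inv

theorem Om.total (h : Pair T H) (g : Good T H) (x : K) : Om T H x ∨ Om T H x⁻¹ := by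
  by_cases n : x = 0
  · exact Or.inl (Or.inl n)
  by_cases hx : M H x
  · by_cases hB : B T H x⁻¹
    · exact Or.inr (Or.inr (Or.inr hB))
    · obtain ⟨a, d, ha, hd, rfl⟩ := split h hx hB
      left
      exact Om.mul h g (Or.inr (Or.inl ha)) (Or.inr (Or.inl hd))
  · by_cases hA : A T H x
    · exact Or.inl (Or.inr (Or.inl hA))
    · exact Or.inr (Or.inr (Or.inl (A.inv_of h n hx hA)))

theorem Om.unit (h : Pair T H) {x : K} (n : x ≠ 0) (hx : Om T H x) (hx' : Om T H x⁻¹) :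
    M H x := by
  rcases hx with rfl | hx | hx
  · exact absurd rfl n
  · rcases hx' with h0 | hx' | hx'
    · simp at h0; exact absurd h0 n
    · exact (A.not_inv h hx hx').elim
    · exact hx'.1.inv.to (by simp)
  · exact hx.1

theorem B_sub (h : Pair T H) (g : Good T H) {x : K} (hx : A T H x) : B T H (1 - x) :=
  ⟨hx.2.2.mono h.le, fun a ha => g.add x a hx ha⟩

theorem A.div_sub (h : Pair T H) (g : Good T H) {a b : K} (ha : A T H a) (hb : A T H b) :
    A T H (b / (1 - a)) := by
  have n := ha.1
  have n1 := ha.2.2.ne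
  have he : A T H (-a / (1 - a)) := by
    by_contra hc
    have h1 := A.inv_of h (by simp [n, n1]) (fun hh => ha.nH
      (((hh.mul (ha.2.2.mono h.le)).negH h).to (by field_simp))) hc
    have h2 := (B_sub h g h1).1
    refine ha.nH (h2.inv.to ?_)
    field_simp
    ring_nf
    try simp
  refine (g.add _ b he hb).to ?_
  field_simp
  ring

theorem A.add (h : Pair T H) (g : Good T H) {a b : K} (ha : A T H a) (hb : A T H b)
    (n : a + b ≠ 0) (hab : ¬ M H (a + b)) : A T H (a + b) := by
  refine ⟨n, hab, ?_⟩
  have h1 := A.div_sub h g ha hb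
  have n1 := ha.2.2.ne
  refine (ha.2.2.mul h1.2.2).to ?_
  field_simp; ring

theorem B_one : B T H (1 : K) := ⟨M.one, fun a ha => by simpa using ha⟩

theorem Om.one_add (h : Pair T H) (g : Good T H) {x : K} (hx : Om T H x) : Om T H (1 + x) := by
  rcases hx with rfl | hx | hx
  · exact Or.inr (Or.inr (by simpa using B_one))
  · have := B_sub h g (g.sign x hx)
    rw [sub_neg_eq_add] at this
    exact Or.inr (Or.inr this)
  · by_cases n : 1 + x = 0
    · exact Or.inl n
    by_cases hh : M H (1 + x)
    · refine Or.inr (Or.inr ⟨hh, fun a ha => ?_⟩)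
      have e : a + x * a = (1 + x) * a := by ring
      have h1 : ¬ M H ((1 + x) * a) := by rw [mul_comm]; exact M.not_mul ha.nH hh
      rw [← e]
      refine A.add h g ha (hx.2 a ha) ?_ ?_
      · rw [e]; exact mul_ne_zero n ha.1
      · rwa [e]
    · by_cases hA : A T H (1 + x)
      · exact Or.inr (Or.inl hA)
      have h1 := A.inv_of h n hh hA
      have h2 := (hx.2 _ h1).nH
      refine absurd ((h1.2.2.mono h.le).to ?_) h2
      field_simp; ring

theorem Om.add (h : Pair T H) (g : Good T H) {x y : K} (hx : Om T H x) (hy : Om T H y) :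
    Om T H (x + y) := by
  by_cases nx : x = 0
  · simpa [nx] using hy
  by_cases ny : y = 0
  · simpa [ny] using hx
  rcases Om.total h g (x / y) with h1 | h1
  · have := Om.mul h g hy (Om.one_add h g h1)
    convert this using 1; field_simp; ring
  · have := Om.mul h g hx (Om.one_add h g h1)
    convert this using 1; field_simp

/-- the valuation ring -/
def ring (h : Pair T H) (g : Good T H) : ValuationSubring K where
  carrier := {x | Om T H x}
  mul_mem' := fun hx hy => Om.mul h g hx hy
  one_mem' := Or.inr (Or.inr B_one)
  add_mem' := fun hx hy => Om.add h g hx hy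
  zero_mem' := Or.inl rfl
  neg_mem' := fun hx => Om.neg h g hx
  mem_or_inv_mem' := fun x => Om.total h g x

theorem mem_ring (h : Pair T H) (g : Good T H) {x : K} : x ∈ ring h g ↔ Om T H x := Iff.rfl

theorem final (h : Pair T H) (g : Good T H) :
    ∃ O : ValuationSubring K, O.unitGroup ≤ H ∧
        (∀ O' : ValuationSubring K, O'.unitGroup ≤ H → O' ≤ O) ∧
        (∀ a : K, O.valuation a < 1 → ∃ t ∈ T, ((t : Kˣ) : K) = 1 + a) := by
  have hunit : (ring h g).unitGroup ≤ H := by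
    intro x hx
    rw [ValuationSubring.mem_unitGroup_iff] at hx
    rw [← M_coe]
    refine Om.unit h x.ne_zero ?_ ?_
    · exact ((ring h g).valuation_le_one_iff _).1 hx.le
    · refine ((ring h g).valuation_le_one_iff _).1 ?_
      rw [map_inv₀, hx]; simp
  have hu' : ∀ (O : ValuationSubring K), O.unitGroup ≤ H → ∀ x : K, O.valuation x = 1 → M H x := by
    intro O hO x hx
    have n : x ≠ 0 := by rintro rfl; simp at hx
    refine ⟨Units.mk0 x n, hO ?_, rfl⟩
    rw [ValuationSubring.mem_unitGroup_iff]; exact hx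
  refine ⟨ring h g, hunit, ?_, ?_⟩
  · intro O' hO'
    have h1 : ∀ z : K, z ≠ 0 → ¬ M H z → z ∈ O' → A T H z := by
      intro z n hz hzO
      refine ⟨n, hz, ?_⟩
      have hlt : O'.valuation z < 1 :=
        lt_of_le_of_ne ((O'.valuation_le_one_iff _).2 hzO) (fun e => hz (hu' O' hO' z e))
      have h2 : M H (1 - z) := hu' O' hO' _ (O'.valuation.map_one_sub_of_lt hlt)
      rcases h.rig z n hz with h3 | h3
      · exact h3
      · exact absurd ((h2.div (h3.mono h.le)).to (by have := h2.ne; field_simp)) hz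
    have h2 : ∀ z : K, A T H z → z ∈ O' := by
      intro z hz
      rcases O'.mem_or_inv_mem z with h3 | h3
      · exact h3
      · exact (A.not_inv h hz (h1 _ (inv_ne_zero hz.1)
          (fun hh => hz.nH (hh.inv.to (by simp))) h3)).elim
    intro x hx
    rw [mem_ring]
    by_cases n : x = 0
    · exact Or.inl n
    by_cases hH : M H x
    · refine Or.inr (Or.inr ⟨hH, fun a ha => h1 _ (mul_ne_zero n ha.1) ?_ (mul_mem hx (h2 a ha))⟩)
      rw [mul_comm]; exact M.not_mul ha.nH hH
    · exact Or.inr (Or.inl (h1 x n hH hx))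
  · intro x hx
    change M T (1 + x)
    have hone : M H (1 + x) := hu' _ hunit _ (Valuation.map_one_add_of_lt _ hx)
    have hxO : Om T H x := ((ring h g).valuation_le_one_iff _).1 hx.le
    rcases hxO with rfl | hA | hB
    · simpa using M.one
    · simpa using (g.sign x hA).2.2
    · have hnB : ¬ B T H x⁻¹ := by
        intro hb
        have : x⁻¹ ∈ ring h g := Or.inr (Or.inr hb)
        have h3 := ((ring h g).valuation_le_one_iff _).2 this
        rw [map_inv₀, inv_le_one₀] at h3
        · exact absurd hx (not_lt.2 h3)
        · rw [zero_lt_iff]; simpa using hB.1.ne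
      obtain ⟨a, d, ha, hd, rfl⟩ := split h hB.1 hnB
      have ha' := g.sign a ha
      rcases key h ha' hd.2.2 with h4 | h4
      · exact h4.to (by ring)
      · have h5 := h4.ne
        have h6 := hone.ne
        have n := ha.1
        refine absurd ((hone.div (h4.mono h.le)).to ?_) ha'.nH
        have : (1 - -a * d) = 1 + a * d := by ring
        rw [this]; field_simp

end

end Rig
namespace Rig

theorem cyc_prime {G : Type*} [CommGroup G] {ℓ : ℕ} (hℓ : ℓ.Prime) (hp : ∀ g : G, g ^ ℓ = 1)
    [hc : IsCyclic G] {x : G} (hx : x ≠ 1) (y : G) : ∃ n : ℤ, y = x ^ n := by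
  obtain ⟨g, hg⟩ := hc.exists_generator
  obtain ⟨k, rfl⟩ := Subgroup.mem_zpowers_iff.1 (hg x)
  obtain ⟨m, rfl⟩ := Subgroup.mem_zpowers_iff.1 (hg y)
  have hgl : g ^ (ℓ : ℤ) = 1 := by rw [zpow_natCast]; exact hp g
  have hk : ¬ (ℓ : ℤ) ∣ k := by
    rintro ⟨c, rfl⟩
    apply hx
    rw [zpow_mul, hgl, one_zpow]
  obtain ⟨a, b, hab⟩ := (Prime.coprime_iff_not_dvd (Nat.prime_iff_prime_int.1 hℓ)).2 hk
  refine ⟨b * m, ?_⟩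
  have : m = ℓ * (a * m) + k * (b * m) := by linear_combination (-m) * hab
  conv_lhs => rw [this]
  rw [zpow_add, zpow_mul, hgl, one_zpow, one_mul, zpow_mul]

variable {K : Type*} [Field K]

theorem rigidT {ℓ : ℕ} (hℓ : ℓ.Prime) {T : Subgroup Kˣ}
    (hpow : ∀ x : Kˣ, x ^ ℓ ∈ T) (hHT : T = Hbold T) (x y : Kˣ) (hx : x ∉ T)
    (hy : (y : K) = 1 - x) : ∃ n : ℤ, y / x ^ n ∈ T := by
  by_contra hcon
  push Not at hcon
  have hex : ∀ z : Kˣ, z ∉ T → ∃ H : Subgroup Kˣ, ((T ≤ H ∧ IsCyclic (Kˣ ⧸ H)) ∧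
    ∀ H' : Subgroup Kˣ, T ≤ H' → IsCyclic (Kˣ ⧸ H') → IsRigid (H ⊓ H')) ∧ z ∉ H := by
    intro z hz
    rw [hHT, Hbold, Subgroup.mem_sInf] at hz
    push Not at hz
    obtain ⟨H, h1, h2⟩ := hz
    exact ⟨H, h1, h2⟩
  have hpq : ∀ H : Subgroup Kˣ, T ≤ H → ∀ g : Kˣ ⧸ H, g ^ ℓ = 1 := by
    intro H hH g
    obtain ⟨z, rfl⟩ := QuotientGroup.mk_surjective g
    rw [← QuotientGroup.mk_pow, QuotientGroup.eq_one_iff]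
    exact hH (hpow z)
  obtain ⟨H, ⟨⟨hTH, hcyc⟩, hrig⟩, hxH⟩ := hex x hx
  obtain ⟨n, hn⟩ := cyc_prime hℓ (hpq H hTH) (x := (QuotientGroup.mk x : Kˣ ⧸ H))
    (by rwa [ne_eq, QuotientGroup.eq_one_iff]) (QuotientGroup.mk y)
  have hyH : y / x ^ n ∈ H := by
    rw [← QuotientGroup.eq_one_iff, QuotientGroup.mk_div, QuotientGroup.mk_zpow, hn, div_self']
  obtain ⟨H2, ⟨⟨hTH2, hcyc2⟩, _⟩, hyH2⟩ := hex _ (hcon n)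
  have h0 : (1 : K) - x ≠ 0 := by rw [← hy]; exact y.ne_zero
  have hr := hrig H2 hTH2 hcyc2 x (fun h => hxH h.1) h0
  have hyy : Units.mk0 ((1 : K) - x) h0 = y := Units.ext hy.symm
  rw [hyy] at hr
  set G := Kˣ ⧸ (H ⊓ H2)
  set C := Subgroup.closure {(QuotientGroup.mk x : G), (QuotientGroup.mk y : G)}
  have hxC : (QuotientGroup.mk x : G) ∈ C := Subgroup.subset_closure (by simp)
  have hyC : (QuotientGroup.mk y : G) ∈ C := Subgroup.subset_closure (by simp)
  obtain ⟨m, hm⟩ := cyc_prime (G := C) hℓ (fun g => Subtype.ext (by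
      simpa using hpq (H ⊓ H2) (le_inf hTH hTH2) g.1)) (x := ⟨_, hxC⟩)
    (by
      intro h
      have := congrArg Subtype.val h
      simp only [Subgroup.coe_one] at this
      rw [QuotientGroup.eq_one_iff] at this
      exact hxH this.1) ⟨_, hyC⟩
  have hm' : (QuotientGroup.mk y : G) = QuotientGroup.mk x ^ m := congrArg Subtype.val hm
  have hmem : y / x ^ m ∈ H ⊓ H2 := by
    rw [← QuotientGroup.eq_one_iff, QuotientGroup.mk_div, QuotientGroup.mk_zpow]
    rw [div_eq_one]
    exact hm'
  have hxnm : x ^ (n - m) ∈ H := by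
    have := H.div_mem hmem.1 hyH
    have e : y / x ^ m / (y / x ^ n) = x ^ (n - m) := by
      rw [zpow_sub, div_div_div_cancel_left, div_eq_mul_inv]
    rwa [e] at this
  have hdvd : (ℓ : ℤ) ∣ n - m := by
    by_contra hnd
    obtain ⟨a, b, hab⟩ := (Prime.coprime_iff_not_dvd (Nat.prime_iff_prime_int.1 hℓ)).2 hnd
    apply hxH
    have e : x = (x ^ ℓ) ^ a * (x ^ (n - m)) ^ b := by
      rw [← zpow_natCast, ← zpow_mul, ← zpow_mul, ← zpow_add]
      have : (ℓ : ℤ) * a + (n - m) * b = 1 := by linear_combination hab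
      rw [this, zpow_one]
    rw [e]
    exact H.mul_mem (H.zpow_mem (hTH (hpow x)) a) (H.zpow_mem hxnm b)
  obtain ⟨c, hc⟩ := hdvd
  apply hyH2
  have e : y / x ^ n = y / x ^ m / (x ^ ℓ) ^ c := by
    have : n = m + ℓ * c := by linear_combination hc
    rw [this, zpow_add, zpow_mul, zpow_natCast, div_div]
  rw [e]
  exact H2.div_mem hmem.2 (H2.zpow_mem (hTH2 (hpow x)) c)

theorem exists_dual_aux {V : Type*} [AddCommGroup V] {ℓ : ℕ} [hℓ : Fact ℓ.Prime]
    [Module (ZMod ℓ) V] {x y : V} (hx : ∀ n : ℤ, x ≠ n • y) :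
    ∃ f : V →+ ZMod ℓ, f x = 1 ∧ f y = 0 := by
  have hnot : x ∉ Submodule.span (ZMod ℓ) ({y} : Set V) := by
    intro h
    obtain ⟨c, hc⟩ := Submodule.mem_span_singleton.1 h
    obtain ⟨n, rfl⟩ := ZMod.intCast_surjective c
    apply hx n
    rw [Int.cast_smul_eq_zsmul] at hc
    exact hc.symm
  obtain ⟨φ, h1, h2⟩ := Submodule.exists_le_ker_of_notMem hnot
  refine ⟨(((φ x)⁻¹ • φ : V →ₗ[ZMod ℓ] ZMod ℓ)).toAddMonoidHom, ?_, ?_⟩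
  · exact inv_mul_cancel₀ h1
  · have : φ y = 0 := h2 (Submodule.mem_span_singleton_self _)
    simp [this]

theorem exists_dual {V : Type*} [AddCommGroup V] {ℓ : ℕ} [hℓ : Fact ℓ.Prime]
    (h0 : ∀ v : V, ℓ • v = 0) {x y : V} (hx : ∀ n : ℤ, x ≠ n • y) :
    ∃ f : V →+ ZMod ℓ, f x = 1 ∧ f y = 0 := by
  let inst : Module (ZMod ℓ) V := AddCommGroup.zmodModule h0
  exact exists_dual_aux hx

theorem exists_chars {G : Type*} [CommGroup G] {ℓ : ℕ} [hℓ : Fact ℓ.Prime] {T : Subgroup G}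
    (hpow : ∀ x : G, x ^ ℓ ∈ T) {x y : G} (hx : ∀ n : ℤ, x / y ^ n ∉ T) :
    ∃ f : G → ZMod ℓ, (∀ a b, f (a * b) = f a + f b) ∧ (∀ t ∈ T, f t = 0) ∧ f x = 1 ∧ f y = 0 := by
  let q : G → Additive (G ⧸ T) := fun g => Additive.ofMul (QuotientGroup.mk g)
  have hq : ∀ a b, q (a * b) = q a + q b := fun a b => rfl
  obtain ⟨f, h1, h2⟩ := exists_dual (V := Additive (G ⧸ T)) (ℓ := ℓ) (x := q x) (y := q y) (by
    intro z
    obtain ⟨w, hw⟩ := QuotientGroup.mk_surjective z.toMul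
    apply Additive.toMul.injective
    rw [toMul_nsmul, toMul_zero, ← hw, ← QuotientGroup.mk_pow, QuotientGroup.eq_one_iff]
    exact hpow w) (by
    intro n hn
    apply hx n
    rw [← QuotientGroup.eq_one_iff, QuotientGroup.mk_div, QuotientGroup.mk_zpow, div_eq_one]
    exact hn)
  refine ⟨fun g => f (q g), ?_, ?_, h1, h2⟩
  · intro a b
    simp only [hq, map_add]
  · intro t ht
    have : q t = 0 := by
      change (QuotientGroup.mk t : G ⧸ T) = 1
      rwa [QuotientGroup.eq_one_iff]
    simp [this]

/-- three points of the affine plane are collinear -/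
def Col {F : Type*} [Field F] (a1 a2 b1 b2 c1 c2 : F) : Prop :=
  (a1 - b1) * (c2 - b2) = (a2 - b2) * (c1 - b1)

/-- The plane argument. -/
theorem plane {ℓ : ℕ} [hℓ : Fact ℓ.Prime] (f g : K → ZMod ℓ)
    (hf1 : f 1 = 0) (hg1 : g 1 = 0)
    (hneg : ∀ a : K, a ≠ 0 → f (-a) = f a ∧ g (-a) = g a)
    (hcol : ∀ a b : K, a ≠ 0 → b ≠ 0 → a + b ≠ 0 →
      Col (f a) (g a) (f b) (g b) (f (a + b)) (g (a + b)))
    {x y : K} (hx0 : x ≠ 0) (hy0 : y ≠ 0) (hfx : f x = 1) (hgx : g x = 0)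
    (hfy : f y = 0) (hgy : g y = 1) (hx1 : 1 + x ≠ 0) (hy1 : 1 + y ≠ 0)
    (hgx1 : g (1 + x) = 0) (hfy1 : f (1 + y) = 0) (hi0 : f (1 + x) ≠ 0) (hi1 : f (1 + x) ≠ 1)
    (hj0 : g (1 + y) ≠ 0) (hj1 : g (1 + y) ≠ 1) : False := by
  have hz : ∀ a b : K, a ≠ 0 → a + b = 0 → f b = f a ∧ g b = g a := by
    intro a b ha hab
    have : b = -a := by linear_combination hab
    rw [this]; exact hneg a ha
  set i := f (1 + x) with hi
  set j := g (1 + y) with hj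
  have hi1' : 1 - i ≠ 0 := fun h => hi1 (by linear_combination -h)
  have hj1' : 1 - j ≠ 0 := fun h => hj1 (by linear_combination -h)
  obtain ⟨α, hα⟩ : ∃ α, α = i / (1 - i) := ⟨_, rfl⟩
  obtain ⟨β, hβ⟩ : ∃ β, β = j / (1 - j) := ⟨_, rfl⟩
  have hα0 : α ≠ 0 := by rw [hα]; exact div_ne_zero hi0 hi1'
  have hβ0 : β ≠ 0 := by rw [hβ]; exact div_ne_zero hj0 hj1'
  have hαi : (1 + α) * i = α := by rw [hα]; field_simp; ring
  have hβj : (1 + β) * j = β := by rw [hβ]; field_simp; ring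
  have hα1 : 1 + α ≠ 0 := fun h => hα0 (by rw [← hαi, h, zero_mul])
  have hβ1 : 1 + β ≠ 0 := fun h => hβ0 (by rw [← hβj, h, zero_mul])
  have main : ∀ n : ℕ, ((n + 1 : ℕ) : K) + x ≠ 0 ∧ ((n + 1 : ℕ) : K) + y ≠ 0 ∧
      ((n + 1 : ℕ) : K) + x + y ≠ 0 ∧
      ((n + 1 : ℕ) + α) * f ((n + 1 : ℕ) + x) = α ∧ g ((n + 1 : ℕ) + x) = 0 ∧
      ((n + 1 : ℕ) + β) * g ((n + 1 : ℕ) + y) = β ∧ f ((n + 1 : ℕ) + y) = 0 ∧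
      ((n + 1 : ℕ) + α + β) * f ((n + 1 : ℕ) + x + y) = α ∧
      ((n + 1 : ℕ) + α + β) * g ((n + 1 : ℕ) + x + y) = β := by
    intro n
    induction n with
    | zero =>
      simp only [zero_add, Nat.cast_one]
      have h1 : 1 + x + y ≠ 0 := by
        intro h
        have := (hz _ _ hx1 h).2
        rw [hgy, hgx1] at this; exact one_ne_zero this
      have c1 := hcol (1 + x) y hx1 hy0 h1
      have c2 := hcol (1 + y) x hy1 hx0 (by convert h1 using 1; ring)
      have e : 1 + y + x = 1 + x + y := by ring
      rw [e] at c2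
      rw [hfy, hgy, hgx1, ← hi] at c1
      rw [hfx, hgx, hfy1, ← hj] at c2
      unfold Col at c1 c2
      generalize f (1 + x + y) = p at *
      generalize g (1 + x + y) = q at *
      have d1 : p + i * q = i := by linear_combination c1
      have d2 : j * p + q = j := by linear_combination -c2
      have d3 : 1 + α + β = (1 - i * j) / ((1 - i) * (1 - j)) := by
        rw [hα, hβ]; field_simp; ring
      refine ⟨hx1, hy1, h1, hαi, hgx1, hβj, hfy1, ?_, ?_⟩
      · rw [d3, hα]; field_simp; linear_combination d1 - i * d2
      · rw [d3, hβ]; field_simp; linear_combination d2 - j * d1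
    | succ n ih =>
      obtain ⟨u1, u2, u3, v1, v2, v3, v4, v5, v6⟩ := ih
      set N : K := ((n + 1 : ℕ) : K) with hN
      set M : ZMod ℓ := ((n + 1 : ℕ) : ZMod ℓ) with hM
      have eN : ((n + 1 + 1 : ℕ) : K) = N + 1 := by push_cast; simp [hN]
      have eM : ((n + 1 + 1 : ℕ) : ZMod ℓ) = M + 1 := by push_cast; simp [hM]
      rw [eN, eM]
      have k1 : M + α ≠ 0 := fun h => hα0 (by rw [← v1, h, zero_mul])
      have k2 : M + β ≠ 0 := fun h => hβ0 (by rw [← v3, h, zero_mul])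
      have k3 : M + α + β ≠ 0 := fun h => hα0 (by rw [← v5, h, zero_mul])
      have l1 : f (N + x) ≠ 0 := fun h => hα0 (by rw [← v1, h, mul_zero])
      have l2 : g (N + y) ≠ 0 := fun h => hβ0 (by rw [← v3, h, mul_zero])
      have w1 : N + 1 + x ≠ 0 := by
        intro h
        have := (hz (N + x) 1 u1 (by linear_combination h)).1
        rw [hf1] at this; exact l1 this.symm
      have w2 : N + 1 + y ≠ 0 := by
        intro h
        have := (hz (N + y) 1 u2 (by linear_combination h)).2
        rw [hg1] at this; exact l2 this.symm
      have w3 : N + 1 + x + y ≠ 0 := by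
        intro h
        have := (hz (N + x) (1 + y) u1 (by linear_combination h)).1
        rw [hfy1] at this; exact l1 this.symm
      have e1 : (N + x) + (1 + y) = N + 1 + x + y := by ring
      have e2 : 1 + (N + x + y) = N + 1 + x + y := by ring
      have e3 : 1 + (N + x) = N + 1 + x := by ring
      have e4 : 1 + (N + y) = N + 1 + y := by ring
      have e5 : (N + 1 + y) + x = N + 1 + x + y := by ring
      have c1 := hcol (N + x) (1 + y) u1 hy1 (by rwa [e1])
      have c2 := hcol 1 (N + x + y) one_ne_zero u3 (by rwa [e2])
      have c3 := hcol 1 (N + x) one_ne_zero u1 (by rwa [e3])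
      have c4 := hcol 1 (N + y) one_ne_zero u2 (by rwa [e4])
      have c5 := hcol (N + 1 + x) y w1 hy0 w3
      have c6 := hcol (N + 1 + y) x w2 hx0 (by rwa [e5])
      rw [e1, hfy1, v2, ← hj] at c1
      rw [e2, hf1, hg1] at c2
      rw [e3, hf1, hg1, v2] at c3
      rw [e4, hf1, hg1, v4] at c4
      rw [hfy, hgy] at c5
      rw [e5, hfx, hgx] at c6
      unfold Col at c1 c2 c3 c4 c5 c6
      generalize f (N + 1 + x + y) = p at *
      generalize g (N + 1 + x + y) = q at *
      generalize f (N + 1 + x) = r at *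
      generalize g (N + 1 + x) = r' at *
      generalize f (N + 1 + y) = s' at *
      generalize g (N + 1 + y) = s at *
      generalize f (N + x) = P at *
      generalize g (N + y) = Q at *
      generalize f (N + x + y) = R at *
      generalize g (N + x + y) = S at *
      have hr' : r' = 0 := by
        have : P * r' = 0 := by linear_combination -c3
        exact (mul_eq_zero.1 this).resolve_left l1
      have hs' : s' = 0 := by
        have : Q * s' = 0 := by linear_combination c4
        exact (mul_eq_zero.1 this).resolve_left l2
      subst hr' hs'
      have d0 : R * q = S * p := by linear_combination -c2
      have d : α * q = β * p := by
        linear_combination (M + α + β) * d0 - q * v5 + p * v6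
      have d1 : P * q + j * p = P * j := by linear_combination c1
      have d2 : (1 + β) * α * q + (M + α) * β * p = α * β := by
        linear_combination (1 + β) * (M + α) * d1 - (1 + β) * (q - j) * v1
          - ((M + α) * p - α) * hβj
      have d3 : (M + 1 + α + β) * p = α := by
        apply mul_left_cancel₀ hβ0
        linear_combination d2 - (1 + β) * d
      have d4 : (M + 1 + α + β) * q = β := by
        apply mul_left_cancel₀ hα0
        linear_combination (M + 1 + α + β) * d + β * d3
      refine ⟨w1, w2, w3, ?_, rfl, ?_, rfl, d3, d4⟩
      · linear_combination (M + 1 + α + β) * (-c5) + d3 + r * d4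
      · linear_combination (M + 1 + α + β) * (c6) + d4 + s * d3
  obtain ⟨n, hn⟩ : ∃ n : ℕ, ((n + 1 : ℕ) : ZMod ℓ) = -α := by
    refine ⟨(-α - 1).val, ?_⟩
    push_cast
    rw [ZMod.natCast_val, ZMod.cast_id]; ring
  have := (main n).2.2.2.1
  rw [hn] at this
  apply hα0
  rw [← this]; ring

end Rig
namespace Rig

theorem char_div {G F : Type*} [CommGroup G] [Field F] {f : G → F}
    (hf : ∀ a b, f (a * b) = f a + f b) (a b : G) : f (a / b) = f a - f b := by
  have := hf (a / b) b
  rw [div_mul_cancel] at this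
  rw [this]; ring

theorem char_zpow {G F : Type*} [CommGroup G] [Field F] {f : G → F}
    (hf : ∀ a b, f (a * b) = f a + f b) (a : G) (n : ℤ) : f (a ^ n) = n * f a := by
  have h := map_zsmul (AddMonoidHom.mk' (fun z : Additive G => f z.toMul)
    (fun a b => hf a.toMul b.toMul)) n (Additive.ofMul a)
  simpa using h

variable {K : Type*} [Field K]

/-- `x` is bad if `1 + x` is not in `T ∪ xT` -/
def Bad (T : Subgroup Kˣ) (x : Kˣ) : Prop :=
  x ∉ T ∧ ¬ (M T (1 - (x : K)) ∨ M T ((1 - (x : K)) / x))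

theorem not_both_bad {ℓ : ℕ} (hℓ : ℓ.Prime) {T : Subgroup Kˣ}
    (hpow : ∀ x : Kˣ, x ^ ℓ ∈ T) (hneg : (-1 : Kˣ) ∈ T) (hHT : T = Hbold T)
    {x y : Kˣ} (hx : Bad T x) (hy : Bad T y) : ∃ n : ℤ, x / y ^ n ∈ T := by
  have : Fact ℓ.Prime := ⟨hℓ⟩
  by_contra hcon
  push Not at hcon
  have hpow' : ∀ (z : Kˣ) (c : ℤ), z ^ ((ℓ : ℤ) * c) ∈ T := fun z c => by
    rw [zpow_mul, zpow_natCast]; exact T.zpow_mem (hpow z) c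
  have hcon2 : ∀ n : ℤ, y / x ^ n ∉ T := by
    intro n hn
    have hnd : ¬ (ℓ : ℤ) ∣ n := by
      rintro ⟨c, rfl⟩
      apply hy.1
      have := T.mul_mem hn (hpow' x c)
      rwa [div_mul_cancel] at this
    obtain ⟨a, b, hab⟩ := (Prime.coprime_iff_not_dvd (Nat.prime_iff_prime_int.1 hℓ)).2 hnd
    apply hcon b
    have e : x / y ^ b = x ^ ((ℓ : ℤ) * a) / (y / x ^ n) ^ b := by
      rw [div_zpow, ← zpow_mul, div_div_eq_mul_div, ← zpow_add]
      have : (ℓ : ℤ) * a + n * b = 1 := by linear_combination hab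
      rw [this, zpow_one]
    rw [e]
    exact T.div_mem (hpow' x a) (T.zpow_mem hn b)
  obtain ⟨f, fm, fT, fx, fy⟩ := exists_chars hpow hcon
  obtain ⟨g, gm, gT, gy, gx⟩ := exists_chars hpow hcon2
  classical
  let E : (Kˣ → ZMod ℓ) → K → ZMod ℓ := fun f a => if h : a = 0 then 0 else f (Units.mk0 a h)
  have Eu : ∀ (f : Kˣ → ZMod ℓ) (a : K) (u : Kˣ), (u : K) = a → E f a = f u := by
    rintro f a u rfl
    simp [E]
  have negT : ∀ u : Kˣ, u ∈ T → -u ∈ T := fun u hu => by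
    have := T.mul_mem hneg hu; rwa [neg_one_mul] at this
  have cneg : ∀ {f : Kˣ → ZMod ℓ}, (∀ a b, f (a * b) = f a + f b) → (∀ t ∈ T, f t = 0) →
      ∀ u, f (-u) = f u := by
    intro f fm fT u
    rw [← neg_one_mul, fm, fT _ hneg, zero_add]
  have one : ∀ z : Kˣ, Bad T z → ∃ w : Kˣ, (w : K) = 1 - z ∧ ∃ n : ℤ, w / z ^ n ∈ T ∧
      (n : ZMod ℓ) ≠ 0 ∧ (n : ZMod ℓ) ≠ 1 := by
    intro z hz
    have h1 : (1 : K) - z ≠ 0 := by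
      intro h
      apply hz.1
      have : z = 1 := Units.ext (by simpa using (sub_eq_zero.1 h).symm)
      rw [this]; exact T.one_mem
    obtain ⟨n, hn⟩ := rigidT hℓ hpow hHT z (Units.mk0 _ h1) hz.1 rfl
    refine ⟨Units.mk0 _ h1, rfl, n, hn, ?_, ?_⟩
    · intro h
      rw [ZMod.intCast_zmod_eq_zero_iff_dvd] at h
      obtain ⟨c, rfl⟩ := h
      have h2 := T.mul_mem hn (hpow' z c)
      rw [div_mul_cancel] at h2
      exact hz.2 (Or.inl ⟨_, h2, rfl⟩)
    · intro h
      have h' : ((n - 1 : ℤ) : ZMod ℓ) = 0 := by push_cast; rw [h]; ring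
      rw [ZMod.intCast_zmod_eq_zero_iff_dvd] at h'
      obtain ⟨c, hc⟩ := h'
      have h2 := T.mul_mem hn (hpow' z c)
      rw [← hc, zpow_sub, zpow_one, ← mul_assoc, div_mul_cancel, ← div_eq_mul_inv] at h2
      exact hz.2 (Or.inr ⟨_, h2, by simp⟩)
  obtain ⟨wx, hwx, n, hn, hn0, hn1⟩ := one x hx
  obtain ⟨wy, hwy, m, hm, hm0, hm1⟩ := one y hy
  have ff : ∀ {f : Kˣ → ZMod ℓ}, (∀ a b, f (a * b) = f a + f b) → (∀ t ∈ T, f t = 0) →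
      ∀ u v (n : ℤ), u / v ^ n ∈ T → f u = n * f v := by
    intro f fm fT u v n h
    have := fT _ h
    rw [char_div fm, char_zpow fm] at this
    linear_combination this
  have hwx' : (wx : K) = 1 + ((-x : Kˣ) : K) := by rw [hwx]; push_cast; ring
  have hwy' : (wy : K) = 1 + ((-y : Kˣ) : K) := by rw [hwy]; push_cast; ring
  refine plane (ℓ := ℓ) (E f) (E g) (x := ((-x : Kˣ) : K)) (y := ((-y : Kˣ) : K))
    ?_ ?_ ?_ ?_ (Units.ne_zero _) (Units.ne_zero _) ?_ ?_ ?_ ?_ ?_ ?_ ?_ ?_ ?_ ?_ ?_ ?_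
  · rw [Eu f 1 1 (by simp)]; exact fT _ T.one_mem
  · rw [Eu g 1 1 (by simp)]; exact gT _ T.one_mem
  · intro a ha
    rw [Eu f (-a) (-Units.mk0 a ha) (by simp), Eu f a (Units.mk0 a ha) rfl,
      Eu g (-a) (-Units.mk0 a ha) (by simp), Eu g a (Units.mk0 a ha) rfl]
    exact ⟨cneg fm fT _, cneg gm gT _⟩
  · intro a b ha hb hab
    obtain ⟨u, rfl⟩ : ∃ u : Kˣ, (u : K) = a := ⟨Units.mk0 a ha, rfl⟩
    obtain ⟨v, rfl⟩ : ∃ u : Kˣ, (u : K) = b := ⟨Units.mk0 b hb, rfl⟩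
    obtain ⟨w, hw⟩ : ∃ w : Kˣ, (w : K) = u + v := ⟨Units.mk0 _ hab, rfl⟩
    rw [Eu f _ w hw, Eu g _ w hw, Eu f _ u rfl, Eu g _ u rfl, Eu f _ v rfl, Eu g _ v rfl]
    unfold Col
    by_cases h : u / v ∈ T
    · have h1 := fT _ h
      have h2 := gT _ h
      rw [char_div fm] at h1
      rw [char_div gm] at h2
      rw [h1, h2]; ring
    · have hnT : -(u / v) ∉ T := fun hh => h (by have := negT _ hh; rwa [neg_neg] at this)
      obtain ⟨k, hk⟩ := rigidT hℓ hpow hHT (-(u / v)) (w / v) hnT (by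
        have := v.ne_zero
        push_cast
        rw [hw]; field_simp; ring)
      have h1 := ff fm fT _ _ k hk
      have h2 := ff gm gT _ _ k hk
      rw [cneg fm fT, char_div fm, char_div fm] at h1
      rw [cneg gm gT, char_div gm, char_div gm] at h2
      rw [h1, h2]; ring
  · rw [Eu f _ _ rfl, cneg fm fT, fx]
  · rw [Eu g _ _ rfl, cneg gm gT, gx]
  · rw [Eu f _ _ rfl, cneg fm fT, fy]
  · rw [Eu g _ _ rfl, cneg gm gT, gy]
  · rw [← hwx']; exact wx.ne_zero
  · rw [← hwy']; exact wy.ne_zero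
  · rw [Eu g _ _ hwx', ff gm gT _ _ n hn, gx, mul_zero]
  · rw [Eu f _ _ hwy', ff fm fT _ _ m hm, fy, mul_zero]
  · rw [Eu f _ _ hwx', ff fm fT _ _ n hn, fx, mul_one]; exact hn0
  · rw [Eu f _ _ hwx', ff fm fT _ _ n hn, fx, mul_one]; exact hn1
  · rw [Eu g _ _ hwy', ff gm gT _ _ m hm, gy, mul_one]; exact hm0
  · rw [Eu g _ _ hwy', ff gm gT _ _ m hm, gy, mul_one]; exact hm1

theorem mem_sup_zpow {G : Type*} [CommGroup G] {T : Subgroup G} {u z : G} :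
    z ∈ T ⊔ Subgroup.zpowers u ↔ ∃ n : ℤ, z / u ^ n ∈ T := by
  rw [Subgroup.mem_sup]
  constructor
  · rintro ⟨t, ht, w, hw, rfl⟩
    obtain ⟨n, rfl⟩ := Subgroup.mem_zpowers_iff.1 hw
    exact ⟨n, by simpa using ht⟩
  · rintro ⟨n, hn⟩
    exact ⟨_, hn, u ^ n, Subgroup.mem_zpowers_iff.2 ⟨n, rfl⟩, by simp⟩

theorem cyc_sup {G : Type*} [CommGroup G] (T : Subgroup G) (u : G) :
    IsCyclic (↥(T ⊔ Subgroup.zpowers u) ⧸ T.subgroupOf (T ⊔ Subgroup.zpowers u)) := by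
  have hu : u ∈ T ⊔ Subgroup.zpowers u := Subgroup.mem_sup_right (Subgroup.mem_zpowers u)
  refine ⟨⟨QuotientGroup.mk ⟨u, hu⟩, fun q => ?_⟩⟩
  obtain ⟨z, rfl⟩ := QuotientGroup.mk_surjective q
  obtain ⟨n, hn⟩ := mem_sup_zpow.1 z.2
  refine Subgroup.mem_zpowers_iff.2 ⟨n, ?_⟩
  rw [← QuotientGroup.mk_zpow, eq_comm, ← div_eq_one, ← QuotientGroup.mk_div,
    QuotientGroup.eq_one_iff, Subgroup.mem_subgroupOf]
  simpa using hn

theorem exists_pair {ℓ : ℕ} (hℓ : ℓ.Prime) {T : Subgroup Kˣ}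
    (hpow : ∀ x : Kˣ, x ^ ℓ ∈ T) (hneg : (-1 : Kˣ) ∈ T) (hHT : T = Hbold T) :
    ∃ u : Kˣ, Pair T (T ⊔ Subgroup.zpowers u) ∧ (ℓ = 2 → u = 1) := by
  have mk : ∀ u : Kˣ, (∀ x : Kˣ, Bad T x → x ∈ T ⊔ Subgroup.zpowers u) →
      Pair T (T ⊔ Subgroup.zpowers u) := by
    intro u hu
    refine ⟨le_sup_left, ⟨-1, hneg, by simp⟩, ?_⟩
    intro x hx0 hx
    by_contra hc
    apply hx
    have hxm : Units.mk0 x hx0 ∉ T := fun h => hx ⟨_, (le_sup_left : T ≤ _) h, rfl⟩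
    exact ⟨Units.mk0 x hx0, hu _ ⟨hxm, hc⟩, rfl⟩
  by_cases h2 : ℓ = 2
  · refine ⟨1, mk 1 ?_, fun _ => rfl⟩
    intro x hx
    exfalso
    subst h2
    apply hx.2
    have h1 : (1 : K) - x ≠ 0 := by
      intro h
      apply hx.1
      have : x = 1 := Units.ext (by simpa using (sub_eq_zero.1 h).symm)
      rw [this]; exact T.one_mem
    obtain ⟨n, hn⟩ := rigidT hℓ hpow hHT x (Units.mk0 _ h1) hx.1 rfl
    rcases Int.even_or_odd' n with ⟨c, rfl | rfl⟩
    · left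
      have := T.mul_mem hn (T.zpow_mem (hpow x) c)
      rw [← zpow_natCast x 2, ← zpow_mul] at this
      exact ⟨_, this, by simp⟩
    · right
      have := T.mul_mem hn (T.zpow_mem (hpow x) c)
      rw [← zpow_natCast x 2, ← zpow_mul, zpow_add, zpow_one] at this
      refine ⟨_, this, ?_⟩
      have := x.ne_zero
      push_cast
      simp only [Units.val_mk0]
      field_simp
  · by_cases hb : ∃ u, Bad T u
    · obtain ⟨u, hu⟩ := hb
      refine ⟨u, mk u ?_, fun h => absurd h h2⟩
      intro x hx
      exact mem_sup_zpow.2 (not_both_bad hℓ hpow hneg hHT hx hu)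
    · push Not at hb
      exact ⟨1, mk 1 (fun x hx => absurd hx (hb x)), fun _ => rfl⟩

theorem main {ℓ : ℕ} (hℓ : ℓ.Prime) {T : Subgroup Kˣ}
    (hpow : ∀ x : Kˣ, x ^ ℓ ∈ T) (hneg : (-1 : Kˣ) ∈ T) (hHT : T = Hbold T) :
    ∃ u : Kˣ, Pair T (T ⊔ Subgroup.zpowers u) ∧ Good T (T ⊔ Subgroup.zpowers u) := by
  obtain ⟨u, hP, h2⟩ := exists_pair hℓ hpow hneg hHT
  rcases dich hP with hg | ⟨x, hx⟩
  · exact ⟨u, hP, hg⟩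
  obtain ⟨z, rfl⟩ : ∃ z : Kˣ, (z : K) = x := ⟨Units.mk0 x hx.ne, rfl⟩
  have hsq : z * z ∈ T ⊔ Subgroup.zpowers u := by
    rw [← M_coe]; simpa using hx.sq
  have hnz : z ∉ T ⊔ Subgroup.zpowers u := fun h => hx.nH (M_coe.2 h)
  rcases hℓ.eq_two_or_odd' with rfl | hodd
  · obtain rfl := h2 rfl
    simp only [Subgroup.zpowers_one_eq_bot, sup_bot_eq] at *
    have hle : T ≤ T ⊔ Subgroup.zpowers z := le_sup_left
    have hP' : Pair T (T ⊔ Subgroup.zpowers z) :=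
      ⟨hle, hP.neg, fun x h0 hx => hP.rig x h0 (fun h => hx (h.mono hle))⟩
    refine ⟨z, hP', good_of_exc hP hx ?_ hP'⟩
    intro a
    constructor
    · rintro ⟨t, ht, rfl⟩
      obtain ⟨n, hn⟩ := mem_sup_zpow.1 ht
      rcases Int.even_or_odd' n with ⟨c, rfl | rfl⟩
      · left
        have := T.mul_mem hn (T.zpow_mem (hpow z) c)
        rw [← zpow_natCast z 2, ← zpow_mul] at this
        exact ⟨_, this, by simp⟩
      · right
        have := T.mul_mem hn (T.zpow_mem (hpow z) c)
        rw [← zpow_natCast z 2, ← zpow_mul, zpow_add, zpow_one] at this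
        refine ⟨_, this, ?_⟩
        have := z.ne_zero
        push_cast
        field_simp
    · rintro (h | h)
      · exact h.mono hle
      · have hz : M (T ⊔ Subgroup.zpowers z) (z : K) :=
          M_coe.2 (Subgroup.mem_sup_right (Subgroup.mem_zpowers z))
        exact ((h.mono hle).mul hz).to (by have := z.ne_zero; field_simp)
  · exfalso
    obtain ⟨k, rfl⟩ := hodd
    apply hnz
    have h1 : z ^ (2 * k + 1) ∈ T ⊔ Subgroup.zpowers u := (le_sup_left : T ≤ _) (hpow z)
    have h3 := Subgroup.div_mem _ h1 (Subgroup.pow_mem _ hsq k)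
    have e : z ^ (2 * k + 1) / (z * z) ^ k = z := by
      rw [← pow_two, ← pow_mul, pow_succ, mul_div_cancel_left]
    rwa [e] at h3

end Rig

/-- if `K^{×ℓ} ⊆ T`, `-1 ∈ T` and `T = 𝐇(T)`, then there is a subgroup
`T ≤ H ≤ K^×` with `H/T` cyclic, `H` valuative, and denoting `v = v_H` the coarsest
valuation with `O_v^× ⊆ H` (so `O_v` is the largest valuation subring with unit group
contained in `H`), one has `1 + m_v ⊆ T` and `O_v^× ⊆ H`. -/
theorem stmt_6 {K : Type*} [Field K] (ℓ : ℕ) (hℓ : ℓ.Prime) (T : Subgroup Kˣ)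
    (hpow : ∀ x : Kˣ, x ^ ℓ ∈ T) (hneg : (-1 : Kˣ) ∈ T)
    (hHT : T = Hbold T) :
    ∃ H : Subgroup Kˣ, T ≤ H ∧ IsCyclic (↥H ⧸ T.subgroupOf H) ∧
      ∃ O : ValuationSubring K, O.unitGroup ≤ H ∧
        (∀ O' : ValuationSubring K, O'.unitGroup ≤ H → O' ≤ O) ∧
        (∀ a : K, O.valuation a < 1 → ∃ t ∈ T, ((t : Kˣ) : K) = 1 + a) := by
  obtain ⟨u, hP, hG⟩ := Rig.main hℓ hpow hneg hHT
  exact ⟨_, le_sup_left, Rig.cyc_sup T u, Rig.final hP hG⟩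
end

section
/- Let K be an arbitrary field, ℓ a prime, and T a subgroup of K^× with K^{×ℓ} ⊆ T and −1 ∈ T. Assume T ≠ 𝐇(T) and set H = 𝐇(T). Then H is valuative and, denoting by v = v_H the coarsest valuation with O_v^× ⊆ H, one has 1 + m_v ⊆ T and T·O_v^× = H. -/
/-- characters of `Kˣ/T` with values in `ZMod ℓ`. -/
def Chr {K : Type*} [Field K] (ℓ : ℕ) (T : Subgroup Kˣ) (f : Kˣ → ZMod ℓ) : Prop :=
  (∀ x y, f (x * y) = f x + f y) ∧ ∀ t ∈ T, f t = 0

/-- central characters. -/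
def Cen {K : Type*} [Field K] (ℓ : ℕ) (T : Subgroup Kˣ) (f : Kˣ → ZMod ℓ) : Prop :=
  Chr ℓ T f ∧ ∀ g, Chr ℓ T g → ∀ x y : Kˣ, (x : K) + y = 1 → f x * g y = f y * g x

section part1

variable {K : Type*} [Field K] {ℓ : ℕ} {T : Subgroup Kˣ} {f g : Kˣ → ZMod ℓ}

theorem Chr.one (h : Chr ℓ T f) : f 1 = 0 := h.2 1 T.one_mem

theorem Chr.inv (h : Chr ℓ T f) (x : Kˣ) : f x⁻¹ = - f x := by
  have := h.1 x x⁻¹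
  rw [mul_inv_cancel, h.one] at this
  linear_combination -this

theorem Chr.zpow (h : Chr ℓ T f) (x : Kˣ) (n : ℤ) : f (x ^ n) = n * f x := by
  let F : Kˣ →* Multiplicative (ZMod ℓ) :=
    { toFun := fun x => Multiplicative.ofAdd (f x)
      map_one' := by simp [h.one]
      map_mul' := fun x y => by simp [h.1] }
  have := map_zpow F x n
  have h2 := congrArg Multiplicative.toAdd this
  simpa [F] using h2

theorem Chr.mono {U : Subgroup Kˣ} (hTU : T ≤ U) (h : Chr ℓ U f) : Chr ℓ T f :=
  ⟨h.1, fun t ht => h.2 t (hTU ht)⟩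

/-- kernel. -/
def Chr.ker (h : Chr ℓ T f) : Subgroup Kˣ where
  carrier := {x | f x = 0}
  one_mem' := h.one
  mul_mem' := fun {a b} ha hb => by
    simp only [Set.mem_ofPred_eq] at *
    rw [h.1, ha, hb, add_zero]
  inv_mem' := fun {a} ha => by
    simp only [Set.mem_ofPred_eq] at *
    rw [h.inv, ha, neg_zero]

theorem Chr.mem_ker (h : Chr ℓ T f) (x : Kˣ) : x ∈ h.ker ↔ f x = 0 := Iff.rfl

theorem Chr.le_ker (h : Chr ℓ T f) : T ≤ h.ker := fun t ht => h.2 t ht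

theorem exists_dual_aux1 (ℓ : ℕ) {Q : Type*} [AddCommGroup Q] [Fact ℓ.Prime] [Module (ZMod ℓ) Q]
    (x : Q) (hx : x ≠ 0) : ∃ φ : Q →+ ZMod ℓ, φ x ≠ 0 := by
  have h : ∃ φ : Module.Dual (ZMod ℓ) Q, φ x ≠ 0 := by
    by_contra hc
    push Not at hc
    exact hx ((Module.forall_dual_apply_eq_zero_iff (ZMod ℓ) x).1 hc)
  obtain ⟨φ, hφ⟩ := h
  exact ⟨φ.toAddMonoidHom, hφ⟩

theorem exists_dual_aux0 {Q : Type*} [AddCommGroup Q] (hℓ : ℓ.Prime) (key : ∀ r : Q, ℓ • r = 0)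
    (x : Q) (hx : x ≠ 0) : ∃ φ : Q →+ ZMod ℓ, φ x ≠ 0 := by
  have : Fact ℓ.Prime := ⟨hℓ⟩
  let : Module (ZMod ℓ) Q := AddCommGroup.zmodModule key
  exact exists_dual_aux1 ℓ x hx

theorem exists_dual_aux {Q : Type*} [CommGroup Q] (hℓ : ℓ.Prime) (key : ∀ r : Q, r ^ ℓ = 1)
    (x : Q) (hx : x ≠ 1) : ∃ φ : Additive Q →+ ZMod ℓ, φ (Additive.ofMul x) ≠ 0 :=
  exists_dual_aux0 hℓ (fun q => key (Additive.toMul q)) _ hx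

theorem Chr.exists_ne (hℓ : ℓ.Prime) (hpow : ∀ x : Kˣ, x ^ ℓ ∈ T) {x : Kˣ} (hx : x ∉ T) :
    ∃ f, Chr ℓ T f ∧ f x ≠ 0 := by
  have : Fact ℓ.Prime := ⟨hℓ⟩
  have key : ∀ r : Kˣ ⧸ T, r ^ ℓ = 1 := by
    intro r
    induction r using QuotientGroup.induction_on with
    | H z => rw [← QuotientGroup.mk_pow]; exact (QuotientGroup.eq_one_iff _).2 (hpow z)
  obtain ⟨φ, hφ⟩ := exists_dual_aux hℓ key (QuotientGroup.mk x : Kˣ ⧸ T)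
    (fun h => hx ((QuotientGroup.eq_one_iff x).1 h))
  refine ⟨fun z => φ (Additive.ofMul (QuotientGroup.mk z : Kˣ ⧸ T)), ⟨?_, ?_⟩, hφ⟩
  · intro a b
    beta_reduce
    rw [QuotientGroup.mk_mul, ofMul_mul, map_add]
  · intro t ht
    beta_reduce
    rw [(QuotientGroup.eq_one_iff t).2 ht, ofMul_one, map_zero]

theorem Chr.cyclic (hℓ : ℓ.Prime) (h : Chr ℓ T f) : IsCyclic (Kˣ ⧸ h.ker) := by
  have : Fact ℓ.Prime := ⟨hℓ⟩
  by_cases hx : ∃ x, f x ≠ 0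
  · obtain ⟨x, hx⟩ := hx
    refine ⟨⟨QuotientGroup.mk x, fun q => ?_⟩⟩
    induction q using QuotientGroup.induction_on with
    | H y =>
      refine ⟨((f y / f x).val : ℤ), ?_⟩
      show (QuotientGroup.mk x : Kˣ ⧸ h.ker) ^ _ = _
      rw [← QuotientGroup.mk_zpow, QuotientGroup.eq, h.mem_ker, h.1, h.inv, h.zpow]
      simp
      field_simp
      ring
  · push Not at hx
    refine ⟨⟨1, fun q => ?_⟩⟩
    induction q using QuotientGroup.induction_on with
    | H y =>
      refine ⟨0, ?_⟩
      simp only [zpow_zero]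
      exact ((QuotientGroup.eq_one_iff y).2 (hx y)).symm

theorem Chr.of_cyclic (hℓ : ℓ.Prime) (hpow : ∀ x : Kˣ, x ^ ℓ ∈ T)
    (hc : IsCyclic (Kˣ ⧸ T)) : ∃ f, ∃ h : Chr ℓ T f, h.ker = T := by
  have : Fact ℓ.Prime := ⟨hℓ⟩
  by_cases ht : ∃ x, x ∉ T
  · obtain ⟨x, hx⟩ := ht
    obtain ⟨f, hf, hfx⟩ := Chr.exists_ne hℓ hpow hx
    refine ⟨f, hf, le_antisymm ?_ hf.le_ker⟩
    intro y hy
    obtain ⟨e, he⟩ := hc.exists_generator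
    obtain ⟨e, rfl⟩ := QuotientGroup.mk_surjective e
    have hh : ∀ z : Kˣ, ∃ n : ℤ, (e ^ n)⁻¹ * z ∈ T := by
      intro z
      obtain ⟨n, hn⟩ := he (QuotientGroup.mk z)
      refine ⟨n, ?_⟩
      rw [← QuotientGroup.eq, QuotientGroup.mk_zpow]
      exact hn
    have hf2 : ∀ (z : Kˣ) (n : ℤ), (e ^ n)⁻¹ * z ∈ T → f z = n * f e := by
      intro z n hn
      have := hf.2 _ hn
      rw [hf.1, hf.inv, hf.zpow] at this
      linear_combination this
    obtain ⟨n, hn⟩ := hh x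
    obtain ⟨m, hm⟩ := hh y
    have h1 := hf2 _ _ hn
    have h2 := hf2 _ _ hm
    rw [hf.mem_ker] at hy
    have hfe : f e ≠ 0 := by
      intro h; rw [h1, h, mul_zero] at hfx; exact hfx rfl
    rw [hy] at h2
    have hm0 : (m : ZMod ℓ) = 0 := by
      rcases mul_eq_zero.1 h2.symm with h | h
      · exact h
      · exact absurd h hfe
    rw [ZMod.intCast_zmod_eq_zero_iff_dvd] at hm0
    obtain ⟨k, rfl⟩ := hm0
    have : e ^ ((ℓ : ℤ) * k) ∈ T := by
      rw [zpow_mul]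
      exact T.zpow_mem (by simpa using hpow e) k
    simpa using T.mul_mem this hm
  · push Not at ht
    have h : Chr ℓ T (fun _ => 0) := ⟨fun _ _ => by simp, fun _ _ => rfl⟩
    exact ⟨_, h, le_antisymm (fun x _ => ht x) h.le_ker⟩

theorem rigid_iff (hℓ : ℓ.Prime) (hf : Chr ℓ T f) (hg : Chr ℓ T g) :
    IsRigid (hf.ker ⊓ hg.ker) ↔ ∀ x y : Kˣ, (x : K) + y = 1 → f x * g y = f y * g x := by
  have : Fact ℓ.Prime := ⟨hℓ⟩
  set R := hf.ker ⊓ hg.ker with hR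
  have memR : ∀ x, x ∈ R ↔ f x = 0 ∧ g x = 0 := fun x => Iff.rfl
  constructor
  · intro h x y hxy
    by_cases hx : x ∈ R
    · obtain ⟨h1, h2⟩ := (memR x).1 hx
      rw [h1, h2]; ring
    have hy : (1 : K) - x = y := by rw [← hxy]; ring
    have hy0 : (1 : K) - x ≠ 0 := by rw [hy]; exact y.ne_zero
    have hyy : Units.mk0 _ hy0 = y := Units.ext hy
    have hc := h x hx hy0
    rw [hyy] at hc
    obtain ⟨⟨e, he0⟩, he⟩ := hc.exists_generator
    obtain ⟨e, rfl⟩ := QuotientGroup.mk_surjective e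
    have hh : ∀ z : Kˣ, (QuotientGroup.mk z : Kˣ ⧸ R) ∈
        Subgroup.closure {(QuotientGroup.mk x : Kˣ ⧸ R), QuotientGroup.mk y} →
        ∃ n : ℤ, f z = n * f e ∧ g z = n * g e := by
      intro z hz
      obtain ⟨n, hn⟩ := he ⟨_, hz⟩
      refine ⟨n, ?_⟩
      have h3 := congrArg Subtype.val hn
      have h4 : (QuotientGroup.mk (e ^ n) : Kˣ ⧸ R) = QuotientGroup.mk z := by
        rw [QuotientGroup.mk_zpow]; exact h3
      rw [QuotientGroup.eq, memR, hf.1, hg.1, hf.inv, hg.inv, hf.zpow, hg.zpow] at h4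
      exact ⟨by linear_combination h4.1, by linear_combination h4.2⟩
    obtain ⟨n, h1, h2⟩ := hh x (Subgroup.subset_closure (by simp))
    obtain ⟨m, h3, h4⟩ := hh y (Subgroup.subset_closure (by simp))
    rw [h1, h2, h3, h4]; ring
  · intro h x hx h0
    set y := Units.mk0 _ h0 with hy
    have hxy := h x y (by simp [hy])
    have : ∃ c : ZMod ℓ, f y = c * f x ∧ g y = c * g x := by
      by_cases h1 : f x = 0
      · have h2 : g x ≠ 0 := fun h2 => hx ((memR x).2 ⟨h1, h2⟩)
        refine ⟨g y / g x, ?_, by field_simp⟩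
        rw [h1] at hxy ⊢
        rw [zero_mul] at hxy
        rcases mul_eq_zero.1 hxy.symm with h | h
        · rw [h, mul_zero]
        · exact absurd h h2
      · refine ⟨f y / f x, by field_simp, ?_⟩
        field_simp
        linear_combination hxy
    obtain ⟨c, h1, h2⟩ := this
    have hyx : (QuotientGroup.mk y : Kˣ ⧸ R) = (QuotientGroup.mk x) ^ (c.val : ℤ) := by
      rw [← QuotientGroup.mk_zpow, eq_comm, QuotientGroup.eq, memR, hf.1, hg.1, hf.inv, hg.inv,
        hf.zpow, hg.zpow, h1, h2]
      simp
    have hcl : Subgroup.closure {(QuotientGroup.mk x : Kˣ ⧸ R), QuotientGroup.mk y} =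
        Subgroup.zpowers (QuotientGroup.mk x : Kˣ ⧸ R) := by
      apply le_antisymm
      · rw [Subgroup.closure_le]
        rintro z (rfl | rfl)
        · exact Subgroup.mem_zpowers _
        · exact ⟨_, hyx.symm⟩
      · rw [Subgroup.zpowers_le]
        exact Subgroup.subset_closure (by simp)
    rw [hcl]
    infer_instance

theorem mem_Hbold (hℓ : ℓ.Prime) (hpow : ∀ x : Kˣ, x ^ ℓ ∈ T) (x : Kˣ) :
    x ∈ Hbold T ↔ ∀ f, Cen ℓ T f → f x = 0 := by
  constructor
  · intro hx f hf
    refine Subgroup.mem_sInf.1 hx hf.1.ker ⟨⟨hf.1.le_ker, hf.1.cyclic hℓ⟩, ?_⟩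
    intro H' hTH' hc
    obtain ⟨g, hg, hk⟩ := Chr.of_cyclic hℓ (fun x => hTH' (hpow x)) hc
    have hg2 := hg.mono hTH'
    rw [← hk]
    exact (rigid_iff hℓ hf.1 hg2).2 (hf.2 g hg2)
  · intro hx
    refine Subgroup.mem_sInf.2 ?_
    rintro H ⟨⟨hTH, hc⟩, hr⟩
    obtain ⟨f, hf, hk⟩ := Chr.of_cyclic hℓ (fun x => hTH (hpow x)) hc
    have hf2 := hf.mono hTH
    rw [← hk, hf.mem_ker]
    refine hx f ⟨hf2, fun g hg => ?_⟩
    refine (rigid_iff hℓ hf2 hg).1 ?_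
    have := hr hg.ker hg.le_ker (hg.cyclic hℓ)
    rw [← hk] at this
    exact this

theorem T_le_Hbold : T ≤ Hbold T := le_sInf fun _ h => h.1.1

theorem F1 (hℓ : ℓ.Prime) (hpow : ∀ x : Kˣ, x ^ ℓ ∈ T) {x y : Kˣ} (hxy : (x : K) + y = 1)
    (hx : x ∉ Hbold T) : ∃ n : ℤ, y * (x ^ n)⁻¹ ∈ T := by
  have : Fact ℓ.Prime := ⟨hℓ⟩
  rw [mem_Hbold hℓ hpow] at hx
  push Not at hx
  obtain ⟨f, hf, hfx⟩ := hx
  refine ⟨(f y / f x).val, ?_⟩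
  by_contra hcon
  obtain ⟨g, hg, hgx⟩ := Chr.exists_ne hℓ hpow hcon
  apply hgx
  rw [hg.1, hg.inv, hg.zpow]
  have := hf.2 g hg x y hxy
  simp
  field_simp
  linear_combination this

theorem F2 (hℓ : ℓ.Prime) (hpow : ∀ x : Kˣ, x ^ ℓ ∈ T) {x y : Kˣ} (hxy : (x : K) + y = 1)
    (hx : x ∈ Hbold T) (hxT : x ∉ T) : y ∈ Hbold T := by
  have : Fact ℓ.Prime := ⟨hℓ⟩
  rw [mem_Hbold hℓ hpow] at hx ⊢
  intro f hf
  obtain ⟨g, hg, hgx⟩ := Chr.exists_ne hℓ hpow hxT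
  have := hf.2 g hg x y hxy
  rw [hx f hf, zero_mul] at this
  exact (mul_eq_zero.1 this.symm).resolve_right hgx

theorem F1' (hℓ : ℓ.Prime) (hpow : ∀ x : Kˣ, x ^ ℓ ∈ T) (hneg : (-1 : Kˣ) ∈ T)
    {a b c : Kˣ} (h : (a : K) + b = c) (hab : a / b ∉ Hbold T) :
    ∃ n : ℤ, c / (a ^ n * b ^ (1 - n)) ∈ T := by
  have hx : -1 * (a / b) ∉ Hbold T := fun h => hab <| by
    simpa using (Hbold T).mul_mem (T_le_Hbold hneg) h
  have hxy : ((-1 * (a / b) : Kˣ) : K) + ((c / b : Kˣ) : K) = 1 := by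
    have := b.ne_zero
    push_cast
    rw [← h]
    field_simp
    ring
  obtain ⟨n, hn⟩ := F1 hℓ hpow hxy hx
  refine ⟨n, ?_⟩
  have := T.mul_mem (T.zpow_mem hneg n) hn
  convert this using 1
  rw [mul_zpow, div_zpow, zpow_sub, zpow_one]
  simp only [div_eq_mul_inv, mul_inv, inv_inv]
  generalize (-1 : Kˣ) ^ n = e
  have h1 : e * e⁻¹ = 1 := mul_inv_cancel _
  calc c * ((a ^ n)⁻¹ * (b⁻¹ * b ^ n)) = 1 * (c * ((a ^ n)⁻¹ * (b⁻¹ * b ^ n))) := by rw [one_mul]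
    _ = _ := by rw [← h1]; ac_rfl

theorem F2' (hℓ : ℓ.Prime) (hpow : ∀ x : Kˣ, x ^ ℓ ∈ T) (hneg : (-1 : Kˣ) ∈ T)
    {a b c : Kˣ} (h : (a : K) + b = c) (hab : a / b ∈ Hbold T) (habT : a / b ∉ T) :
    c / b ∈ Hbold T := by
  have hx : -1 * (a / b) ∈ Hbold T := (Hbold T).mul_mem (T_le_Hbold hneg) hab
  have hxT : -1 * (a / b) ∉ T := fun h => habT <| by
    simpa using T.mul_mem hneg h
  have hxy : ((-1 * (a / b) : Kˣ) : K) + ((c / b : Kˣ) : K) = 1 := by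
    have := b.ne_zero
    push_cast
    rw [← h]
    field_simp
    ring
  exact F2 hℓ hpow hxy hx hxT

/-- good pairs -/
def GP (ℓ : ℕ) (T : Subgroup Kˣ) (p q : Kˣ) : Prop :=
  p ∈ Hbold T ∧ q ∈ Hbold T ∧ (p : K) + q = 1 ∧
    ∀ j k : ℤ, p ^ j * q ^ k ∈ T → (ℓ : ℤ) ∣ j ∧ (ℓ : ℤ) ∣ k

theorem GP.swap {p q : Kˣ} (h : GP ℓ T p q) : GP ℓ T q p :=
  ⟨h.2.1, h.1, by rw [add_comm]; exact h.2.2.1, fun j k hjk => by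
    rw [mul_comm] at hjk
    exact (h.2.2.2 k j hjk).symm⟩

theorem GP.inv (hneg : (-1 : Kˣ) ∈ T) {p q : Kˣ} (h : GP ℓ T p q) :
    GP ℓ T p⁻¹ (-1 * (q / p)) := by
  obtain ⟨h1, h2, h3, h4⟩ := h
  refine ⟨(Hbold T).inv_mem h1, (Hbold T).mul_mem (T_le_Hbold hneg) ((Hbold T).div_mem h2 h1),
    ?_, ?_⟩
  · have := p.ne_zero
    push_cast
    field_simp
    linear_combination -h3
  · intro j k hjk
    have := T.mul_mem (T.inv_mem (T.zpow_mem hneg k)) hjk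
    have h5 : p ^ (-j - k) * q ^ k ∈ T := by
      convert this using 1
      rw [mul_zpow, div_zpow, zpow_sub, zpow_neg, inv_zpow]
      simp only [div_eq_mul_inv]
      generalize (-1 : Kˣ) ^ k = e
      generalize q ^ k = q'
      generalize p ^ k = p1
      generalize p ^ j = p2
      ext
      push_cast
      have := e.ne_zero
      have := p1.ne_zero
      have := p2.ne_zero
      field_simp
    obtain ⟨h6, h7⟩ := h4 _ _ h5
    refine ⟨?_, h7⟩
    have := dvd_add h6 h7
    simpa using this

theorem exists_GP (hℓ : ℓ.Prime) (hpow : ∀ x : Kˣ, x ^ ℓ ∈ T) (hHT : T ≠ Hbold T) :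
    ∃ p q, GP ℓ T p q := by
  have : Fact ℓ.Prime := ⟨hℓ⟩
  obtain ⟨h, hh, hhT⟩ := SetLike.exists_of_lt (lt_of_le_of_ne T_le_Hbold hHT)
  obtain ⟨g, hg, hgh⟩ := Chr.exists_ne hℓ hpow hhT
  have hnc : ¬ Cen ℓ T g := fun hc => hgh ((mem_Hbold hℓ hpow h).1 hh g hc)
  have : ∃ g', Chr ℓ T g' ∧ ∃ x y : Kˣ, (x : K) + y = 1 ∧ g x * g' y ≠ g y * g' x := by
    by_contra hcon
    push Not at hcon
    exact hnc ⟨hg, hcon⟩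
  obtain ⟨g', hg', p, q, hpq, hne⟩ := this
  have hp : p ∈ Hbold T := by
    by_contra hp
    obtain ⟨n, hn⟩ := F1 hℓ hpow hpq hp
    have e1 := hg.2 _ hn
    have e2 := hg'.2 _ hn
    rw [hg.1, hg.inv, hg.zpow] at e1
    rw [hg'.1, hg'.inv, hg'.zpow] at e2
    exact hne (by linear_combination g p * e2 - g' p * e1)
  have hpT : p ∉ T := fun h => hne (by rw [hg.2 _ h, hg'.2 _ h]; ring)
  refine ⟨p, q, hp, F2 hℓ hpow hpq hp hpT, hpq, ?_⟩
  intro j k hjk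
  have e1 := hg.2 _ hjk
  have e2 := hg'.2 _ hjk
  rw [hg.1, hg.zpow, hg.zpow] at e1
  rw [hg'.1, hg'.zpow, hg'.zpow] at e2
  rw [← ZMod.intCast_zmod_eq_zero_iff_dvd, ← ZMod.intCast_zmod_eq_zero_iff_dvd]
  have hd : g p * g' q - g q * g' p ≠ 0 := sub_ne_zero.2 hne
  constructor
  · refine (mul_eq_zero.1 (?_ : (j : ZMod ℓ) * (g p * g' q - g q * g' p) = 0)).resolve_right hd
    linear_combination g' q * e1 - g q * e2
  · refine (mul_eq_zero.1 (?_ : (k : ZMod ℓ) * (g p * g' q - g q * g' p) = 0)).resolve_right hd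
    linear_combination g p * e2 - g' p * e1

theorem pow_mem_of_dvd (hpow : ∀ x : Kˣ, x ^ ℓ ∈ T) (x : Kˣ) {n : ℤ} (h : (ℓ : ℤ) ∣ n) :
    x ^ n ∈ T := by
  obtain ⟨k, rfl⟩ := h
  rw [zpow_mul]
  exact T.zpow_mem (by simpa using hpow x) k

theorem dvd_of_zpow_mem (hℓ : ℓ.Prime) (hpow : ∀ x : Kˣ, x ^ ℓ ∈ T) {x : Kˣ} (hx : x ∉ Hbold T)
    {n : ℤ} (h : x ^ n ∈ Hbold T) : (ℓ : ℤ) ∣ n := by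
  have : Fact ℓ.Prime := ⟨hℓ⟩
  rw [mem_Hbold hℓ hpow] at hx h
  push Not at hx
  obtain ⟨f, hf, hfx⟩ := hx
  have := h f hf
  rw [hf.1.zpow] at this
  rw [← ZMod.intCast_zmod_eq_zero_iff_dvd]
  exact (mul_eq_zero.1 this).resolve_right hfx

theorem LI (hℓ : ℓ.Prime) (hpow : ∀ x : Kˣ, x ^ ℓ ∈ T) {x p q : Kˣ} (hx : x ∉ Hbold T)
    (hG : GP ℓ T p q) {i j k : ℤ} (h : x ^ i * p ^ j * q ^ k ∈ T) :
    (ℓ : ℤ) ∣ i ∧ (ℓ : ℤ) ∣ j ∧ (ℓ : ℤ) ∣ k := by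
  have h1 : x ^ i ∈ Hbold T := by
    have h2 : p ^ j * q ^ k ∈ Hbold T :=
      (Hbold T).mul_mem ((Hbold T).zpow_mem hG.1 j) ((Hbold T).zpow_mem hG.2.1 k)
    rw [mul_assoc] at h
    exact ((Hbold T).mul_mem_cancel_right h2).1 (T_le_Hbold h)
  have h2 := dvd_of_zpow_mem hℓ hpow hx h1
  refine ⟨h2, hG.2.2.2 j k ?_⟩
  rw [mul_assoc] at h
  exact (T.mul_mem_cancel_left (pow_mem_of_dvd hpow x h2)).1 h

theorem step (hℓ : ℓ.Prime) (hpow : ∀ x : Kˣ, x ^ ℓ ∈ T) (hneg : (-1 : Kˣ) ∈ T)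
    {x p q w : Kˣ} (hx : x ∉ Hbold T) (hG : GP ℓ T p q) (hw : (1 : K) + x = w) :
    w ∈ T ∨ (w / x ∈ T ∧ ∃ y : Kˣ, (x : K) + p = y ∧ y / x ∈ T) := by
  by_cases hwT : w ∈ T
  · exact Or.inl hwT
  right
  have hp := hG.1
  have hq := hG.2.1
  have hpr : Prime (ℓ : ℤ) := Nat.prime_iff_prime_int.1 hℓ
  have hl1 : ¬ (ℓ : ℤ) ∣ 1 := hpr.not_dvd_one
  have h1x : (x : Kˣ) / 1 ∉ Hbold T := by simpa using hx
  obtain ⟨c, hc⟩ := F1' hℓ hpow hneg (a := x) (b := 1) (c := w)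
    (by rw [← hw]; simp [add_comm]) h1x
  rw [one_zpow, mul_one] at hc
  have hcℓ : ¬ (ℓ : ℤ) ∣ c := by
    intro h
    have := T.mul_mem hc (pow_mem_of_dvd hpow x h)
    rw [div_mul_cancel] at this
    exact hwT this
  have hwH : w ∉ Hbold T := by
    intro h
    apply hcℓ
    apply dvd_of_zpow_mem hℓ hpow hx
    have := (Hbold T).div_mem h (T_le_Hbold hc)
    simpa using this
  have hy0 : (x : K) + p ≠ 0 := by
    intro h
    apply hx
    have : x = -1 * p := by
      ext; push_cast; linear_combination h
    rw [this]
    exact (Hbold T).mul_mem (T_le_Hbold hneg) hp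
  set y := Units.mk0 _ hy0 with hydef
  have hy : (x : K) + p = y := rfl
  have hyw : (y : K) + q = w := by rw [← hy, ← hw, ← hG.2.2.1]; ring
  have hxp : x / p ∉ Hbold T := by
    rw [div_eq_mul_inv, (Hbold T).mul_mem_cancel_right ((Hbold T).inv_mem hp)]
    exact hx
  obtain ⟨s, hs⟩ := F1' hℓ hpow hneg hy hxp
  by_cases hyH : y ∈ Hbold T
  · exfalso
    have hyq : y / q ∈ Hbold T := (Hbold T).div_mem hyH hq
    by_cases hyqT : y / q ∈ T
    · have : x ^ s * p ^ (1 - s) * q ^ (-1 : ℤ) ∈ T := by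
        convert T.div_mem hyqT hs using 1
        simp only [div_eq_mul_inv, mul_inv, inv_inv, zpow_neg, zpow_one]
        rw [show y * q⁻¹ * (y⁻¹ * (x ^ s * p ^ (1 - s))) =
          (y * y⁻¹) * (x ^ s * p ^ (1 - s) * q⁻¹) by ac_rfl, mul_inv_cancel, one_mul]
      have := (LI hℓ hpow hx hG this).2.2
      exact hl1 ((dvd_neg).1 this)
    · have := F2' hℓ hpow hneg hyw hyq hyqT
      exact hwH (by simpa using (Hbold T).mul_mem this hq)
  · have hyq : y / q ∉ Hbold T := by
      rw [div_eq_mul_inv, (Hbold T).mul_mem_cancel_right ((Hbold T).inv_mem hq)]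
      exact hyH
    obtain ⟨t, ht⟩ := F1' hℓ hpow hneg hyw hyq
    have h3 : x ^ (s * t - c) * p ^ ((1 - s) * t) * q ^ (1 - t) ∈ T := by
      have h4 := T.div_mem hc (T.mul_mem ht (T.zpow_mem hs t))
      convert h4 using 1
      rw [zpow_sub x, zpow_mul, zpow_mul, div_zpow, mul_zpow]
      rw [show w / (y ^ t * q ^ (1 - t)) * (y ^ t / ((x ^ s) ^ t * (p ^ (1 - s)) ^ t)) =
        (w / q ^ (1 - t)) * (((x ^ s) ^ t * (p ^ (1 - s)) ^ t))⁻¹ by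
          rw [div_mul_div_comm]
          rw [show y ^ t * q ^ (1 - t) * ((x ^ s) ^ t * (p ^ (1 - s)) ^ t) =
            y ^ t * (q ^ (1 - t) * ((x ^ s) ^ t * (p ^ (1 - s)) ^ t)) by ac_rfl, mul_comm w]
          rw [mul_div_mul_left_eq_div, div_eq_mul_inv, div_eq_mul_inv, mul_inv, mul_assoc]]
      simp only [div_eq_mul_inv, mul_inv, inv_inv]
      rw [show w * (x ^ c)⁻¹ * (w⁻¹ * q ^ (1 - t) * ((x ^ s) ^ t * (p ^ (1 - s)) ^ t)) =
        (w * w⁻¹) * ((x ^ s) ^ t * (x ^ c)⁻¹ * (p ^ (1 - s)) ^ t * q ^ (1 - t)) by ac_rfl,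
        mul_inv_cancel, one_mul]
    obtain ⟨d1, d2, d3⟩ := LI hℓ hpow hx hG h3
    have ht' : ¬ (ℓ : ℤ) ∣ t := fun h => hl1 (by simpa using dvd_add d3 h)
    have d4 : (ℓ : ℤ) ∣ 1 - s := (hpr.dvd_or_dvd d2).resolve_right ht'
    have d5 : (ℓ : ℤ) ∣ c - 1 := by
      have : c - 1 = -(s * t - c) - (1 - t) - t * (1 - s) := by ring
      rw [this]
      exact dvd_sub (dvd_sub ((dvd_neg).2 d1) d3) (Dvd.dvd.mul_left d4 t)
    constructor
    · have := T.mul_mem hc (pow_mem_of_dvd hpow x d5)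
      convert this using 1
      rw [zpow_sub, zpow_one, div_eq_mul_inv, div_eq_mul_inv, mul_assoc, inv_mul_cancel_left]
    · refine ⟨y, hy, ?_⟩
      have h5 : (ℓ : ℤ) ∣ s - 1 := by rw [← dvd_neg]; simpa using d4
      have := T.mul_mem hs (T.mul_mem (pow_mem_of_dvd hpow x h5) (pow_mem_of_dvd hpow p d4))
      convert this using 1
      rw [zpow_sub x, zpow_one]
      simp only [div_eq_mul_inv, mul_inv]
      rw [show y * ((x ^ s)⁻¹ * (p ^ (1 - s))⁻¹) * (x ^ s * x⁻¹ * p ^ (1 - s)) =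
        y * x⁻¹ * (x ^ s * (x ^ s)⁻¹) * (p ^ (1 - s) * (p ^ (1 - s))⁻¹) by ac_rfl]
      simp

end part1

section part2

variable {K : Type*} [Field K]

/-- the small elements outside `h`. -/
def AA (t h : K → Prop) (x : K) : Prop := x ≠ 0 ∧ ¬ h x ∧ t (1 + x)

/-- elements of `h` stabilizing `AA`. -/
def BB (t h : K → Prop) (b : K) : Prop := h b ∧ ∀ a, AA t h a → AA t h (b * a)

/-- abstract situation. -/
structure Sys (t h : K → Prop) (p q : K) : Prop where
  h_ne : ∀ {x}, h x → x ≠ 0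
  t_mul : ∀ {x y}, t x → t y → t (x * y)
  t_inv : ∀ {x}, t x → t x⁻¹
  h_mul : ∀ {x y}, h x → h y → h (x * y)
  h_inv : ∀ {x}, h x → h x⁻¹
  th : ∀ {x}, t x → h x
  t_neg : t (-1)
  dich : ∀ {x}, x ≠ 0 → ¬ h x → t (1 + x) ∨ t ((1 + x) / x)
  f2 : ∀ {x}, h x → ¬ t x → 1 + x ≠ 0 → h (1 + x)
  pq : p + q = 1
  hp : h p
  hq : h q
  tp : ¬ t p
  tq : ¬ t q
  tpq : ¬ t (p / q)
  Ap : ∀ {x}, AA t h x → AA t h (x * p)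
  Ap' : ∀ {x}, AA t h x → AA t h (x * p⁻¹)
  Aq : ∀ {x}, AA t h x → AA t h (x * q)
  Aneg : ∀ {x}, AA t h x → AA t h (-x)

namespace Sys

variable {t h : K → Prop} {p q : K}

theorem t_ne (S : Sys t h p q) {x : K} (hx : t x) : x ≠ 0 := S.h_ne (S.th hx)

theorem t_one (S : Sys t h p q) : t 1 := by simpa using S.t_mul S.t_neg S.t_neg

theorem t_div (S : Sys t h p q) {x y : K} (hx : t x) (hy : t y) : t (x / y) := by
  rw [div_eq_mul_inv]; exact S.t_mul hx (S.t_inv hy)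

theorem h_div (S : Sys t h p q) {x y : K} (hx : h x) (hy : h y) : h (x / y) := by
  rw [div_eq_mul_inv]; exact S.h_mul hx (S.h_inv hy)

theorem h_of_mul_right (S : Sys t h p q) {x y : K} (hy : h y) (hxy : h (x * y)) : h x := by
  have := S.h_div hxy hy
  rwa [mul_div_cancel_right₀ _ (S.h_ne hy)] at this

theorem h_of_mul_left (S : Sys t h p q) {x y : K} (hx : h x) (hxy : h (x * y)) : h y := by
  rw [mul_comm] at hxy; exact S.h_of_mul_right hx hxy

theorem A_dich (S : Sys t h p q) {x : K} (hx : x ≠ 0) (hh : ¬ h x) : AA t h x ∨ AA t h x⁻¹ := by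
  rcases S.dich hx hh with h1 | h1
  · exact Or.inl ⟨hx, hh, h1⟩
  · refine Or.inr ⟨inv_ne_zero hx, fun h2 => hh (by simpa using S.h_inv h2), ?_⟩
    convert h1 using 1
    field_simp
    ring

theorem A_not (S : Sys t h p q) {x : K} (hx : AA t h x) (hy : AA t h x⁻¹) : False := by
  have h1 := S.t_div hx.2.2 hy.2.2
  apply hx.2.1
  apply S.th
  convert h1 using 1
  have := hx.1
  have h2 := S.t_ne hy.2.2
  rw [eq_div_iff h2, mul_add, mul_inv_cancel₀ this]
  ring

theorem A_sub (S : Sys t h p q) {x : K} (hx : AA t h x) : t (1 - x) := by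
  have := (S.Aneg hx).2.2
  rwa [← sub_eq_add_neg] at this

theorem add_t (S : Sys t h p q) {a y : K} (ha : t a) (hy : y ≠ 0) (hh : ¬ h y) : t (a + y) ∨ t ((a + y) / y) := by
  have ha0 := S.t_ne ha
  have h1 : ¬ h (y / a) := fun h1 => hh (by
    have := S.h_mul h1 (S.th ha)
    rwa [div_mul_cancel₀ _ ha0] at this)
  rcases S.dich (div_ne_zero hy ha0) h1 with h2 | h2
  · left
    have := S.t_mul ha h2
    convert this using 1
    field_simp
  · right
    convert h2 using 1
    field_simp

theorem quot (S : Sys t h p q) {u x y : K} (hx : x ≠ 0) (h1 : t (u / x)) (h2 : t (u / y)) : t (y / x) := by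
  have h3 := S.t_div h1 h2
  have hu : u ≠ 0 := by
    rintro rfl
    exact S.t_ne h1 (by simp)
  have hy : y ≠ 0 := by
    rintro rfl
    exact S.t_ne h2 (by simp)
  convert h3 using 1
  field_simp

theorem sum1 (S : Sys t h p q) {x y : K} (hx : AA t h x) (hy : AA t h y) (hxy : ¬ t (x / y)) : t (1 + x + y) := by
  rcases S.add_t hx.2.2 hy.1 hy.2.1 with h1 | h1
  · exact h1
  rcases S.add_t hy.2.2 hx.1 hx.2.1 with h2 | h2
  · convert h2 using 1; ring
  rw [add_right_comm] at h2
  exact absurd (S.quot hy.1 h1 h2) hxy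

theorem sum2 (S : Sys t h p q) {x y : K} (hx : AA t h x) (hy : AA t h y) : t (1 + x + y) := by
  by_cases hxy : t (x / y)
  · have hyp := S.Ap hy
    have hyq := S.Aq hy
    have hp0 := S.h_ne S.hp
    have hq0 := S.h_ne S.hq
    have hy0 := hy.1
    have hx0 := hx.1
    have h1 : t (1 + x + y * p) := S.sum1 hx hyp (fun h => S.tp (by
      convert S.t_div hxy h using 1; field_simp))
    have h2 : t (1 + x + y * q) := S.sum1 hx hyq (fun h => S.tq (by
      convert S.t_div hxy h using 1; field_simp))
    have e1 : 1 + x + y * p + y * q = 1 + x + y := by linear_combination y * S.pq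
    have e2 : 1 + x + y * q + y * p = 1 + x + y := by linear_combination y * S.pq
    rcases S.add_t h1 hyq.1 hyq.2.1 with h3 | h3
    · rwa [e1] at h3
    rcases S.add_t h2 hyp.1 hyp.2.1 with h4 | h4
    · rwa [e2] at h4
    rw [e1] at h3
    rw [e2] at h4
    refine absurd (S.quot hyq.1 h3 h4) (fun h => S.tpq ?_)
    convert h using 1
    field_simp
  · exact S.sum1 hx hy hxy

theorem prod1 (S : Sys t h p q) {x u : K} (hx : AA t h x) (hu : t (1 - u)) :
    t (1 - x * u) ∨ t ((1 - x * u) / x) := by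
  have hu0 := S.t_ne hu
  have hn : ¬ h (x * (1 - u)) := fun h1 => hx.2.1 (S.h_of_mul_right (S.th hu) h1)
  have e : 1 - x + x * (1 - u) = 1 - x * u := by ring
  rcases S.add_t (S.A_sub hx) (mul_ne_zero hx.1 hu0) hn with h1 | h1
  · left; rwa [e] at h1
  · right
    rw [e] at h1
    convert S.t_mul h1 hu using 1
    have := hx.1
    field_simp

theorem prod2 (S : Sys t h p q) {x u : K} (hx : AA t h x) (hu : t (1 - u)) (hup : t (1 - u * p⁻¹)) :
    t (1 - x * u) := by
  have hp0 := S.h_ne S.hp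
  have e : x * p * (u * p⁻¹) = x * u := by field_simp
  rcases S.prod1 hx hu with h1 | h1
  · exact h1
  rcases S.prod1 (S.Ap hx) hup with h2 | h2
  · rwa [e] at h2
  rw [e] at h2
  have := S.quot hx.1 h1 h2
  rw [mul_div_cancel_left₀ _ hx.1] at this
  exact absurd this S.tp

theorem prodA (S : Sys t h p q) {x y : K} (hx : AA t h x) (hy : AA t h y) : t (1 - x * y) :=
  S.prod2 hx (S.A_sub hy) (S.A_sub (S.Ap' hy))

theorem prodA' (S : Sys t h p q) {x y : K} (hx : AA t h x) (hy : AA t h y) : t (1 + x * y) := by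
  have := S.prodA (S.Aneg hx) hy
  convert this using 1; ring

theorem prodA3 (S : Sys t h p q) {x y a : K} (hx : AA t h x) (hy : AA t h y) (ha : AA t h a) :
    t (1 - x * (y * a)) := by
  refine S.prod2 hx (S.prodA hy ha) ?_
  have := S.prodA (S.Ap' hy) ha
  convert this using 1; ring

theorem AA_mul (S : Sys t h p q) {x y : K} (hx : AA t h x) (hy : AA t h y) : AA t h (x * y) ∨ BB t h (x * y) := by
  by_cases hxy : h (x * y)
  · right
    refine ⟨hxy, fun a ha => ⟨mul_ne_zero (S.h_ne hxy) ha.1, ?_, ?_⟩⟩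
    · exact fun h1 => ha.2.1 (S.h_of_mul_left hxy h1)
    · convert S.prodA3 (S.Aneg hx) hy ha using 1; ring
  · left
    exact ⟨mul_ne_zero hx.1 hy.1, hxy, S.prodA' hx hy⟩

theorem BB_mul (S : Sys t h p q) {x y : K} (hx : BB t h x) (hy : BB t h y) : BB t h (x * y) :=
  ⟨S.h_mul hx.1 hy.1, fun a ha => by rw [mul_assoc]; exact hx.2 _ (hy.2 _ ha)⟩

theorem BB_neg_one (S : Sys t h p q) : BB t h (-1) :=
  ⟨S.th S.t_neg, fun a ha => by rw [neg_one_mul]; exact S.Aneg ha⟩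

theorem BB_one (S : Sys t h p q) : BB t h 1 := ⟨S.th S.t_one, fun a ha => by rwa [one_mul]⟩

/-- nonzero elements of the valuation ring -/
def OO (t h : K → Prop) (x : K) : Prop := x = 0 ∨ AA t h x ∨ BB t h x

theorem OO_mul (S : Sys t h p q) {x y : K} (hx : OO t h x) (hy : OO t h y) : OO t h (x * y) := by
  rcases hx with rfl | hx | hx
  · left; simp
  · rcases hy with rfl | hy | hy
    · left; simp
    · exact Or.inr (S.AA_mul hx hy)
    · rw [mul_comm]; exact Or.inr (Or.inl (hy.2 _ hx))
  · rcases hy with rfl | hy | hy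
    · left; simp
    · exact Or.inr (Or.inl (hx.2 _ hy))
    · exact Or.inr (Or.inr (S.BB_mul hx hy))

theorem OO.A_of {x : K} (hx : OO t h x) (h0 : x ≠ 0) (hh : ¬ h x) : AA t h x := by
  rcases hx with hx | hx | hx
  · exact absurd hx h0
  · exact hx
  · exact absurd hx.1 hh

/-- If `b⁻¹` is not in `BB` then `b` is a product of two elements of `AA`. -/
theorem not_BB (S : Sys t h p q) {x : K} (hx : h x) (hn : ¬ BB t h x) :
    ∃ a, AA t h a ∧ AA t h (x * a)⁻¹ := by
  have : ∃ a, AA t h a ∧ ¬ AA t h (x * a) := by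
    by_contra hc
    push Not at hc
    exact hn ⟨hx, hc⟩
  obtain ⟨a, ha, hxa⟩ := this
  refine ⟨a, ha, ?_⟩
  exact (S.A_dich (mul_ne_zero (S.h_ne hx) ha.1)
    (fun h1 => ha.2.1 (S.h_of_mul_left hx h1))).resolve_left hxa

theorem OO_total (S : Sys t h p q) (x : K) : OO t h x ∨ OO t h x⁻¹ := by
  by_cases h0 : x = 0
  · left; left; exact h0
  by_cases hx : h x
  · by_contra hc
    push Not at hc
    obtain ⟨a, ha, ha'⟩ := S.not_BB hx (fun h1 => hc.1 (Or.inr (Or.inr h1)))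
    obtain ⟨b, hb, hb'⟩ := S.not_BB (S.h_inv hx) (fun h1 => hc.2 (Or.inr (Or.inr h1)))
    have h1 := S.OO_mul (Or.inr (S.AA_mul ha' hb')) (Or.inr (Or.inl ha))
    have e : (x * a)⁻¹ * (x⁻¹ * b)⁻¹ * a = b⁻¹ := by
      have := ha.1
      have := hb.1
      field_simp
    rw [e] at h1
    exact S.A_not hb (h1.A_of (inv_ne_zero hb.1)
      (fun h2 => hb.2.1 (by simpa using S.h_inv h2)))
  · rcases S.A_dich h0 hx with h1 | h1
    · exact Or.inl (Or.inr (Or.inl h1))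
    · exact Or.inr (Or.inr (Or.inl h1))

theorem OO_one_add (S : Sys t h p q) {x : K} (hx : OO t h x) : OO t h (1 + x) := by
  rcases hx with rfl | hx | hx
  · rw [add_zero]; exact Or.inr (Or.inr S.BB_one)
  · refine Or.inr (Or.inr ⟨S.th hx.2.2, fun y hy => ?_⟩)
    have hy1 := S.t_ne hy.2.2
    have hn : ¬ h (y / (1 + y)) := fun h1 => hy.2.1 (by
      have := S.h_mul h1 (S.th hy.2.2)
      rwa [div_mul_cancel₀ _ hy1] at this)
    have hz : AA t h (-(y / (1 + y))) := by
      refine ⟨neg_ne_zero.2 (div_ne_zero hy.1 hy1), fun h1 => hn ?_, ?_⟩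
      · simpa using S.h_mul (S.th S.t_neg) h1
      · convert S.t_inv hy.2.2 using 1
        field_simp
        ring
    have h2 := S.t_mul hy.2.2 (S.prodA hx hz)
    refine ⟨mul_ne_zero (S.t_ne hx.2.2) hy.1,
      fun h1 => hy.2.1 (S.h_of_mul_left (S.th hx.2.2) h1), ?_⟩
    convert h2 using 1
    field_simp
    ring
  · by_cases h0 : 1 + x = 0
    · exact Or.inl h0
    by_cases hh : h (1 + x)
    · refine Or.inr (Or.inr ⟨hh, fun y hy => ⟨mul_ne_zero h0 hy.1,
        fun h1 => hy.2.1 (S.h_of_mul_left hh h1), ?_⟩⟩)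
      convert S.sum2 hy (hx.2 y hy) using 1
      ring
    · rcases S.A_dich h0 hh with h1 | h1
      · exact Or.inr (Or.inl h1)
      · exfalso
        have h2 := S.h_div hx.1 (S.th (S.A_sub h1))
        apply hh
        convert h2 using 1
        have h3 := S.t_ne (S.A_sub h1)
        rw [eq_div_iff h3, mul_sub, mul_inv_cancel₀ h0]
        ring

theorem OO_add (S : Sys t h p q) {x y : K} (hx : OO t h x) (hy : OO t h y) : OO t h (x + y) := by
  by_cases hx0 : x = 0
  · rwa [hx0, zero_add]
  by_cases hy0 : y = 0
  · rwa [hy0, add_zero]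
  rcases S.OO_total (y / x) with h1 | h1
  · have := S.OO_mul hx (S.OO_one_add h1)
    convert this using 1
    field_simp
  · rw [inv_div] at h1
    have := S.OO_mul hy (S.OO_one_add h1)
    convert this using 1
    field_simp
    ring

/-- the valuation ring -/
def O (S : Sys t h p q) : ValuationSubring K where
  carrier := {x | OO t h x}
  mul_mem' := fun ha hb => S.OO_mul ha hb
  one_mem' := Or.inr (Or.inr S.BB_one)
  add_mem' := fun ha hb => S.OO_add ha hb
  zero_mem' := Or.inl rfl
  neg_mem' := fun {x} hx => by
    have : OO t h (-1 * x) := S.OO_mul (Or.inr (Or.inr S.BB_neg_one)) hx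
    rwa [neg_one_mul] at this
  mem_or_inv_mem' := S.OO_total

theorem mem_O (S : Sys t h p q) (x : K) : x ∈ S.O ↔ OO t h x := Iff.rfl

theorem O_units (S : Sys t h p q) {x : K} (h0 : x ≠ 0) (hx : x ∈ S.O) (hx' : x⁻¹ ∈ S.O) : h x := by
  rw [mem_O] at hx hx'
  by_contra hh
  exact S.A_not (hx.A_of h0 hh) (hx'.A_of (inv_ne_zero h0)
    (fun h2 => hh (by simpa using S.h_inv h2)))

theorem O_max (S : Sys t h p q) {x : K} (hx : x ∈ S.O) (hx' : x = 0 ∨ x⁻¹ ∉ S.O) : t (1 + x) := by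
  rw [mem_O] at hx hx'
  rcases hx with rfl | hx | hx
  · rw [add_zero]; exact S.t_one
  · exact hx.2.2
  · have hx'' := hx'.resolve_left (S.h_ne hx.1)
    obtain ⟨a, ha, ha'⟩ := S.not_BB (S.h_inv hx.1) (fun h1 => hx'' (Or.inr (Or.inr h1)))
    have := S.prodA' ha ha'
    convert this using 1
    have := ha.1
    have := S.h_ne hx.1
    field_simp

theorem O_coarse (S : Sys t h p q) (O' : ValuationSubring K) (hO' : ∀ x, x ≠ 0 → x ∈ O' → x⁻¹ ∈ O' → h x) :
    O' ≤ S.O := by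
  have key : ∀ x, x ≠ 0 → x ∈ O' → ¬ h x → AA t h x := by
    intro x h0 hx hh
    rcases S.dich h0 hh with h1 | h1
    · exact ⟨h0, hh, h1⟩
    exfalso
    have hxinv : x⁻¹ ∉ O' := fun h2 => hh (hO' x h0 hx h2)
    have h1x : 1 + x ≠ 0 := by
      intro h2
      rw [h2, zero_div] at h1
      exact S.t_ne h1 rfl
    have h3 : (1 + x)⁻¹ ∈ O' := by
      rcases O'.mem_or_inv_mem (1 + x)⁻¹ with h4 | h4
      · exact h4
      by_contra hc
      rcases O'.mem_or_inv_mem (x / (1 + x)) with h5 | h5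
      · apply hc
        have := sub_mem O'.one_mem h5
        convert this using 1
        field_simp
        ring
      · apply hxinv
        have := sub_mem h5 O'.one_mem
        convert this using 1
        field_simp
        ring
    have h4 := hO' (1 + x) h1x (O'.add_mem _ _ O'.one_mem hx) h3
    apply hh
    have := S.h_div h4 (S.th h1)
    convert this using 1
    field_simp
  have key2 : ∀ x, AA t h x → x ∈ O' := by
    intro x hx
    rcases O'.mem_or_inv_mem x with h1 | h1
    · exact h1
    exact absurd (key _ (inv_ne_zero hx.1) h1 (fun h2 => hx.2.1 (by simpa using S.h_inv h2)))
      (fun h2 => S.A_not hx h2)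
  intro x hx
  by_cases h0 : x = 0
  · exact Or.inl h0
  by_cases hh : h x
  · refine Or.inr (Or.inr ⟨hh, fun a ha => key _ (mul_ne_zero h0 ha.1)
      (O'.mul_mem _ _ hx (key2 a ha)) (fun h1 => ha.2.1 (S.h_of_mul_left hh h1))⟩)
  · exact Or.inr (Or.inl (key x h0 hx hh))

end Sys

end part2

section part3

variable {K : Type*} [Field K] {ℓ : ℕ} {T : Subgroup Kˣ}

/-- `U` as a predicate on `K`. -/
def Pr (U : Subgroup Kˣ) (x : K) : Prop := ∃ u ∈ U, (u : K) = x

theorem Pr_coe {U : Subgroup Kˣ} (u : Kˣ) : Pr U (u : K) ↔ u ∈ U := by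
  constructor
  · rintro ⟨v, hv, hvu⟩
    rwa [← Units.ext hvu]
  · exact fun h => ⟨u, h, rfl⟩

theorem AA_step (hℓ : ℓ.Prime) (hpow : ∀ x : Kˣ, x ^ ℓ ∈ T) (hneg : (-1 : Kˣ) ∈ T)
    {p q : Kˣ} (hG : GP ℓ T p q) {x : K} (hx : AA (Pr T) (Pr (Hbold T)) x) :
    AA (Pr T) (Pr (Hbold T)) (x * p) := by
  obtain ⟨h0, hh, w, hw, hwx⟩ := hx
  lift x to Kˣ using h0.isUnit
  rw [Pr_coe] at hh
  have hi : x⁻¹ ∉ Hbold T := fun h => hh (by simpa using (Hbold T).inv_mem h)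
  have hw' : (1 : K) + (x⁻¹ : Kˣ) = (w / x : Kˣ) := by
    push_cast
    rw [hwx]
    have := x.ne_zero
    field_simp
    ring
  rcases step hℓ hpow hneg hi hG hw' with h1 | ⟨_, y, hy, hyx⟩
  · exfalso
    apply hh
    apply T_le_Hbold
    simpa using T.div_mem hw h1
  · refine ⟨mul_ne_zero h0 p.ne_zero, ?_, y / x⁻¹, hyx, ?_⟩
    · rw [← Units.val_mul, Pr_coe]
      exact fun h => hh (((Hbold T).mul_mem_cancel_right hG.1).1 h)
    · push_cast
      rw [← hy]
      push_cast
      have := x.ne_zero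
      field_simp

theorem Sys.mk' (hℓ : ℓ.Prime) (hpow : ∀ x : Kˣ, x ^ ℓ ∈ T) (hneg : (-1 : Kˣ) ∈ T)
    {p q : Kˣ} (hG : GP ℓ T p q) : Sys (Pr T) (Pr (Hbold T)) (p : K) (q : K) := by
  have hl1 : ¬ (ℓ : ℤ) ∣ 1 := (Nat.prime_iff_prime_int.1 hℓ).not_dvd_one
  have hmul : ∀ (U : Subgroup Kˣ) {x y : K}, Pr U x → Pr U y → Pr U (x * y) := by
    rintro U x y ⟨u, hu, rfl⟩ ⟨v, hv, rfl⟩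
    exact ⟨u * v, U.mul_mem hu hv, by simp⟩
  have hinv : ∀ (U : Subgroup Kˣ) {x : K}, Pr U x → Pr U x⁻¹ := by
    rintro U x ⟨u, hu, rfl⟩
    exact ⟨u⁻¹, U.inv_mem hu, by simp⟩
  refine
    { h_ne := ?_
      t_mul := hmul T
      t_inv := hinv T
      h_mul := hmul _
      h_inv := hinv _
      th := ?_
      t_neg := ⟨-1, hneg, by simp⟩
      dich := ?_
      f2 := ?_
      pq := hG.2.2.1
      hp := (Pr_coe p).2 hG.1
      hq := (Pr_coe q).2 hG.2.1
      tp := ?_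
      tq := ?_
      tpq := ?_
      Ap := fun hx => AA_step hℓ hpow hneg hG hx
      Ap' := fun hx => ?_
      Aq := fun hx => AA_step hℓ hpow hneg hG.swap hx
      Aneg := fun {x} hx => ?_ }
  · rintro x ⟨u, _, rfl⟩
    exact u.ne_zero
  · rintro x ⟨u, hu, rfl⟩
    exact ⟨u, T_le_Hbold hu, rfl⟩
  · intro x h0 hh
    lift x to Kˣ using h0.isUnit
    rw [Pr_coe] at hh
    have hw0 : (1 : K) + x ≠ 0 := by
      intro h
      apply hh
      have : x = -1 := by
        ext; push_cast; linear_combination h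
      rw [this]
      exact T_le_Hbold hneg
    rcases step hℓ hpow hneg hh hG (w := Units.mk0 _ hw0) rfl with h1 | ⟨h1, _⟩
    · exact Or.inl ⟨_, h1, rfl⟩
    · exact Or.inr ⟨_, h1, by simp⟩
  · rintro x ⟨u, hu, rfl⟩ hT h0
    rw [Pr_coe] at hT
    have := F2' hℓ hpow hneg (a := u) (b := 1) (c := Units.mk0 _ h0)
      (by simp [add_comm]) (by simpa using hu) (by simpa using hT)
    exact ⟨_, this, by simp⟩
  · rw [Pr_coe]
    intro h
    exact hl1 (hG.2.2.2 1 0 (by simpa using h)).1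
  · rw [Pr_coe]
    intro h
    exact hl1 (hG.2.2.2 0 1 (by simpa using h)).2
  · rw [← Units.val_div_eq_div_val, Pr_coe]
    intro h
    exact hl1 (hG.2.2.2 1 (-1) (by simpa [div_eq_mul_inv] using h)).1
  · have := AA_step hℓ hpow hneg (hG.inv hneg) hx
    simpa using this
  · have h1 := AA_step hℓ hpow hneg (hG.inv hneg).swap hx
    have h2 := AA_step hℓ hpow hneg hG h1
    have h3 := AA_step hℓ hpow hneg (hG.swap.inv hneg) h2
    convert h3 using 1
    have := p.ne_zero
    have := q.ne_zero
    push_cast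
    field_simp

end part3

/-- if `K^{×ℓ} ⊆ T`, `-1 ∈ T` and `T ≠ 𝐇(T)`, then `H := 𝐇(T)` is valuative
and, denoting `v = v_H` the coarsest valuation with `O_v^× ⊆ H` (so `O_v` is the largest
valuation subring with unit group contained in `H`), one has `1 + m_v ⊆ T` and
`T · O_v^× = H`. -/
theorem stmt_7 {K : Type*} [Field K] (ℓ : ℕ) (hℓ : ℓ.Prime) (T : Subgroup Kˣ)
    (hpow : ∀ x : Kˣ, x ^ ℓ ∈ T) (hneg : (-1 : Kˣ) ∈ T)
    (hHT : T ≠ Hbold T) :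
    ∃ O : ValuationSubring K, O.unitGroup ≤ Hbold T ∧
      (∀ O' : ValuationSubring K, O'.unitGroup ≤ Hbold T → O' ≤ O) ∧
      (∀ a : K, O.valuation a < 1 → ∃ t ∈ T, ((t : Kˣ) : K) = 1 + a) ∧
      T ⊔ O.unitGroup = Hbold T := by
  obtain ⟨p, q, hG⟩ := exists_GP hℓ hpow hHT
  have S := Sys.mk' hℓ hpow hneg hG
  have hunit : ∀ (O : ValuationSubring K) (x : Kˣ),
      x ∈ O.unitGroup ↔ (x : K) ∈ O ∧ (x : K)⁻¹ ∈ O := by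
    intro O x
    have hx0 : O.valuation (x : K) ≠ 0 := (Valuation.ne_zero_iff _).2 x.ne_zero
    rw [ValuationSubring.mem_unitGroup_iff, ← ValuationSubring.valuation_le_one_iff,
      ← ValuationSubring.valuation_le_one_iff, map_inv₀,
      inv_le_one₀ (zero_lt_iff.2 hx0)]
    exact ⟨fun h => ⟨h.le, h.ge⟩, fun h => le_antisymm h.1 h.2⟩
  have hU : S.O.unitGroup ≤ Hbold T := by
    intro x hx
    obtain ⟨h1, h2⟩ := (hunit _ _).1 hx
    exact (Pr_coe x).1 (S.O_units x.ne_zero h1 h2)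
  have hm : ∀ a : K, S.O.valuation a < 1 → Pr T (1 + a) := by
    intro a ha
    refine S.O_max ((ValuationSubring.valuation_le_one_iff _ _).1 ha.le) ?_
    by_cases h0 : a = 0
    · exact Or.inl h0
    right
    have hx0 : S.O.valuation a ≠ 0 := (Valuation.ne_zero_iff _).2 h0
    rw [← ValuationSubring.valuation_le_one_iff, map_inv₀, inv_le_one₀ (zero_lt_iff.2 hx0)]
    exact not_le.2 ha
  refine ⟨S.O, hU, ?_, hm, le_antisymm (sup_le T_le_Hbold hU) ?_⟩
  · intro O' hO'
    refine S.O_coarse O' fun x h0 h1 h2 => ?_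
    exact (Pr_coe (Units.mk0 x h0)).2 (hO' ((hunit O' _).2 ⟨h1, h2⟩))
  · intro x hx
    by_contra hxU
    have hTU : T ≤ T ⊔ S.O.unitGroup := le_sup_left
    have hOU : S.O.unitGroup ≤ T ⊔ S.O.unitGroup := le_sup_right
    obtain ⟨f, hf, hfx⟩ := Chr.exists_ne hℓ (fun x => hTU (hpow x)) hxU
    have hfT := hf.mono hTU
    apply hfx
    refine (mem_Hbold hℓ hpow x).1 hx f ⟨hfT, fun g hg a b hab => ?_⟩
    have hsmall : ∀ a b : Kˣ, (a : K) + b = 1 → S.O.valuation (a : K) < 1 → b ∈ T := by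
      intro a b hab ha
      have := hm (-a) (by rwa [Valuation.map_neg])
      rw [← Pr_coe]
      convert this using 1
      linear_combination hab
    rcases lt_trichotomy (S.O.valuation (a : K)) 1 with h1 | h1 | h1
    · have := hsmall a b hab h1
      rw [hfT.2 b this, hg.2 b this]; ring
    · have hfa : f a = 0 := hf.2 a (hOU ((ValuationSubring.mem_unitGroup_iff _ _).2 h1))
      have hb : S.O.valuation (b : K) ≤ 1 := by
        have hb' : (b : K) = 1 - a := by linear_combination hab
        rw [ValuationSubring.valuation_le_one_iff, hb']
        exact sub_mem S.O.one_mem ((ValuationSubring.valuation_le_one_iff _ _).1 h1.le)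
      rcases hb.lt_or_eq with h2 | h2
      · have := hsmall b a (by rw [add_comm]; exact hab) h2
        rw [hfT.2 a this, hg.2 a this]; ring
      · have hfb : f b = 0 := hf.2 b (hOU ((ValuationSubring.mem_unitGroup_iff _ _).2 h2))
        rw [hfa, hfb]; ring
    · have hia : S.O.valuation ((a⁻¹ : Kˣ) : K) < 1 := by
        rw [Units.val_inv_eq_inv_val, map_inv₀]
        exact inv_lt_one_of_one_lt₀ h1
      have hc := hsmall a⁻¹ (-1 * (b * a⁻¹)) (by
        have := a.ne_zero
        push_cast
        field_simp
        linear_combination -hab) hia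
      have hbT : b * a⁻¹ ∈ T := by simpa using T.mul_mem hneg hc
      have e1 := hfT.2 _ hbT
      have e2 := hg.2 _ hbT
      rw [hfT.1, hfT.inv] at e1
      rw [hg.1, hg.inv] at e2
      linear_combination f a * e2 - g a * e1
end
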